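/- Let γ₀ be an unconstrained minimizing geodesic joining p₋ to p₊. Then there exists ε₁ > 0 such that for every A with |A − 𝒜(γ₀)| < ε₁ there exist a function U ∈ G_A and a wave speed ν ∈ ℝ such that: U minimizes H over G_A; U is smooth and satisfies the traveling-wave system U''(y) = ∇W(U(y)) − ν J U'(y) for all y ∈ ℝ, with U(y) → p₋ as y → −∞ and U(y) → p₊ as y → +∞; and U satisfies the equipartition relation |U'(y)|² = 2 W(U(y)) for all y (U is the equipartition parametrization of the isoperimetric curve with constraint A). -/

import Mathlib

open MeasureTheory Set Filter Topology
open scoped ENNReal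

noncomputable section

/-- The Euclidean norm of a vector in `ℝ × ℝ`. -/
def enorm2 (v : ℝ × ℝ) : ℝ := Real.sqrt (v.1 ^ 2 + v.2 ^ 2)

/-- The degenerate length `E(γ) = ∫ₐᵇ F(γ(t)) |γ'(t)| dt` of a planar curve. -/
def degLen (F : ℝ × ℝ → ℝ) (a b : ℝ) (γ : ℝ → ℝ × ℝ) : ℝ :=
  ∫ t in a..b, F (γ t) * enorm2 (deriv γ t)

/-- The signed area `𝒜(γ) = ∫ₐᵇ γ¹(t) (γ²)'(t) dt` of a planar curve. -/
def sArea (a b : ℝ) (γ : ℝ → ℝ × ℝ) : ℝ :=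
  ∫ t in a..b, (γ t).1 * deriv (fun s => (γ s).2) t

/-- A locally Lipschitz curve on `[a,b]` joining `p` to `q`. -/
def IsCurve (a b : ℝ) (γ : ℝ → ℝ × ℝ) (p q : ℝ × ℝ) : Prop :=
  a ≤ b ∧ LocallyLipschitz γ ∧ γ a = p ∧ γ b = q

/-- The standing hypotheses on the potential `W`: smooth, nonnegative, vanishing exactly at the
two distinct wells `pm` and `pp`, with positive definite Hessians there, and bounded away from
zero near infinity (`liminf_{|p|→∞} W(p) > 0`). -/
structure TwoWell (W : ℝ × ℝ → ℝ) (pm pp : ℝ × ℝ) : Prop where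
  smooth : ContDiff ℝ (⊤ : ℕ∞) W
  nonneg : ∀ p, 0 ≤ W p
  wells_ne : pm ≠ pp
  zeroSet : ∀ p, W p = 0 ↔ p = pm ∨ p = pp
  hess_m : ∀ v : ℝ × ℝ, v ≠ 0 → 0 < iteratedFDeriv ℝ 2 W pm ![v, v]
  hess_p : ∀ v : ℝ × ℝ, v ≠ 0 → 0 < iteratedFDeriv ℝ 2 W pp ![v, v]
  coercive : ∃ c > 0, ∃ R : ℝ, ∀ p : ℝ × ℝ, R ≤ ‖p‖ → c ≤ W p

/-- The symplectic rotation `J(x,y) = (y,−x)` (the matrix with rows `(0,1)` and `(−1,0)`). -/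
def Jv (v : ℝ × ℝ) : ℝ × ℝ := (v.2, -v.1)

/-- The gradient of `W`. -/
def gradW (W : ℝ × ℝ → ℝ) (p : ℝ × ℝ) : ℝ × ℝ := (fderiv ℝ W p (1, 0), fderiv ℝ W p (0, 1))

/-- The Hamiltonian energy `H(u) = ∫_ℝ (½|u'|² + W(u))`, valued in `[0,∞]`. -/
def Hfun (W : ℝ × ℝ → ℝ) (u : ℝ → ℝ × ℝ) : ℝ≥0∞ :=
  ∫⁻ y : ℝ, ENNReal.ofReal ((1 / 2) * enorm2 (deriv u y) ^ 2 + W (u y))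

/-- The signed area `𝒜(u) = ∫_ℝ u¹ (u²)' dy` of an entire curve. -/
def areaLine (u : ℝ → ℝ × ℝ) : ℝ := ∫ y : ℝ, (u y).1 * deriv (fun z => (u z).2) y

/-- Membership of `u − g` in `H¹(ℝ;ℝ²)`: `u − g ∈ L²` and `u` is absolutely continuous with
`L²` derivative. -/
def ShiftH1 (g u : ℝ → ℝ × ℝ) : Prop :=
  ∃ v : ℝ → ℝ × ℝ, MemLp v 2 volume ∧ MemLp (fun y => u y - g y) 2 volume ∧
    ∀ s t : ℝ, u t - u s = ∫ y in s..t, v y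

/-- The admissible class `G_A = { u : u − g ∈ H¹(ℝ;ℝ²), 𝒜(u) = A }`. -/
def InGA (g : ℝ → ℝ × ℝ) (A : ℝ) (u : ℝ → ℝ × ℝ) : Prop :=
  ShiftH1 g u ∧ areaLine u = A

/-
By the arithmetic-geometric mean inequality every connection between the wells has energy
`H ≥ √2 E(γ₀)`, and a time change at almost equipartition speed of a smooth approximation of `γ₀`
shows that this bound is nearly attained with area near `𝒜(γ₀)`. The minimizer with prescribed area
is found by the direct method. Near-optimal connections stay, after a translation, close to the
wells outside a bounded window, so that only area can be lost in a weak limit. Near a well with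
`W(p) ≥ κ |p - p±|²`, area costs energy at rate at least `c = √(2κ)`. On the other hand a
near-optimal connection almost solves the Euler–Lagrange equation while its area has non-zero first
variation, so that a perturbation on a bounded window restores the missing area at rate at most
`c / 2`. Hence no area is lost. The Lagrange multiplier `ν` of the minimizer is bounded by the same
rate, which keeps the linearization of the traveling wave system at the wells hyperbolic: the wave
decays exponentially, has integrable area density and belongs to `g + H¹`.
-/

namespace TravelingWave

section EuclideanNorm

lemma enorm2_nonneg (z : ℝ × ℝ) : 0 ≤ enorm2 z := Real.sqrt_nonneg _

lemma enorm2_sq (z : ℝ × ℝ) : enorm2 z ^ 2 = z.1 ^ 2 + z.2 ^ 2 :=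
  Real.sq_sqrt (by positivity)

lemma continuous_enorm2 : Continuous enorm2 := by unfold enorm2; fun_prop

@[simp] lemma enorm2_zero : enorm2 0 = 0 := by simp [enorm2]

lemma enorm2_eq_norm_toLp (z : ℝ × ℝ) : enorm2 z = ‖WithLp.toLp 2 z‖ := by
  simp [enorm2, WithLp.prod_norm_eq_of_L2]

lemma norm_le_enorm2 (z : ℝ × ℝ) : ‖z‖ ≤ enorm2 z := by
  refine max_le ?_ ?_ <;> refine Real.abs_le_sqrt ?_ <;> nlinarith [sq_nonneg z.1, sq_nonneg z.2]

lemma norm_sq_le_enorm2_sq (z : ℝ × ℝ) : ‖z‖ ^ 2 ≤ enorm2 z ^ 2 := by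
  gcongr; exact norm_le_enorm2 z

lemma enorm2_sq_le (z : ℝ × ℝ) : enorm2 z ^ 2 ≤ 2 * ‖z‖ ^ 2 := by
  have h₁ : z.1 ^ 2 ≤ ‖z‖ ^ 2 := sq_le_sq.2 (by simpa using norm_fst_le z)
  have h₂ : z.2 ^ 2 ≤ ‖z‖ ^ 2 := sq_le_sq.2 (by simpa using norm_snd_le z)
  rw [enorm2_sq]
  linarith

lemma enorm2_le (z : ℝ × ℝ) : enorm2 z ≤ 2 * ‖z‖ := by
  refine le_of_sq_le_sq ?_ (by positivity)
  nlinarith [enorm2_sq_le z, sq_nonneg ‖z‖]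

lemma lipschitzWith_enorm2 : LipschitzWith 2 enorm2 := LipschitzWith.of_dist_le_mul fun x y ↦ by
  have h : |enorm2 x - enorm2 y| ≤ enorm2 (x - y) := by
    simpa only [enorm2_eq_norm_toLp, WithLp.toLp_sub] using abs_norm_sub_norm_le _ _
  rw [Real.dist_eq, dist_eq_norm]
  exact h.trans (enorm2_le _)

end EuclideanNorm

section Calculus

variable {E : Type*} [NormedAddCommGroup E] [NormedSpace ℝ E]

lemma exists_pos_mul_norm_sq_le [FiniteDimensional ℝ E] {D : E →L[ℝ] E →L[ℝ] ℝ}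
    (hD : ∀ z, z ≠ 0 → 0 < D z z) : ∃ c > 0, ∀ z, c * ‖z‖ ^ 2 ≤ D z z := by
  have : ProperSpace E := FiniteDimensional.proper ℝ E
  obtain ⟨c, hc, hmin⟩ := (isCompact_sphere (0 : E) 1).exists_forall_le'
    (f := fun z ↦ D z z) (a := 0) (by fun_prop)
    fun z hz ↦ hD z (Metric.ne_of_mem_sphere hz one_ne_zero)
  refine ⟨c, hc, fun z ↦ ?_⟩
  rcases eq_or_ne z 0 with rfl | hz
  · simp
  have hz' : ‖z‖ ≠ 0 := norm_ne_zero_iff.2 hz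
  have h := hmin (‖z‖⁻¹ • z) (by simp [norm_smul, hz'])
  simp only [map_smul, smul_apply, smul_eq_mul] at h
  calc c * ‖z‖ ^ 2 ≤ ‖z‖⁻¹ * (‖z‖⁻¹ * D z z) * ‖z‖ ^ 2 := by gcongr
    _ = D z z := by field_simp

lemma eventually_mul_norm_sq_le_fderiv {f : E → ℝ} {p : E} {c : ℝ} (hc : 0 < c)
    (hf : DifferentiableAt ℝ (fderiv ℝ f) p) (hp : fderiv ℝ f p = 0)
    (hD : ∀ z, c * ‖z‖ ^ 2 ≤ fderiv ℝ (fderiv ℝ f) p z z) :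
    ∃ r > 0, ∀ z, ‖z‖ < r → c / 2 * ‖z‖ ^ 2 ≤ fderiv ℝ f (p + z) z := by
  obtain ⟨r, hr, hball⟩ := Metric.eventually_nhds_iff.1
    (hf.hasFDerivAt.isLittleO.def (c := c / 2) (by positivity))
  refine ⟨r, hr, fun z hz ↦ ?_⟩
  have h := hball (y := p + z) (by simpa [dist_eq_norm] using hz)
  simp only [hp, sub_zero, add_sub_cancel_left] at h
  have happly : |(fderiv ℝ f (p + z) - fderiv ℝ (fderiv ℝ f) p z) z| ≤ c / 2 * ‖z‖ * ‖z‖ :=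
    ((fderiv ℝ f (p + z) - fderiv ℝ (fderiv ℝ f) p z).le_opNorm z).trans (by gcongr)
  have hlower := (abs_le.1 happly).1
  rw [sub_apply] at hlower
  nlinarith [hD z]

lemma mul_norm_sq_le_of_le_fderiv {f : E → ℝ} (hf : Differentiable ℝ f) {p : E} {c r : ℝ}
    (h : ∀ z, ‖z‖ < r → c * ‖z‖ ^ 2 ≤ fderiv ℝ f (p + z) z) {z : E} (hz : ‖z‖ < r) :
    f p + c / 2 * ‖z‖ ^ 2 ≤ f (p + z) := by
  have hder (t : ℝ) : HasDerivAt (fun t : ℝ ↦ f (p + t • z) - c / 2 * ‖z‖ ^ 2 * t ^ 2)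
      (fderiv ℝ f (p + t • z) z - c / 2 * ‖z‖ ^ 2 * (2 * t)) t := by
    have hray : HasDerivAt (fun t : ℝ ↦ p + t • z) z t := by
      simpa using ((hasDerivAt_id t).smul_const z).const_add p
    have hsq : HasDerivAt (fun t : ℝ ↦ t ^ 2) (2 * t) t := by simpa using hasDerivAt_pow 2 t
    exact ((hf (p + t • z)).hasFDerivAt.comp_hasDerivAt t hray).sub (hsq.const_mul _)
  have hmono : MonotoneOn (fun t : ℝ ↦ f (p + t • z) - c / 2 * ‖z‖ ^ 2 * t ^ 2) (Icc 0 1) := by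
    refine monotoneOn_of_deriv_nonneg (convex_Icc 0 1)
      (fun t _ ↦ (hder t).continuousAt.continuousWithinAt)
      (fun t _ ↦ (hder t).differentiableAt.differentiableWithinAt) fun t ht ↦ ?_
    rw [interior_Icc] at ht
    have htz := h (t • z) (by
      rw [norm_smul, Real.norm_of_nonneg ht.1.le]; nlinarith [norm_nonneg z, ht.1, ht.2])
    rw [norm_smul, Real.norm_of_nonneg ht.1.le, map_smul, smul_eq_mul] at htz
    rw [(hder t).deriv]
    refine nonneg_of_mul_nonneg_right (a := t) ?_ ht.1
    nlinarith
  have h01 := hmono (left_mem_Icc.2 zero_le_one) (right_mem_Icc.2 zero_le_one) zero_le_one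
  simp only [zero_smul, add_zero, one_smul] at h01
  linarith

lemma exists_forall_le_taylor [ProperSpace E] {f : E → ℝ} (hf : ContDiff ℝ 2 f) (K : ℝ) :
    ∃ C ≥ 0, ∀ x z, ‖x‖ ≤ K → ‖z‖ ≤ 1 → f (x + z) ≤ f x + fderiv ℝ f x z + C * ‖z‖ ^ 2 := by
  have hd : Differentiable ℝ f := hf.differentiable two_ne_zero
  have hcd : ContDiff ℝ 1 (fderiv ℝ f) := hf.fderiv_right (by norm_num)
  obtain ⟨L, hL⟩ := hcd.locallyLipschitz.locallyLipschitzOn.exists_lipschitzOnWith_of_compact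
    (isCompact_closedBall (0 : E) (K + 1))
  refine ⟨L, L.2, fun x z hx hz ↦ ?_⟩
  have hb : ∀ y ∈ segment ℝ x (x + z), ‖fderiv ℝ f y - fderiv ℝ f x‖ ≤ L * ‖z‖ := by
    intro y hy
    have hyx : ‖y - x‖ ≤ ‖z‖ := by simpa using norm_sub_le_of_mem_segment hy
    have hLy := hL.dist_le_mul y
      (by rw [mem_closedBall_zero_iff]; linarith [norm_le_norm_add_norm_sub' y x])
      x (by rw [mem_closedBall_zero_iff]; linarith)
    rw [dist_eq_norm, dist_eq_norm] at hLy
    exact hLy.trans (by gcongr)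
  have h := (convex_segment x (x + z)).norm_image_sub_le_of_norm_hasFDerivWithin_le'
    (fun y _ ↦ (hd y).hasFDerivAt.hasFDerivWithinAt) hb (left_mem_segment ℝ x (x + z))
    (right_mem_segment ℝ x (x + z))
  rw [add_sub_cancel_left, Real.norm_eq_abs] at h
  linarith [(abs_le.1 h).2, sq ‖z‖, mul_assoc (L : ℝ) ‖z‖ ‖z‖]

end Calculus

section Potential

variable {W : ℝ × ℝ → ℝ} {p pm pp : ℝ × ℝ}

/-- A nondegenerate zero of `W` in quantitative form: on the ball of radius `R` about `p`, both `W`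
and its radial derivative dominate `κ |x - p|²`. -/
structure QuadraticWell (W : ℝ × ℝ → ℝ) (p : ℝ × ℝ) (R κ : ℝ) : Prop where
  radius_pos : 0 < R
  rate_pos : 0 < κ
  le_apply : ∀ x, ‖x - p‖ ≤ R → κ * enorm2 (x - p) ^ 2 ≤ W x
  le_fderiv : ∀ x, ‖x - p‖ ≤ R → κ * enorm2 (x - p) ^ 2 ≤ fderiv ℝ W x (x - p)

lemma QuadraticWell.mono {R κ R' κ' : ℝ} (h : QuadraticWell W p R κ) (hR' : 0 < R') (hκ' : 0 < κ')
    (hR : R' ≤ R) (hκ : κ' ≤ κ) : QuadraticWell W p R' κ' where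
  radius_pos := hR'
  rate_pos := hκ'
  le_apply x hx := le_trans (by gcongr) (h.le_apply x (hx.trans hR))
  le_fderiv x hx := le_trans (by gcongr) (h.le_fderiv x (hx.trans hR))

lemma exists_quadraticWell (hW : ContDiff ℝ 2 W) (hmin : IsLocalMin W p) (hp : W p = 0)
    (hess : ∀ v, v ≠ 0 → 0 < iteratedFDeriv ℝ 2 W p ![v, v]) :
    ∃ R κ, QuadraticWell W p R κ := by
  have hd : Differentiable ℝ W := hW.differentiable two_ne_zero
  have hd' : Differentiable ℝ (fderiv ℝ W) :=
    (hW.fderiv_right (m := 1) (by norm_num)).differentiable one_ne_zero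
  obtain ⟨c, hc, hD⟩ := exists_pos_mul_norm_sq_le (D := fderiv ℝ (fderiv ℝ W) p)
    fun v hv ↦ by simpa [iteratedFDeriv_two_apply] using hess v hv
  obtain ⟨r, hr, hrad⟩ := eventually_mul_norm_sq_le_fderiv hc (hd' p) hmin.fderiv_eq_zero hD
  refine ⟨r / 2, c / 8, by positivity, by positivity, fun x hx ↦ ?_, fun x hx ↦ ?_⟩
  · have h := mul_norm_sq_le_of_le_fderiv hd hrad (z := x - p) (by linarith)
    rw [add_sub_cancel, hp] at h
    nlinarith [enorm2_sq_le (x - p)]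
  · have h := hrad (x - p) (by linarith)
    rw [add_sub_cancel] at h
    nlinarith [enorm2_sq_le (x - p)]

lemma _root_.TwoWell.contDiff_two (hT : TwoWell W pm pp) : ContDiff ℝ 2 W :=
  hT.smooth.of_le (WithTop.coe_le_coe.2 le_top)

lemma _root_.TwoWell.exists_quadraticWell (hT : TwoWell W pm pp) :
    ∃ R κ, QuadraticWell W pm R κ ∧ QuadraticWell W pp R κ := by
  have hzero {q : ℝ × ℝ} (hq : W q = 0) : IsLocalMin W q :=
    Eventually.of_forall fun x ↦ hq.trans_le (hT.nonneg x)
  have hm : W pm = 0 := (hT.zeroSet pm).2 (.inl rfl)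
  have hp : W pp = 0 := (hT.zeroSet pp).2 (.inr rfl)
  obtain ⟨R₁, κ₁, h₁⟩ := TravelingWave.exists_quadraticWell hT.contDiff_two (hzero hm) hm hT.hess_m
  obtain ⟨R₂, κ₂, h₂⟩ := TravelingWave.exists_quadraticWell hT.contDiff_two (hzero hp) hp hT.hess_p
  have hR := lt_min h₁.radius_pos h₂.radius_pos
  have hκ := lt_min h₁.rate_pos h₂.rate_pos
  exact ⟨min R₁ R₂, min κ₁ κ₂, h₁.mono hR hκ (min_le_left _ _) (min_le_left _ _),
    h₂.mono hR hκ (min_le_right _ _) (min_le_right _ _)⟩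

lemma _root_.TwoWell.exists_forall_le_apply (hT : TwoWell W pm pp) {r : ℝ} (hr : 0 < r) :
    ∃ c > 0, ∀ x, r ≤ ‖x - pm‖ → r ≤ ‖x - pp‖ → c ≤ W x := by
  obtain ⟨c, hc, R, hR⟩ := hT.coercive
  have hclosed (q : ℝ × ℝ) : IsClosed {x : ℝ × ℝ | r ≤ ‖x - q‖} :=
    isClosed_le (by fun_prop) (by fun_prop)
  have hS : IsCompact (Metric.closedBall 0 R ∩ ({x | r ≤ ‖x - pm‖} ∩ {x | r ≤ ‖x - pp‖})) :=
    (isCompact_closedBall 0 R).inter_right ((hclosed pm).inter (hclosed pp))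
  obtain ⟨c', hc', hmin⟩ := hS.exists_forall_le' (a := 0) hT.smooth.continuous.continuousOn <| by
    rintro x ⟨-, hxm, hxp⟩
    refine (hT.nonneg x).lt_of_ne fun h ↦ ?_
    rcases (hT.zeroSet x).1 h.symm with rfl | rfl
    · exact hr.not_ge (by simpa using hxm)
    · exact hr.not_ge (by simpa using hxp)
  refine ⟨min c c', lt_min hc hc', fun x hxm hxp ↦ ?_⟩
  rcases le_total R ‖x‖ with hx | hx
  · exact (min_le_left _ _).trans (hR x hx)
  · exact (min_le_right _ _).trans (hmin x ⟨by simpa using hx, hxm, hxp⟩)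

end Potential

lemma intervalIntegrable_of_memLp_two {E : Type*} [NormedAddCommGroup E] {v : ℝ → E}
    (hv : MemLp v 2 volume) (s t : ℝ) : IntervalIntegrable v volume s t :=
  intervalIntegrable_iff.2 <|
    ((hv.locallyIntegrable (by norm_num)).integrableOn_isCompact isCompact_uIcc).mono_set
      uIoc_subset_uIcc

section L2Derivative

variable {E F : Type*} [NormedAddCommGroup E] [NormedSpace ℝ E] [NormedAddCommGroup F]
  [NormedSpace ℝ F] {u v u' v' : ℝ → E}

/-- `u` is absolutely continuous with derivative `v ∈ L²(ℝ)`; this is the regularity required by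
`ShiftH1`, with the derivative made explicit. -/
structure HasL2Deriv (u v : ℝ → E) : Prop where
  memLp : MemLp v 2 volume
  sub_eq_integral : ∀ s t : ℝ, u t - u s = ∫ y in s..t, v y

namespace HasL2Deriv

lemma intervalIntegrable (h : HasL2Deriv u v) (s t : ℝ) : IntervalIntegrable v volume s t :=
  intervalIntegrable_of_memLp_two h.memLp s t

lemma eq_add_integral (h : HasL2Deriv u v) : u = fun t ↦ u 0 + ∫ y in (0 : ℝ)..t, v y := by
  funext t
  rw [← h.sub_eq_integral 0 t, add_sub_cancel]

lemma continuous (h : HasL2Deriv u v) : Continuous u := by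
  rw [h.eq_add_integral]
  exact continuous_const.add (intervalIntegral.continuous_primitive h.intervalIntegrable 0)

lemma ae_hasDerivAt [CompleteSpace E] (h : HasL2Deriv u v) : ∀ᵐ t, HasDerivAt u (v t) t := by
  have hloc : LocallyIntegrable v volume := h.memLp.locallyIntegrable (by norm_num)
  filter_upwards [LocallyIntegrable.ae_hasDerivAt_integral hloc] with t ht
  rw [h.eq_add_integral]
  exact (ht 0).const_add (u 0)

lemma norm_sub_le (h : HasL2Deriv u v) {s t : ℝ} (hst : s ≤ t) :
    ‖u t - u s‖ ≤ ∫ y in s..t, ‖v y‖ := by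
  rw [h.sub_eq_integral]
  exact intervalIntegral.norm_integral_le_integral_norm hst

lemma comp_add_right (h : HasL2Deriv u v) (τ : ℝ) :
    HasL2Deriv (fun t ↦ u (t + τ)) (fun t ↦ v (t + τ)) where
  memLp := h.memLp.comp_measurePreserving (measurePreserving_add_right volume τ)
  sub_eq_integral s t := by rw [h.sub_eq_integral]; simp

lemma comp_neg (h : HasL2Deriv u v) : HasL2Deriv (fun t ↦ u (-t)) (fun t ↦ -v (-t)) where
  memLp := (h.memLp.comp_measurePreserving (Measure.measurePreserving_neg volume)).neg
  sub_eq_integral s t := by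
    rw [h.sub_eq_integral, intervalIntegral.integral_neg, intervalIntegral.integral_comp_neg,
      ← intervalIntegral.integral_symm]

lemma add (h : HasL2Deriv u v) (h' : HasL2Deriv u' v') :
    HasL2Deriv (fun t ↦ u t + u' t) (fun t ↦ v t + v' t) where
  memLp := h.memLp.add h'.memLp
  sub_eq_integral s t := by
    rw [intervalIntegral.integral_add (h.intervalIntegrable s t) (h'.intervalIntegrable s t),
      ← h.sub_eq_integral, ← h'.sub_eq_integral, add_sub_add_comm]

lemma const_smul (h : HasL2Deriv u v) (c : ℝ) :
    HasL2Deriv (fun t ↦ c • u t) (fun t ↦ c • v t) where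
  memLp := h.memLp.const_smul c
  sub_eq_integral s t := by
    rw [intervalIntegral.integral_smul, ← h.sub_eq_integral, smul_sub]

lemma clm_apply [CompleteSpace E] [CompleteSpace F] (h : HasL2Deriv u v) (L : E →L[ℝ] F) :
    HasL2Deriv (fun t ↦ L (u t)) (fun t ↦ L (v t)) where
  memLp := L.comp_memLp' h.memLp
  sub_eq_integral s t := by
    rw [L.intervalIntegral_comp_comm (h.intervalIntegrable s t), ← h.sub_eq_integral, map_sub]

lemma intervalIntegrable_mul {x y : ℝ → ℝ} (h : HasL2Deriv x y) {f : ℝ → ℝ} (hf : Continuous f)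
    (s t : ℝ) : IntervalIntegrable (fun r ↦ f r * y r) volume s t :=
  (h.intervalIntegrable s t).continuousOn_mul hf.continuousOn

end HasL2Deriv

lemma hasL2Deriv_deriv [CompleteSpace E] {φ : ℝ → E} (hφ : ContDiff ℝ 1 φ)
    (hc : HasCompactSupport φ) : HasL2Deriv φ (deriv φ) where
  memLp := (hφ.continuous_deriv le_rfl).memLp_of_hasCompactSupport hc.deriv
  sub_eq_integral s t :=
    (intervalIntegral.integral_deriv_eq_sub
      (fun _ _ ↦ (hφ.differentiable one_ne_zero).differentiableAt)
      ((hφ.continuous_deriv le_rfl).intervalIntegrable s t)).symm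

end L2Derivative

section Energy

variable {W : ℝ × ℝ → ℝ} {pm pp : ℝ × ℝ} {u v : ℝ → ℝ × ℝ}

namespace HasL2Deriv

lemma fst (h : HasL2Deriv u v) : HasL2Deriv (fun t ↦ (u t).1) (fun t ↦ (v t).1) :=
  h.clm_apply (ContinuousLinearMap.fst ℝ ℝ ℝ)

lemma snd (h : HasL2Deriv u v) : HasL2Deriv (fun t ↦ (u t).2) (fun t ↦ (v t).2) :=
  h.clm_apply (ContinuousLinearMap.snd ℝ ℝ ℝ)

lemma integrable_enorm2_sq (h : HasL2Deriv u v) : Integrable fun t ↦ enorm2 (v t) ^ 2 := by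
  simp only [enorm2_sq]
  exact h.fst.memLp.integrable_sq.add h.snd.memLp.integrable_sq

lemma intervalIntegrable_area (h : HasL2Deriv u v) (s t : ℝ) :
    IntervalIntegrable (fun r ↦ (u r).1 * (v r).2) volume s t :=
  h.snd.intervalIntegrable_mul h.fst.continuous s t

end HasL2Deriv

/-- The density `½|u'|² + W(u)` of the energy `H`, with `v` in the role of `u'`. -/
def energyDensity (W : ℝ × ℝ → ℝ) (u v : ℝ → ℝ × ℝ) (t : ℝ) : ℝ :=
  1 / 2 * enorm2 (v t) ^ 2 + W (u t)

/-- The energy `H(u)` as a real number, with `v` in the role of `u'`. It is `0` (not `∞`) when the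
density is not integrable. -/
def energy (W : ℝ × ℝ → ℝ) (u v : ℝ → ℝ × ℝ) : ℝ := ∫ t, energyDensity W u v t

lemma energyDensity_nonneg (hW : ∀ p, 0 ≤ W p) (u v : ℝ → ℝ × ℝ) (t : ℝ) :
    0 ≤ energyDensity W u v t := by
  have := hW (u t)
  unfold energyDensity
  positivity

lemma energy_comp_add_right (τ : ℝ) :
    energy W (fun t ↦ u (t + τ)) (fun t ↦ v (t + τ)) = energy W u v :=
  integral_add_right_eq_self (energyDensity W u v) τ

namespace HasL2Deriv

lemma intervalIntegrable_energyDensity (h : HasL2Deriv u v) (hW : Continuous W) (s t : ℝ) :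
    IntervalIntegrable (energyDensity W u v) volume s t :=
  (h.integrable_enorm2_sq.const_mul (1 / 2)).intervalIntegrable.add
    ((hW.comp h.continuous).intervalIntegrable s t)

lemma integral_energyDensity_mono (h : HasL2Deriv u v) (hWc : Continuous W) (hW : ∀ p, 0 ≤ W p)
    {s t s' t' : ℝ} (hs : s ≤ s') (hst : s' ≤ t') (ht : t' ≤ t) :
    ∫ r in s'..t', energyDensity W u v r ≤ ∫ r in s..t, energyDensity W u v r :=
  intervalIntegral.integral_mono_interval hs hst ht
    (Eventually.of_forall (energyDensity_nonneg hW u v))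
    (h.intervalIntegrable_energyDensity hWc s t)

end HasL2Deriv

/-- A finite energy connection: a curve `u` from `pm` to `pp` with `u' = v ∈ L²` and
`W(u) ∈ L¹`. -/
structure IsConnection (W : ℝ × ℝ → ℝ) (pm pp : ℝ × ℝ) (u v : ℝ → ℝ × ℝ) : Prop
    extends HasL2Deriv u v where
  integrable_potential : Integrable fun t ↦ W (u t)
  tendsto_atBot : Tendsto u atBot (𝓝 pm)
  tendsto_atTop : Tendsto u atTop (𝓝 pp)

namespace IsConnection

lemma integrable_energyDensity (h : IsConnection W pm pp u v) :
    Integrable (energyDensity W u v) :=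
  (h.integrable_enorm2_sq.const_mul (1 / 2)).add h.integrable_potential

lemma comp_add_right (h : IsConnection W pm pp u v) (τ : ℝ) :
    IsConnection W pm pp (fun t ↦ u (t + τ)) (fun t ↦ v (t + τ)) where
  toHasL2Deriv := h.toHasL2Deriv.comp_add_right τ
  integrable_potential := h.integrable_potential.comp_add_right τ
  tendsto_atBot := h.tendsto_atBot.comp (tendsto_atBot_add_const_right _ _ tendsto_id)
  tendsto_atTop := h.tendsto_atTop.comp (tendsto_atTop_add_const_right _ _ tendsto_id)

lemma integral_energyDensity_le_energy (h : IsConnection W pm pp u v) (hW : ∀ p, 0 ≤ W p)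
    {s t : ℝ} (hst : s ≤ t) : ∫ y in s..t, energyDensity W u v y ≤ energy W u v := by
  rw [intervalIntegral.integral_of_le hst]
  exact setIntegral_le_integral h.integrable_energyDensity
    (Eventually.of_forall (energyDensity_nonneg hW u v))

lemma tendsto_integral_energyDensity (h : IsConnection W pm pp u v) :
    Tendsto (fun S : ℝ ↦ ∫ y in (-S)..S, energyDensity W u v y) atTop (𝓝 (energy W u v)) :=
  intervalIntegral_tendsto_integral h.integrable_energyDensity tendsto_neg_atTop_atBot tendsto_id

lemma exists_le_norm_sub_le (h : IsConnection W pm pp u v) {r : ℝ} (hr : 0 < r) (τ : ℝ) :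
    ∃ s ≤ τ, ‖u s - pm‖ ≤ r := by
  obtain ⟨s, hs, hsτ⟩ := ((h.tendsto_atBot.eventually (Metric.closedBall_mem_nhds pm hr)).and
    (eventually_le_atBot τ)).exists
  exact ⟨s, hsτ, by simpa [dist_eq_norm] using hs⟩

lemma exists_ge_norm_sub_le (h : IsConnection W pm pp u v) {r : ℝ} (hr : 0 < r) (τ : ℝ) :
    ∃ s ≥ τ, ‖u s - pp‖ ≤ r := by
  obtain ⟨s, hs, hsτ⟩ := ((h.tendsto_atTop.eventually (Metric.closedBall_mem_nhds pp hr)).and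
    (eventually_ge_atTop τ)).exists
  exact ⟨s, hsτ, by simpa [dist_eq_norm] using hs⟩

end IsConnection

/-- The signed area of `u` (with `u' = v`) as the improper integral `lim ∫ₛᵗ u¹ v²` for `s → -∞`,
`t → ∞`. Unlike `areaLine`, it does not require `u¹ v²` to be integrable, which may fail for a
connection between wells off the axis `u¹ = 0`. -/
def HasArea (u v : ℝ → ℝ × ℝ) (A : ℝ) : Prop :=
  Tendsto (fun st : ℝ × ℝ ↦ ∫ t in st.1..st.2, (u t).1 * (v t).2) (atBot ×ˢ atTop) (𝓝 A)

namespace HasArea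

lemma unique {A B : ℝ} (hA : HasArea u v A) (hB : HasArea u v B) : A = B :=
  tendsto_nhds_unique hA hB

lemma comp_add_right {A : ℝ} (h : HasArea u v A) (τ : ℝ) :
    HasArea (fun t ↦ u (t + τ)) (fun t ↦ v (t + τ)) A := by
  have hτ : Tendsto (fun st : ℝ × ℝ ↦ (st.1 + τ, st.2 + τ)) (atBot ×ˢ atTop) (atBot ×ˢ atTop) :=
    (tendsto_atBot_add_const_right _ _ tendsto_id).prodMap
      (tendsto_atTop_add_const_right _ _ tendsto_id)
  exact (Tendsto.comp h hτ).congr fun st ↦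
    (intervalIntegral.integral_comp_add_right (fun t ↦ (u t).1 * (v t).2) τ).symm

end HasArea

lemma hasArea_of_integrable (h : Integrable fun t ↦ (u t).1 * (v t).2) :
    HasArea u v (∫ t, (u t).1 * (v t).2) :=
  intervalIntegral_tendsto_integral h tendsto_fst tendsto_snd

end Energy

section Crossing

lemma exists_subinterval_forall_mem_Icc {f : ℝ → ℝ} (hf : Continuous f) {s t a b : ℝ} (hst : s ≤ t)
    (ha : f s ≤ a) (hb : b ≤ f t) :
    ∃ s' t', s ≤ s' ∧ s' ≤ t' ∧ t' ≤ t ∧ f s' ≤ a ∧ b ≤ f t' ∧ ∀ τ ∈ Ioo s' t', f τ ∈ Icc a b := by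
  have hlow : IsCompact (Icc s t ∩ {τ | f τ ≤ a}) :=
    isCompact_Icc.inter_right (isClosed_le hf continuous_const)
  obtain ⟨s', ⟨⟨hs, hs't⟩, hs'⟩, hmax⟩ := hlow.exists_isGreatest ⟨s, left_mem_Icc.2 hst, ha⟩
  have hhigh : IsCompact (Icc s' t ∩ {τ | b ≤ f τ}) :=
    isCompact_Icc.inter_right (isClosed_le continuous_const hf)
  obtain ⟨t', ⟨⟨hst', ht⟩, ht'⟩, hmin⟩ := hhigh.exists_isLeast ⟨t, right_mem_Icc.2 hs't, hb⟩
  refine ⟨s', t', hs, hst', ht, hs', ht', fun τ hτ ↦ ⟨?_, ?_⟩⟩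
  · by_contra! h
    exact hτ.1.not_ge (hmax ⟨⟨hs.trans hτ.1.le, hτ.2.le.trans ht⟩, h.le⟩)
  · by_contra! h
    exact hτ.2.not_ge (hmin ⟨⟨hτ.1.le, hτ.2.le.trans ht⟩, h.le⟩)

variable {W : ℝ × ℝ → ℝ} {u v : ℝ → ℝ × ℝ} {p : ℝ × ℝ} {R κ a b c s t : ℝ}

lemma mul_norm_le_energyDensity (h : c ^ 2 / 2 ≤ W (u t)) : c * ‖v t‖ ≤ energyDensity W u v t := by
  unfold energyDensity
  nlinarith [norm_sq_le_enorm2_sq (v t), sq_nonneg (‖v t‖ - c)]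

lemma energyDensity_comp_neg (t : ℝ) :
    energyDensity W (fun r ↦ u (-r)) (fun r ↦ -v (-r)) t = energyDensity W u v (-t) := by
  simp [energyDensity, enorm2]

namespace HasL2Deriv

lemma mul_sub_le_integral_of_exit (h : HasL2Deriv u v) (hWc : Continuous W) (hW : ∀ p, 0 ≤ W p)
    (hc : 0 ≤ c) (hann : ∀ x, a ≤ ‖x - p‖ → ‖x - p‖ ≤ b → c ^ 2 / 2 ≤ W x) (hst : s ≤ t)
    (hs : ‖u s - p‖ ≤ a) (ht : b ≤ ‖u t - p‖) :
    c * (b - a) ≤ ∫ r in s..t, energyDensity W u v r := by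
  have hf : Continuous fun r ↦ ‖u r - p‖ := (h.continuous.sub continuous_const).norm
  obtain ⟨s', t', hss', hst', htt', hs', ht', hmem⟩ :=
    exists_subinterval_forall_mem_Icc hf hst hs ht
  have hba : b - a ≤ ‖u t' - u s'‖ := by
    have := norm_sub_norm_le (u t' - p) (u s' - p)
    rw [sub_sub_sub_cancel_right] at this
    linarith
  calc c * (b - a) ≤ c * ‖u t' - u s'‖ := by gcongr
    _ ≤ c * ∫ r in s'..t', ‖v r‖ := by gcongr; exact h.norm_sub_le hst'
    _ = ∫ r in s'..t', c * ‖v r‖ := (intervalIntegral.integral_const_mul c _).symm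
    _ ≤ ∫ r in s'..t', energyDensity W u v r :=
        intervalIntegral.integral_mono_on_of_le_Ioo hst'
          ((h.intervalIntegrable s' t').norm.const_mul c)
          (h.intervalIntegrable_energyDensity hWc s' t')
          fun r hr ↦ mul_norm_le_energyDensity (hann _ (hmem r hr).1 (hmem r hr).2)
    _ ≤ ∫ r in s..t, energyDensity W u v r :=
        h.integral_energyDensity_mono hWc hW hss' hst' htt'

lemma mul_sub_le_integral_of_entry (h : HasL2Deriv u v) (hWc : Continuous W) (hW : ∀ p, 0 ≤ W p)
    (hc : 0 ≤ c) (hann : ∀ x, a ≤ ‖x - p‖ → ‖x - p‖ ≤ b → c ^ 2 / 2 ≤ W x) (hst : s ≤ t)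
    (hs : b ≤ ‖u s - p‖) (ht : ‖u t - p‖ ≤ a) :
    c * (b - a) ≤ ∫ r in s..t, energyDensity W u v r := by
  have hrev := h.comp_neg.mul_sub_le_integral_of_exit hWc hW hc hann (neg_le_neg hst)
    (by simpa using ht) (by simpa using hs)
  simp only [energyDensity_comp_neg] at hrev
  rwa [intervalIntegral.integral_comp_neg, neg_neg, neg_neg] at hrev

end HasL2Deriv

lemma QuadraticWell.le_apply_of_half_le (hp : QuadraticWell W p R κ) {x : ℝ × ℝ}
    (hx : R / 2 ≤ ‖x - p‖) (hxR : ‖x - p‖ ≤ R) : (√(κ / 2) * R) ^ 2 / 2 ≤ W x := by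
  have hR := hp.radius_pos
  have hκ := hp.rate_pos
  calc (√(κ / 2) * R) ^ 2 / 2 = κ * (R / 2) ^ 2 := by
        rw [mul_pow, Real.sq_sqrt (by positivity)]; ring
    _ ≤ κ * enorm2 (x - p) ^ 2 := by gcongr; exact hx.trans (norm_le_enorm2 _)
    _ ≤ W x := hp.le_apply x hxR

end Crossing

section EnergyLowerBound

lemma hasL2Deriv_primitive {E : Type*} [NormedAddCommGroup E] [NormedSpace ℝ E] {v : ℝ → E}
    (hv : MemLp v 2 volume) (p : E) (a : ℝ) :
    HasL2Deriv (fun t ↦ p + ∫ y in a..t, v y) v where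
  memLp := hv
  sub_eq_integral s t := by
    rw [add_sub_add_left_eq_sub, intervalIntegral.integral_interval_sub_left] <;>
      exact intervalIntegrable_of_memLp_two hv _ _

variable {W F : ℝ × ℝ → ℝ} {pm pp q : ℝ × ℝ} {u v : ℝ → ℝ × ℝ} {e M s t : ℝ}

namespace HasL2Deriv

lemma lipschitzWith (h : HasL2Deriv u v) {M : NNReal} (hM : ∀ t, ‖v t‖ ≤ M) :
    LipschitzWith M u := by
  refine LipschitzWith.of_dist_le_mul fun x y ↦ ?_
  rw [dist_eq_norm, h.sub_eq_integral, Real.dist_eq]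
  exact intervalIntegral.norm_integral_le_of_norm_le_const fun t _ ↦ hM t

lemma degLen_eq (h : HasL2Deriv u v) (F : ℝ × ℝ → ℝ) (s t : ℝ) :
    degLen F s t u = ∫ r in s..t, F (u r) * enorm2 (v r) := by
  refine intervalIntegral.integral_congr_ae ?_
  filter_upwards [h.ae_hasDerivAt] with r hr _
  rw [hr.deriv]

lemma intervalIntegrable_enorm2 (h : HasL2Deriv u v) (s t : ℝ) :
    IntervalIntegrable (fun r ↦ enorm2 (v r)) volume s t := by
  simp only [enorm2_eq_norm_toLp]
  exact intervalIntegrable_iff.2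
    ((WithLp.prodContinuousLinearEquiv 2 ℝ ℝ ℝ).symm.toContinuousLinearMap.integrable_comp
      (intervalIntegrable_iff.1 (h.intervalIntegrable s t))).norm

lemma intervalIntegrable_mul_enorm2 (h : HasL2Deriv u v) (hF : Continuous F) (s t : ℝ) :
    IntervalIntegrable (fun r ↦ F (u r) * enorm2 (v r)) volume s t :=
  (h.intervalIntegrable_enorm2 s t).continuousOn_mul (hF.comp h.continuous).continuousOn

lemma tendsto_integral_mul_enorm2 (h : HasL2Deriv u v) (hF : Continuous F) {x w : ℕ → ℝ → ℝ × ℝ}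
    {B : ℝ} (hx : ∀ k, HasL2Deriv (x k) (w k)) (hst : s ≤ t) (hxs : ∀ k, x k s = u s)
    (hbound : ∀ k r, ‖w k r‖ ≤ ‖v r‖ + B) (hlim : ∀ r, Tendsto (w · r) atTop (𝓝 (v r))) :
    Tendsto (fun k ↦ ∫ r in s..t, F (x k r) * enorm2 (w k r)) atTop
      (𝓝 (∫ r in s..t, F (u r) * enorm2 (v r))) := by
  have hdom (a b : ℝ) : IntervalIntegrable (fun r ↦ ‖v r‖ + B) volume a b :=
    (h.intervalIntegrable a b).norm.add intervalIntegrable_const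
  have hxlim (r : ℝ) : Tendsto (x · r) atTop (𝓝 (u r)) := by
    have hint : Tendsto (fun k ↦ ∫ y in s..r, w k y) atTop (𝓝 (∫ y in s..r, v y)) :=
      intervalIntegral.tendsto_integral_filter_of_dominated_convergence _
        (Eventually.of_forall fun k ↦ (hx k).memLp.1.restrict)
        (Eventually.of_forall fun k ↦ Eventually.of_forall fun y _ ↦ hbound k y) (hdom s r)
        (Eventually.of_forall fun y _ ↦ hlim y)
    simp only [← h.sub_eq_integral, ← (hx _).sub_eq_integral, hxs] at hint
    simpa using hint.add_const (u s)
  have hxball (k : ℕ) (r : ℝ) (hr : r ∈ Icc s t) :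
      x k r ∈ Metric.closedBall (u s) (∫ y in s..t, (‖v y‖ + B)) := by
    rw [mem_closedBall_iff_norm, ← hxs k, (hx k).sub_eq_integral]
    calc ‖∫ y in s..r, w k y‖ ≤ ∫ y in s..r, (‖v y‖ + B) :=
          intervalIntegral.norm_integral_le_of_norm_le hr.1
            (Eventually.of_forall fun y _ ↦ hbound k y) (hdom s r)
      _ ≤ ∫ y in s..t, (‖v y‖ + B) :=
          intervalIntegral.integral_mono_interval le_rfl hr.1 hr.2
            (Eventually.of_forall fun y ↦ (norm_nonneg _).trans (hbound 0 y)) (hdom s t)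
  obtain ⟨M, hM⟩ := (isCompact_closedBall (u s)
    (∫ y in s..t, (‖v y‖ + B))).exists_bound_of_continuousOn hF.continuousOn
  refine intervalIntegral.tendsto_integral_filter_of_dominated_convergence
    (fun r ↦ M * (2 * (‖v r‖ + B))) (Eventually.of_forall fun k ↦ ?_)
    (Eventually.of_forall fun k ↦ Eventually.of_forall fun r hr ↦ ?_)
    (((hdom s t).const_mul 2).const_mul M)
    (Eventually.of_forall fun r _ ↦ ((hF.tendsto _).comp (hxlim r)).mul
      ((continuous_enorm2.tendsto _).comp (hlim r)))
  · exact (intervalIntegrable_iff.1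
      ((hx k).intervalIntegrable_mul_enorm2 hF s t)).aestronglyMeasurable
  · rw [uIoc_of_le hst] at hr
    have hFM := hM _ (hxball k r (Ioc_subset_Icc_self hr))
    rw [norm_mul, Real.norm_of_nonneg (enorm2_nonneg _)]
    exact mul_le_mul hFM ((enorm2_le _).trans (by linarith [hbound k r])) (enorm2_nonneg _)
      ((norm_nonneg _).trans hFM)

end HasL2Deriv

lemma exists_seq_norm_le_tendsto {E : Type*} [NormedAddCommGroup E] {v : ℝ → E}
    (hv : MemLp v 2 volume) :
    ∃ w : ℕ → ℝ → E, (∀ k, MemLp (w k) 2 volume) ∧ (∀ k r, ‖w k r‖ ≤ k) ∧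
      (∀ k r, ‖w k r‖ ≤ ‖v r‖) ∧ ∀ r, Tendsto (w · r) atTop (𝓝 (v r)) := by
  have hle (k : ℕ) (r : ℝ) : ‖{r | ‖v r‖ ≤ k}.indicator v r‖ ≤ ‖v r‖ :=
    norm_indicator_le_norm_self _ _
  refine ⟨fun k ↦ {r | ‖v r‖ ≤ k}.indicator v, fun k ↦ ?_, fun k r ↦ ?_, hle, fun r ↦ ?_⟩
  · exact hv.of_le (hv.1.indicator₀ (hv.1.norm.nullMeasurableSet_le aestronglyMeasurable_const))
      (Eventually.of_forall (hle k))
  · by_cases hr : ‖v r‖ ≤ k <;> simp [hr]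
  · refine tendsto_const_nhds.congr' ?_
    filter_upwards [eventually_ge_atTop ⌈‖v r‖⌉₊] with k hk
    exact (indicator_of_mem (s := {r | ‖v r‖ ≤ k}) (Nat.ceil_le.1 hk) v).symm

/- The velocities truncated at height `k` are corrected by a constant, so that the endpoints stay
fixed. -/
lemma HasL2Deriv.exists_seq_bounded_velocity {E : Type*} [NormedAddCommGroup E] [NormedSpace ℝ E]
    [CompleteSpace E] {u v : ℝ → E} (h : HasL2Deriv u v) (hst : s < t) :
    ∃ (x w : ℕ → ℝ → E) (B : ℝ), (∀ k, HasL2Deriv (x k) (w k)) ∧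
      (∀ k, ∃ M : NNReal, ∀ r, ‖w k r‖ ≤ M) ∧ (∀ k, x k s = u s) ∧ (∀ k, x k t = u t) ∧
      (∀ k r, ‖w k r‖ ≤ ‖v r‖ + B) ∧ ∀ r, Tendsto (w · r) atTop (𝓝 (v r)) := by
  obtain ⟨w, hw, hwk, hwv, hlim⟩ := exists_seq_norm_le_tendsto h.memLp
  have hts : 0 < t - s := sub_pos.2 hst
  have hi := h.intervalIntegrable s t
  have hwi (k : ℕ) := intervalIntegrable_of_memLp_two (hw k) s t
  set d : ℕ → E := fun k ↦ (t - s)⁻¹ • ((∫ r in s..t, v r) - ∫ r in s..t, w k r) with hd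
  have hdlim : Tendsto d atTop (𝓝 0) := by
    have hint : Tendsto (fun k ↦ ∫ r in s..t, w k r) atTop (𝓝 (∫ r in s..t, v r)) :=
      intervalIntegral.tendsto_integral_filter_of_dominated_convergence _
        (Eventually.of_forall fun k ↦ (hw k).1.restrict)
        (Eventually.of_forall fun k ↦ Eventually.of_forall fun r _ ↦ hwv k r) hi.norm
        (Eventually.of_forall fun r _ ↦ hlim r)
    simpa using (hint.const_sub (∫ r in s..t, v r)).const_smul (t - s)⁻¹
  obtain ⟨B, hB⟩ := hdlim.norm.bddAbove_range
  have hdB (k : ℕ) : ‖d k‖ ≤ B := hB (mem_range_self k)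
  have hind (k : ℕ) (r : ℝ) : ‖(Ioc s t).indicator (fun _ ↦ d k) r‖ ≤ B :=
    (norm_indicator_le_norm_self _ _).trans (hdB k)
  have hmem (k : ℕ) : MemLp (w k + (Ioc s t).indicator fun _ ↦ d k) 2 volume :=
    (hw k).add (memLp_indicator_const 2 measurableSet_Ioc _ (by simp))
  refine ⟨fun k r ↦ u s + ∫ y in s..r, (w k + (Ioc s t).indicator fun _ ↦ d k) y, _, B,
    fun k ↦ hasL2Deriv_primitive (hmem k) (u s) s,
    fun k ↦ ⟨k + ‖d k‖₊, fun r ↦ ?_⟩, fun k ↦ by simp, fun k ↦ ?_, fun k r ↦ ?_, fun r ↦ ?_⟩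
  · exact (norm_add_le _ _).trans (add_le_add (hwk k r) (norm_indicator_le_norm_self _ _))
  · have hconst : ∫ r in s..t, (Ioc s t).indicator (fun _ ↦ d k) r = (t - s) • d k := by
      rw [intervalIntegral.integral_of_le hst.le, setIntegral_indicator measurableSet_Ioc,
        inter_self, ← intervalIntegral.integral_of_le hst.le, intervalIntegral.integral_const]
    simp only [Pi.add_apply]
    rw [intervalIntegral.integral_add (hwi k)
      (intervalIntegrable_of_memLp_two (memLp_indicator_const 2 measurableSet_Ioc _ (by simp)) s t),
      hconst, hd, smul_inv_smul₀ hts.ne', ← h.sub_eq_integral]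
    abel
  · exact (norm_add_le _ _).trans (add_le_add (hwv k r) (hind k r))
  · have hzero : Tendsto (fun k ↦ (Ioc s t).indicator (fun _ ↦ d k) r) atTop (𝓝 0) :=
      squeeze_zero_norm (fun k ↦ norm_indicator_le_norm_self _ _) (by simpa using hdlim.norm)
    simpa using (hlim r).add hzero

lemma HasL2Deriv.le_integral_of_forall_isCurve (h : HasL2Deriv u v) (hF : Continuous F)
    (hmin : ∀ a b γ, IsCurve a b γ pm pp → e ≤ degLen F a b γ) (hst : s < t) (hs : u s = pm)
    (ht : u t = pp) : e ≤ ∫ r in s..t, F (u r) * enorm2 (v r) := by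
  obtain ⟨x, w, B, hx, hbdd, hxs, hxt, hw, hlim⟩ := h.exists_seq_bounded_velocity hst
  refine ge_of_tendsto' (h.tendsto_integral_mul_enorm2 hF hx hst.le hxs hw hlim) fun k ↦ ?_
  obtain ⟨M, hM⟩ := hbdd k
  rw [← (hx k).degLen_eq]
  exact hmin s t (x k) ⟨hst.le, ((hx k).lipschitzWith hM).locallyLipschitz,
    (hxs k).trans hs, (hxt k).trans ht⟩

lemma HasL2Deriv.exists_eqOn_Iic_eqOn_segment (h : HasL2Deriv u v) (t : ℝ) (q : ℝ × ℝ) :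
    ∃ u' v', HasL2Deriv u' v' ∧ EqOn u' u (Iic t) ∧ EqOn v' v (Iic t) ∧
      EqOn u' (fun r ↦ u t + (r - t) • (q - u t)) (Icc t (t + 1)) ∧
      EqOn v' (fun _ ↦ q - u t) (Ioc t (t + 1)) := by
  set v' : ℝ → ℝ × ℝ := (Iic t).indicator v + (Ioc t (t + 1)).indicator fun _ ↦ q - u t with hv'
  have hv_left : EqOn v' v (Iic t) := fun r hr ↦ by simp [hv', mem_Iic.1 hr]
  have hv_right : EqOn v' (fun _ ↦ q - u t) (Ioc t (t + 1)) := fun r hr ↦ by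
    simp [hv', hr.1, hr.2]
  refine ⟨fun r ↦ u t + ∫ y in t..r, v' y, v', hasL2Deriv_primitive
    ((h.memLp.indicator measurableSet_Iic).add
      (memLp_indicator_const 2 measurableSet_Ioc _ (by simp))) _ _, fun r hr ↦ ?_, hv_left,
    fun r hr ↦ ?_, hv_right⟩
  · have : ∫ y in t..r, v' y = ∫ y in t..r, v y :=
      intervalIntegral.integral_congr fun y hy ↦ hv_left (by
        rw [uIcc_of_ge (mem_Iic.1 hr)] at hy
        exact hy.2)
    simp only [this, ← h.sub_eq_integral]
    abel
  · simp only [← intervalIntegral.integral_const]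
    refine congrArg (u t + ·) (intervalIntegral.integral_congr_ae (Eventually.of_forall ?_))
    intro y hy
    rw [uIoc_of_le hr.1] at hy
    exact hv_right ⟨hy.1, hy.2.trans hr.2⟩

lemma HasL2Deriv.exists_append_segment (h : HasL2Deriv u v) (hF : Continuous F) (hst : s ≤ t)
    (hM : ∀ x, ‖x - q‖ ≤ ‖u t - q‖ → |F x| ≤ M) :
    ∃ u' v', HasL2Deriv u' v' ∧ u' s = u s ∧ u' (t + 1) = q ∧
      ∫ r in s..(t + 1), F (u' r) * enorm2 (v' r) ≤
        (∫ r in s..t, F (u r) * enorm2 (v r)) + M * (2 * ‖u t - q‖) := by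
  have hM0 : 0 ≤ M := (abs_nonneg _).trans (hM (u t) le_rfl)
  obtain ⟨u', v', h', hu_left, hv_left, hu_right, hv_right⟩ := h.exists_eqOn_Iic_eqOn_segment t q
  have hleft : ∫ r in s..t, F (u' r) * enorm2 (v' r) = ∫ r in s..t, F (u r) * enorm2 (v r) :=
    intervalIntegral.integral_congr fun r hr ↦ by
      rw [uIcc_of_le hst] at hr
      simp only [hu_left hr.2, hv_left hr.2]
  have hright : ∫ r in t..(t + 1), F (u' r) * enorm2 (v' r) ≤
      ∫ _ in t..(t + 1), M * (2 * ‖u t - q‖) := by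
    refine intervalIntegral.integral_mono_on_of_le_Ioo (by linarith)
      (h'.intervalIntegrable_mul_enorm2 hF _ _) intervalIntegrable_const fun r hr ↦ ?_
    rw [hv_right (Ioo_subset_Ioc_self hr), hu_right (Ioo_subset_Icc_self hr)]
    refine mul_le_mul ((le_abs_self _).trans (hM _ ?_)) ?_ (enorm2_nonneg _) hM0
    · have : u t + (r - t) • (q - u t) - q = (1 - (r - t)) • (u t - q) := by module
      rw [this, norm_smul, Real.norm_of_nonneg (by linarith [hr.2])]
      exact mul_le_of_le_one_left (norm_nonneg _) (by linarith [hr.1])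
    · exact (enorm2_le _).trans_eq (by rw [norm_sub_rev])
  refine ⟨u', v', h', hu_left hst, ?_, ?_⟩
  · rw [hu_right (right_mem_Icc.2 (by linarith))]; simp
  · rw [← intervalIntegral.integral_add_adjacent_intervals
      (h'.intervalIntegrable_mul_enorm2 hF s t) (h'.intervalIntegrable_mul_enorm2 hF t (t + 1)),
      hleft]
    simpa using hright

lemma HasL2Deriv.exists_prepend_segment (h : HasL2Deriv u v) (hF : Continuous F) (hst : s ≤ t)
    (hM : ∀ x, ‖x - q‖ ≤ ‖u s - q‖ → |F x| ≤ M) :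
    ∃ u' v', HasL2Deriv u' v' ∧ u' (s - 1) = q ∧ u' t = u t ∧
      ∫ r in (s - 1)..t, F (u' r) * enorm2 (v' r) ≤
        (∫ r in s..t, F (u r) * enorm2 (v r)) + M * (2 * ‖u s - q‖) := by
  have hneg (f g : ℝ → ℝ × ℝ) (a b : ℝ) :
      ∫ r in a..b, F (f (-r)) * enorm2 (-g (-r)) = ∫ r in (-b)..(-a), F (f r) * enorm2 (g r) := by
    rw [← intervalIntegral.integral_comp_neg]
    simp [enorm2]
  obtain ⟨u', v', h', ht', hs', hle⟩ := h.comp_neg.exists_append_segment hF (neg_le_neg hst)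
    (q := q) (M := M) (by simpa using hM)
  refine ⟨_, _, h'.comp_neg, ?_, ?_, ?_⟩
  · rw [← hs']; ring_nf
  · simpa using ht'
  · simpa [hneg, neg_add_eq_sub] using hle

/-- Quantitative energy bound: an arc from the `ρ`-ball about `pm` to the `ρ`-ball about `pp` has
energy at least `e - C ρ`. For `e = √2 E(γ₀)` it expresses the minimality of `γ₀`. -/
structure EnergyLowerBound (W : ℝ × ℝ → ℝ) (pm pp : ℝ × ℝ) (e C : ℝ) : Prop where
  le_integral : ∀ ⦃u v : ℝ → ℝ × ℝ⦄, HasL2Deriv u v → ∀ ⦃ρ s t : ℝ⦄, ρ ≤ 1 → s ≤ t →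
    ‖u s - pm‖ ≤ ρ → ‖u t - pp‖ ≤ ρ → e ≤ (∫ r in s..t, energyDensity W u v r) + C * ρ

lemma sqrt_two_mul_le_energyDensity (hW : ∀ p, 0 ≤ W p) (u v : ℝ → ℝ × ℝ) (t : ℝ) :
    √2 * (√(W (u t)) * enorm2 (v t)) ≤ energyDensity W u v t := by
  unfold energyDensity
  nlinarith [sq_nonneg (enorm2 (v t) - √2 * √(W (u t))), Real.sq_sqrt (hW (u t)),
    Real.sq_sqrt (zero_le_two (α := ℝ))]

theorem exists_energyLowerBound (hWc : Continuous W) (hW : ∀ p, 0 ≤ W p)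
    (hmin : ∀ a b γ, IsCurve a b γ pm pp → e ≤ degLen (fun p ↦ √(W p)) a b γ) :
    ∃ C, EnergyLowerBound W pm pp (√2 * e) C := by
  have hF : Continuous fun p ↦ √(W p) := hWc.sqrt
  obtain ⟨M, hM⟩ := ((isCompact_closedBall pm 1).union
    (isCompact_closedBall pp 1)).exists_bound_of_continuousOn hF.continuousOn
  have hM0 : 0 ≤ M := (norm_nonneg _).trans (hM pm (.inl (Metric.mem_closedBall_self zero_le_one)))
  refine ⟨√2 * (4 * M), ⟨fun u v h ρ s t hρ hst hs ht ↦ ?_⟩⟩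
  obtain ⟨u₁, v₁, h₁, hs₁, ht₁, hle₁⟩ := h.exists_prepend_segment hF hst (q := pm) (M := M)
    fun x hx ↦ hM x (.inl (mem_closedBall_iff_norm.2 (hx.trans (hs.trans hρ))))
  obtain ⟨u₂, v₂, h₂, hs₂, ht₂, hle₂⟩ := h₁.exists_append_segment hF
    (by linarith : s - 1 ≤ t) (q := pp) (M := M)
    fun x hx ↦ hM x (.inr (mem_closedBall_iff_norm.2 (hx.trans (by rw [ht₁]; exact ht.trans hρ))))
  have hlen := h₂.le_integral_of_forall_isCurve hF hmin (by linarith) (hs₂.trans hs₁) ht₂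
  have hsum : e ≤ (∫ r in s..t, √(W (u r)) * enorm2 (v r)) + 4 * M * ρ := by
    rw [ht₁] at hle₂
    nlinarith
  calc √2 * e ≤ √2 * ((∫ r in s..t, √(W (u r)) * enorm2 (v r)) + 4 * M * ρ) := by gcongr
    _ = (∫ r in s..t, √2 * (√(W (u r)) * enorm2 (v r))) + √2 * (4 * M) * ρ := by
        rw [intervalIntegral.integral_const_mul]; ring
    _ ≤ (∫ r in s..t, energyDensity W u v r) + √2 * (4 * M) * ρ := by
        gcongr
        exact intervalIntegral.integral_mono_on hst
          ((h.intervalIntegrable_mul_enorm2 hF s t).const_mul _)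
          (h.intervalIntegrable_energyDensity hWc s t)
          fun r _ ↦ sqrt_two_mul_le_energyDensity hW u v r

end EnergyLowerBound

section Confinement

variable {W : ℝ × ℝ → ℝ} {pm pp : ℝ × ℝ} {u v : ℝ → ℝ × ℝ} {e C R κ c r : ℝ}

lemma exists_pos_le_mul_le (C : ℝ) {δ ε : ℝ} (hδ : 0 < δ) (hε : 0 < ε) :
    ∃ r > 0, r ≤ δ ∧ C * r ≤ ε := by
  refine ⟨min δ (ε / (|C| + 1)), lt_min hδ (by positivity), min_le_left _ _, ?_⟩
  calc C * min δ (ε / (|C| + 1)) ≤ (|C| + 1) * (ε / (|C| + 1)) := by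
        gcongr
        · linarith [le_abs_self C]
        · exact min_le_right _ _
    _ = ε := by field_simp

lemma IsConnection.le_energy (h : IsConnection W pm pp u v) (hW : ∀ p, 0 ≤ W p)
    (hL : EnergyLowerBound W pm pp e C) : e ≤ energy W u v := by
  refine le_of_forall_pos_le_add fun ε hε ↦ ?_
  obtain ⟨r, hr, hr1, hCr⟩ := exists_pos_le_mul_le C one_pos hε
  obtain ⟨s, hs, hsm⟩ := h.exists_le_norm_sub_le hr 0
  obtain ⟨t, ht, htp⟩ := h.exists_ge_norm_sub_le hr 0
  have hst := hs.trans ht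
  linarith [hL.le_integral h.toHasL2Deriv hr1 hst hsm htp,
    h.integral_energyDensity_le_energy hW hst]

namespace IsConnection

lemma exists_first_entry (h : IsConnection W pm pp u v) (hr : 0 < r) (hd : 2 * r < ‖pm - pp‖) :
    ∃ τ, ‖u τ - pp‖ ≤ r ∧ ∀ t < τ, r ≤ ‖u t - pp‖ := by
  have hclosed : IsClosed {t | ‖u t - pp‖ ≤ r} :=
    isClosed_le (h.continuous.sub continuous_const).norm continuous_const
  obtain ⟨t₀, -, ht₀⟩ := h.exists_ge_norm_sub_le hr 0
  have hbdd : BddBelow {t | ‖u t - pp‖ ≤ r} := by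
    obtain ⟨b, hb⟩ := eventually_atBot.1
      (h.tendsto_atBot.eventually (Metric.closedBall_mem_nhds pm hr))
    refine ⟨b, fun t ht ↦ ?_⟩
    by_contra! htb
    have hm : ‖u t - pm‖ ≤ r := mem_closedBall_iff_norm.1 (hb t htb.le)
    have hp : ‖u t - pp‖ ≤ r := ht
    have := norm_sub_le (u t - pp) (u t - pm)
    rw [sub_sub_sub_cancel_left] at this
    linarith
  refine ⟨sInf {t | ‖u t - pp‖ ≤ r}, hclosed.csInf_mem ⟨t₀, ht₀⟩ hbdd, fun t ht ↦ ?_⟩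
  by_contra! hlt
  exact ht.not_ge (csInf_le hbdd hlt.le)

lemma exists_mem_Icc_norm_sub_le (h : IsConnection W pm pp u v) (hWc : Continuous W)
    (hW : ∀ p, 0 ≤ W p) (haway : ∀ x, r ≤ ‖x - pm‖ → r ≤ ‖x - pp‖ → c ≤ W x) {τ T : ℝ}
    (hT : 0 ≤ T) (hTc : energy W u v < T * c) (hτ : ∀ t < τ, r ≤ ‖u t - pp‖) :
    ∃ s ∈ Icc (τ - T) τ, ‖u s - pm‖ ≤ r := by
  by_contra! hfar
  have hle : τ - T ≤ τ := by linarith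
  have : T * c ≤ energy W u v :=
    calc T * c = ∫ _ in (τ - T)..τ, c := by simp
      _ ≤ ∫ t in (τ - T)..τ, energyDensity W u v t :=
          intervalIntegral.integral_mono_on_of_le_Ioo hle intervalIntegrable_const
            (h.intervalIntegrable_energyDensity hWc _ _) fun t ht ↦
              (haway (u t) (hfar t (Ioo_subset_Icc_self ht)).le (hτ t ht.2)).trans
                (le_add_of_nonneg_left (by positivity))
      _ ≤ energy W u v := h.integral_energyDensity_le_energy hW hle
  linarith

/- An excursion out of the ball of radius `R` costs a fixed amount of energy, on top of the
`e - C r` that any passage between the balls of radius `r` costs. -/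
lemma norm_sub_lt_of_before (h : IsConnection W pm pp u v) (hWc : Continuous W)
    (hW : ∀ p, 0 ≤ W p) (hL : EnergyLowerBound W pm pp e C) (hm : QuadraticWell W pm R κ)
    (hr1 : r ≤ 1) (hrR : r ≤ R / 2)
    (hE : energy W u v + C * r < e + √(κ / 2) * R * (R - R / 2)) {s τ : ℝ} (hsτ : s ≤ τ)
    (hs : ‖u s - pm‖ ≤ r) (hτ : ‖u τ - pp‖ ≤ r) {t : ℝ} (ht : t ≤ s) : ‖u t - pm‖ < R := by
  by_contra! hR
  have hRpos := hm.radius_pos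
  have hexc := h.mul_sub_le_integral_of_entry hWc hW (by positivity)
    (fun x ↦ hm.le_apply_of_half_le) ht hR (hs.trans hrR)
  have hpass := hL.le_integral h.toHasL2Deriv hr1 hsτ hs hτ
  have htotal := h.integral_energyDensity_le_energy hW (ht.trans hsτ)
  rw [← intervalIntegral.integral_add_adjacent_intervals
    (h.intervalIntegrable_energyDensity hWc t s)
    (h.intervalIntegrable_energyDensity hWc s τ)] at htotal
  linarith

lemma norm_sub_lt_of_after (h : IsConnection W pm pp u v) (hWc : Continuous W)
    (hW : ∀ p, 0 ≤ W p) (hL : EnergyLowerBound W pm pp e C) (hp : QuadraticWell W pp R κ)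
    (hr : 0 < r) (hr1 : r ≤ 1) (hrR : r ≤ R / 2)
    (hE : energy W u v + C * r < e + √(κ / 2) * R * (R - R / 2)) {τ : ℝ}
    (hτ : ‖u τ - pp‖ ≤ r) {t : ℝ} (ht : τ ≤ t) : ‖u t - pp‖ < R := by
  by_contra! hR
  have hRpos := hp.radius_pos
  have hexc := h.mul_sub_le_integral_of_exit hWc hW (by positivity)
    (fun x ↦ hp.le_apply_of_half_le) ht (hτ.trans hrR) hR
  obtain ⟨s, hsτ, hs⟩ := h.exists_le_norm_sub_le hr τ
  have hpass := hL.le_integral h.toHasL2Deriv hr1 hsτ hs hτ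
  have htotal := h.integral_energyDensity_le_energy hW (hsτ.trans ht)
  rw [← intervalIntegral.integral_add_adjacent_intervals
    (h.intervalIntegrable_energyDensity hWc s τ)
    (h.intervalIntegrable_energyDensity hWc τ t)] at htotal
  linarith

end IsConnection

/-- The curve `u` is within `R` of `pm` before time `-T`, and within `R` of `pp` after time `T`. -/
structure Confined (u : ℝ → ℝ × ℝ) (pm pp : ℝ × ℝ) (R T : ℝ) : Prop where
  nonneg : 0 ≤ T
  left : ∀ t ≤ -T, ‖u t - pm‖ ≤ R
  right : ∀ t ≥ T, ‖u t - pp‖ ≤ R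

theorem exists_confined (hT : TwoWell W pm pp) (hL : EnergyLowerBound W pm pp e C)
    (hm : QuadraticWell W pm R κ) (hp : QuadraticWell W pp R κ) :
    ∃ η > 0, ∃ T, ∀ u v, IsConnection W pm pp u v → energy W u v ≤ e + η →
      ∃ τ, Confined (fun t ↦ u (t + τ)) pm pp R T := by
  have hWc := hT.smooth.continuous
  have hR := hm.radius_pos
  have hκ := hm.rate_pos
  have hK : 0 < √(κ / 2) * R * (R - R / 2) := mul_pos (by positivity) (by linarith)
  set K := √(κ / 2) * R * (R - R / 2) with hKdef
  have hd : 0 < ‖pm - pp‖ := norm_pos_iff.2 (sub_ne_zero.2 hT.wells_ne)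
  obtain ⟨r, hr, hr', hCr⟩ := exists_pos_le_mul_le C
    (lt_min (half_pos hR) (lt_min one_pos (by positivity : 0 < ‖pm - pp‖ / 3)))
    (by positivity : 0 < K / 4)
  obtain ⟨hrR, hr1, hrd⟩ : r ≤ R / 2 ∧ r ≤ 1 ∧ r ≤ ‖pm - pp‖ / 3 := by simpa using hr'
  obtain ⟨c, hc, haway⟩ := hT.exists_forall_le_apply hr
  refine ⟨min (K / 4) 1, lt_min (by positivity) one_pos, (|e| + 2) / c, fun u v h hE ↦ ?_⟩
  have hEK := hE.trans (add_le_add_right (min_le_left (K / 4) 1) e)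
  have hE1 := hE.trans (add_le_add_right (min_le_right (K / 4) 1) e)
  have hT0 : 0 ≤ (|e| + 2) / c := by positivity
  obtain ⟨τ, hτ, hbefore⟩ := h.exists_first_entry hr (by linarith)
  obtain ⟨s, ⟨hs, hsτ⟩, hsm⟩ := h.exists_mem_Icc_norm_sub_le hWc hT.nonneg haway hT0
    (by rw [div_mul_cancel₀ _ hc.ne']; linarith [le_abs_self e]) hbefore
  refine ⟨τ, hT0, fun t ht ↦ ?_, fun t ht ↦ ?_⟩
  · exact (h.norm_sub_lt_of_before hWc hT.nonneg hL hm hr1 hrR (by rw [← hKdef]; linarith) hsτ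
      hsm hτ (by linarith)).le
  · exact (h.norm_sub_lt_of_after hWc hT.nonneg hL hp hr hr1 hrR (by rw [← hKdef]; linarith) hτ
      (by linarith)).le

end Confinement

section WeakConvergence

lemma inner_toLp_toLp {f h : ℝ → ℝ} (hf : MemLp f 2 volume) (hh : MemLp h 2 volume) :
    inner ℝ (hf.toLp f) (hh.toLp h) = ∫ t, f t * h t := by
  rw [L2.inner_def]
  refine integral_congr_ae ?_
  filter_upwards [hf.coeFn_toLp, hh.coeFn_toLp] with t h₁ h₂
  simp [h₁, h₂, mul_comm]

lemma sq_integral_mul_le {f h : ℝ → ℝ} (hf : MemLp f 2 volume) (hh : MemLp h 2 volume) :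
    (∫ t, f t * h t) ^ 2 ≤ (∫ t, f t ^ 2) * ∫ t, h t ^ 2 := by
  have := real_inner_mul_inner_self_le (hf.toLp f) (hh.toLp h)
  simp only [inner_toLp_toLp] at this
  simpa only [sq] using this

/-- Weak convergence `fₙ ⇀ f` in `L²(ℝ)`, tested against square integrable functions. -/
def TendstoWeakly (f : ℕ → ℝ → ℝ) (f' : ℝ → ℝ) : Prop :=
  ∀ h : ℝ → ℝ, MemLp h 2 volume → Tendsto (fun n ↦ ∫ t, f n t * h t) atTop (𝓝 (∫ t, f' t * h t))

theorem exists_subseq_tendstoWeakly {f : ℕ → ℝ → ℝ} (hf : ∀ n, MemLp (f n) 2 volume) {M : ℝ}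
    (hM : ∀ n, ∫ t, f n t ^ 2 ≤ M) :
    ∃ φ : ℕ → ℕ, StrictMono φ ∧ ∃ f', MemLp f' 2 volume ∧ TendstoWeakly (fun n ↦ f (φ n)) f' := by
  have : Fact ((2 : ℝ≥0∞) ≠ ∞) := ⟨by norm_num⟩
  let H := Lp ℝ 2 (volume : Measure ℝ)
  let ι : H → WeakDual ℝ H := fun x ↦ WeakDual.toStrongDual.symm (InnerProductSpace.toDual ℝ H x)
  have hx (n : ℕ) : ‖(hf n).toLp (f n)‖ ≤ √M := by
    refine Real.le_sqrt_of_sq_le ?_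
    rw [← real_inner_self_eq_norm_sq, inner_toLp_toLp]
    simpa only [sq] using hM n
  obtain ⟨a, -, φ, hφ, hlim⟩ := WeakDual.isSeqCompact_closedBall ℝ (E := H) 0 √M
    (x := fun n ↦ ι ((hf n).toLp (f n))) fun n ↦ by
      rw [mem_preimage, LinearEquiv.apply_symm_apply, mem_closedBall_zero_iff,
        LinearIsometryEquiv.norm_map]
      exact hx n
  let z : H := (InnerProductSpace.toDual ℝ H).symm (WeakDual.toStrongDual a)
  refine ⟨φ, hφ, z, Lp.memLp z, fun h hh ↦ ?_⟩
  rw [tendsto_iff_forall_eval_tendsto_topDualPairing] at hlim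
  have hz : ∫ t, z t * h t = topDualPairing ℝ H a (hh.toLp h) := by
    rw [← inner_toLp_toLp (Lp.memLp z) hh, Lp.toLp_coeFn]
    exact InnerProductSpace.toDual_symm_apply
  rw [hz]
  exact (hlim (hh.toLp h)).congr fun n ↦ inner_toLp_toLp (hf (φ n)) hh

lemma memLp_indicator_Ioc {h : ℝ → ℝ} (hc : Continuous h) (s t : ℝ) :
    MemLp ((Ioc s t).indicator h) 2 volume := by
  rw [memLp_indicator_iff_restrict measurableSet_Ioc]
  obtain ⟨K, hK⟩ := (isCompact_Icc (a := s) (b := t)).exists_bound_of_continuousOn hc.continuousOn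
  refine MemLp.of_bound hc.aestronglyMeasurable K ?_
  filter_upwards [ae_restrict_mem measurableSet_Ioc] with x hx
  exact hK x (Ioc_subset_Icc_self hx)

lemma integral_mul_indicator_Ioc {f h : ℝ → ℝ} {s t : ℝ} (hst : s ≤ t) :
    ∫ x, f x * (Ioc s t).indicator h x = ∫ x in s..t, f x * h x := by
  rw [intervalIntegral.integral_of_le hst, ← integral_indicator measurableSet_Ioc]
  simp only [indicator_mul_right]

lemma integral_indicator_Ioc_sq {h : ℝ → ℝ} {s t : ℝ} (hst : s ≤ t) :
    ∫ x, (Ioc s t).indicator h x ^ 2 = ∫ x in s..t, h x ^ 2 := by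
  rw [intervalIntegral.integral_of_le hst, ← integral_indicator measurableSet_Ioc]
  congr 1 with x
  by_cases hx : x ∈ Ioc s t <;> simp [hx]

namespace TendstoWeakly

variable {f : ℕ → ℝ → ℝ} {f' : ℝ → ℝ}

lemma comp_strictMono (hw : TendstoWeakly f f') {φ : ℕ → ℕ} (hφ : StrictMono φ) :
    TendstoWeakly (fun n ↦ f (φ n)) f' :=
  fun h hh ↦ (hw h hh).comp hφ.tendsto_atTop

lemma intervalIntegral_mul (hw : TendstoWeakly f f') {h : ℝ → ℝ} {s t : ℝ} (hst : s ≤ t)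
    (hh : MemLp ((Ioc s t).indicator h) 2 volume) :
    Tendsto (fun n ↦ ∫ x in s..t, f n x * h x) atTop (𝓝 (∫ x in s..t, f' x * h x)) := by
  simpa only [integral_mul_indicator_Ioc hst] using hw _ hh

lemma intervalIntegral (hw : TendstoWeakly f f') (s t : ℝ) :
    Tendsto (fun n ↦ ∫ x in s..t, f n x) atTop (𝓝 (∫ x in s..t, f' x)) := by
  have key {a b : ℝ} (hab : a ≤ b) :
      Tendsto (fun n ↦ ∫ x in a..b, f n x) atTop (𝓝 (∫ x in a..b, f' x)) := by
    simpa only [mul_one] using hw.intervalIntegral_mul hab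
      (memLp_indicator_Ioc (continuous_const (y := (1 : ℝ))) a b)
  rcases le_total s t with hst | hst
  · exact key hst
  · simp only [intervalIntegral.integral_symm t s]
    exact (key hst).neg

lemma integral_mul_of_strong (hw : TendstoWeakly f f') (hf : ∀ n, MemLp (f n) 2 volume) {M : ℝ}
    (hM : ∀ n, ∫ t, f n t ^ 2 ≤ M) {h : ℕ → ℝ → ℝ} {h' : ℝ → ℝ} (hh : ∀ n, MemLp (h n) 2 volume)
    (hh' : MemLp h' 2 volume) (hlim : Tendsto (fun n ↦ ∫ t, (h n t - h' t) ^ 2) atTop (𝓝 0)) :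
    Tendsto (fun n ↦ ∫ t, f n t * h n t) atTop (𝓝 (∫ t, f' t * h' t)) := by
  have hsq : Tendsto (fun n ↦ (∫ t, f n t * (h n t - h' t)) ^ 2) atTop (𝓝 0) := by
    refine squeeze_zero (fun n ↦ sq_nonneg _) (fun n ↦ ?_) (by simpa using hlim.const_mul M)
    exact (sq_integral_mul_le (hf n) ((hh n).sub hh')).trans
      (mul_le_mul_of_nonneg_right (hM n) (integral_nonneg fun _ ↦ sq_nonneg _))
  have herr : Tendsto (fun n ↦ ∫ t, f n t * (h n t - h' t)) atTop (𝓝 0) := by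
    refine (tendsto_zero_iff_abs_tendsto_zero _).2 ?_
    simpa only [Function.comp_def, Real.sqrt_sq_eq_abs, Real.sqrt_zero] using hsq.sqrt
  have hsum := (hw h' hh').add herr
  rw [add_zero] at hsum
  refine hsum.congr fun n ↦ ?_
  have hsub : ∫ t, f n t * (h n t - h' t) = (∫ t, f n t * h n t) - ∫ t, f n t * h' t := by
    simp only [mul_sub]
    exact integral_sub ((hf n).integrable_mul (hh n)) ((hf n).integrable_mul hh')
  rw [hsub, add_sub_cancel]

end TendstoWeakly

end WeakConvergence

section WeakLimits

variable {un vn : ℕ → ℝ → ℝ × ℝ} {u v : ℝ → ℝ × ℝ} {M : ℝ}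

/-- Convergence of curves bounded in `H¹_loc`: the velocities converge weakly in `L²` and the
positions converge pointwise. -/
structure WeakLimit (un vn : ℕ → ℝ → ℝ × ℝ) (u v : ℝ → ℝ × ℝ) : Prop where
  hasL2Deriv_seq : ∀ n, HasL2Deriv (un n) (vn n)
  hasL2Deriv : HasL2Deriv u v
  bounded : ∃ M, ∀ n, ∫ t, enorm2 (vn n t) ^ 2 ≤ M
  weak_fst : TendstoWeakly (fun n t ↦ (vn n t).1) fun t ↦ (v t).1
  weak_snd : TendstoWeakly (fun n t ↦ (vn n t).2) fun t ↦ (v t).2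
  tendsto : ∀ t, Tendsto (un · t) atTop (𝓝 (u t))

namespace HasL2Deriv

lemma integral_fst_sq_le (h : HasL2Deriv u v) : ∫ t, (v t).1 ^ 2 ≤ ∫ t, enorm2 (v t) ^ 2 :=
  integral_mono h.fst.memLp.integrable_sq h.integrable_enorm2_sq fun t ↦ by
    simp only [enorm2_sq]
    exact le_add_of_nonneg_right (sq_nonneg _)

lemma integral_snd_sq_le (h : HasL2Deriv u v) : ∫ t, (v t).2 ^ 2 ≤ ∫ t, enorm2 (v t) ^ 2 :=
  integral_mono h.snd.memLp.integrable_sq h.integrable_enorm2_sq fun t ↦ by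
    simp only [enorm2_sq]
    exact le_add_of_nonneg_left (sq_nonneg _)

lemma norm_sub_le_abs_add (h : HasL2Deriv u v) (hM : ∫ t, enorm2 (v t) ^ 2 ≤ M) (s t : ℝ) :
    ‖u t - u s‖ ≤ |t - s| + M := by
  wlog hst : s ≤ t generalizing s t
  · rw [norm_sub_rev, abs_sub_comm]
    exact this t s (le_of_not_ge hst)
  have hI := h.integrable_enorm2_sq.intervalIntegrable (a := s) (b := t)
  calc ‖u t - u s‖ ≤ ∫ y in s..t, ‖v y‖ := h.norm_sub_le hst
    _ ≤ ∫ y in s..t, (1 + enorm2 (v y) ^ 2) :=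
        intervalIntegral.integral_mono_on hst (h.intervalIntegrable s t).norm
          (intervalIntegrable_const.add hI) fun y _ ↦ by
            nlinarith [norm_sq_le_enorm2_sq (v y), sq_nonneg (‖v y‖ - 1), norm_nonneg (v y)]
    _ = |t - s| + ∫ y in s..t, enorm2 (v y) ^ 2 := by
        rw [intervalIntegral.integral_add intervalIntegrable_const hI, abs_of_nonneg (by linarith)]
        simp
    _ ≤ |t - s| + M := by
        rw [intervalIntegral.integral_of_le hst]
        gcongr
        exact (setIntegral_le_integral h.integrable_enorm2_sq
          (Eventually.of_forall fun _ ↦ sq_nonneg _)).trans hM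

end HasL2Deriv

theorem exists_subseq_weakLimit (h : ∀ n, HasL2Deriv (un n) (vn n)) {K t₀ : ℝ}
    (hM : ∀ n, ∫ t, enorm2 (vn n t) ^ 2 ≤ M) (hK : ∀ n, ‖un n t₀‖ ≤ K) :
    ∃ φ : ℕ → ℕ, StrictMono φ ∧
      ∃ u v, WeakLimit (fun n ↦ un (φ n)) (fun n ↦ vn (φ n)) u v := by
  obtain ⟨a, ha, f₁, hf₁, hw₁⟩ := exists_subseq_tendstoWeakly (fun n ↦ (h n).fst.memLp)
    fun n ↦ (h n).integral_fst_sq_le.trans (hM n)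
  obtain ⟨b, hb, f₂, hf₂, hw₂⟩ := exists_subseq_tendstoWeakly (fun n ↦ (h (a n)).snd.memLp)
    fun n ↦ (h (a n)).integral_snd_sq_le.trans (hM _)
  obtain ⟨q, -, c, hc, hq⟩ := (isCompact_closedBall (0 : ℝ × ℝ) K).tendsto_subseq
    (x := fun n ↦ un (a (b n)) t₀) fun n ↦ by simpa using hK _
  replace hw₁ := hw₁.comp_strictMono (hb.comp hc)
  replace hw₂ := hw₂.comp_strictMono hc
  have hv : MemLp (fun t ↦ (f₁ t, f₂ t)) 2 volume := by
    simpa [Function.comp_def, Pi.add_def] using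
      ((ContinuousLinearMap.inl ℝ ℝ ℝ).comp_memLp' hf₁).add
        ((ContinuousLinearMap.inr ℝ ℝ ℝ).comp_memLp' hf₂)
  have hu := hasL2Deriv_primitive hv q t₀
  refine ⟨fun n ↦ a (b (c n)), ha.comp (hb.comp hc), _, _, fun n ↦ h _, hu, ⟨M, fun n ↦ hM _⟩,
    hw₁, hw₂, fun t ↦ ?_⟩
  have hsplit {x w : ℝ → ℝ × ℝ} (hx : HasL2Deriv x w) :
      x t = x t₀ + (∫ y in t₀..t, (w y).1, ∫ y in t₀..t, (w y).2) := by
    rw [← hx.fst.sub_eq_integral, ← hx.snd.sub_eq_integral]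
    exact (add_sub_cancel (x t₀) (x t)).symm
  rw [hsplit hu]
  simp only [intervalIntegral.integral_same, add_zero]
  exact (hq.add ((hw₁.intervalIntegral t₀ t).prodMk_nhds (hw₂.intervalIntegral t₀ t))).congr
    fun n ↦ (hsplit (h _)).symm

namespace WeakLimit

lemma exists_forall_norm_le (h : WeakLimit un vn u v) (S : ℝ) :
    ∃ K, (∀ n t, |t| ≤ S → ‖un n t‖ ≤ K) ∧ ∀ t, |t| ≤ S → ‖u t‖ ≤ K := by
  obtain ⟨M, hM⟩ := h.bounded
  obtain ⟨K, hK⟩ := (h.tendsto 0).norm.bddAbove_range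
  have hun (n : ℕ) (t : ℝ) (ht : |t| ≤ S) : ‖un n t‖ ≤ K + (S + M) := by
    have h₀ : ‖un n 0‖ ≤ K := hK (mem_range_self n)
    have h₁ := (h.hasL2Deriv_seq n).norm_sub_le_abs_add (hM n) 0 t
    rw [sub_zero] at h₁
    linarith [norm_sub_norm_le (un n t) (un n 0)]
  exact ⟨K + (S + M), hun, fun t ht ↦
    le_of_tendsto (h.tendsto t).norm (Eventually.of_forall fun n ↦ hun n t ht)⟩

lemma tendsto_intervalIntegral (h : WeakLimit un vn u v) {Φ : (ℝ × ℝ) × ℝ → ℝ} (hΦ : Continuous Φ)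
    (s t : ℝ) :
    Tendsto (fun n ↦ ∫ x in s..t, Φ (un n x, x)) atTop (𝓝 (∫ x in s..t, Φ (u x, x))) := by
  obtain ⟨K, hK, -⟩ := h.exists_forall_norm_le (max |s| |t|)
  obtain ⟨B, hB⟩ := ((isCompact_closedBall (0 : ℝ × ℝ) K).prod
    (isCompact_uIcc (a := s) (b := t))).exists_bound_of_continuousOn hΦ.continuousOn
  refine intervalIntegral.tendsto_integral_filter_of_dominated_convergence (fun _ ↦ B)
    (Eventually.of_forall fun n ↦
      (hΦ.comp ((h.hasL2Deriv_seq n).continuous.prodMk continuous_id)).aestronglyMeasurable)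
    (Eventually.of_forall fun n ↦ Eventually.of_forall fun x hx ↦ hB (un n x, x) ⟨?_, ?_⟩)
    intervalIntegrable_const (Eventually.of_forall fun x _ ↦
      (hΦ.tendsto (u x, x)).comp ((h.tendsto x).prodMk_nhds tendsto_const_nhds))
  · rw [mem_closedBall_zero_iff]
    refine hK n x ?_
    rcases mem_uIcc.1 (uIoc_subset_uIcc hx) with ⟨hsx, hxt⟩ | ⟨htx, hxs⟩
    · exact abs_le_max_abs_abs hsx hxt
    · exact max_comm |s| |t| ▸ abs_le_max_abs_abs htx hxs
  · exact uIoc_subset_uIcc hx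

lemma tendsto_area (h : WeakLimit un vn u v) {s t : ℝ} (hst : s ≤ t) :
    Tendsto (fun n ↦ ∫ x in s..t, (un n x).1 * (vn n x).2) atTop
      (𝓝 (∫ x in s..t, (u x).1 * (v x).2)) := by
  obtain ⟨M, hM⟩ := h.bounded
  have hcu := h.hasL2Deriv.fst.continuous
  have hsq : Tendsto (fun n ↦ ∫ x in s..t, ((un n x).1 - (u x).1) ^ 2) atTop (𝓝 0) := by
    have hΦ : Continuous fun z : (ℝ × ℝ) × ℝ ↦ (z.1.1 - (u z.2).1) ^ 2 :=
      (continuous_fst.fst.sub (hcu.comp continuous_snd)).pow 2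
    simpa using h.tendsto_intervalIntegral hΦ s t
  have := h.weak_snd.integral_mul_of_strong (fun n ↦ (h.hasL2Deriv_seq n).snd.memLp)
    (fun n ↦ (h.hasL2Deriv_seq n).integral_snd_sq_le.trans (hM n))
    (fun n ↦ memLp_indicator_Ioc (h.hasL2Deriv_seq n).fst.continuous s t)
    (memLp_indicator_Ioc hcu s t)
    (hsq.congr fun n ↦ by
      rw [← integral_indicator_Ioc_sq hst]
      simp only [indicator_sub])
  simpa only [integral_mul_indicator_Ioc hst, mul_comm] using this

/- Weak lower semicontinuity, from the tangent inequality `½|vₙ|² ≥ vₙ · v - ½|v|²`, whose right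
side passes to the limit. -/
lemma integral_energyDensity_le (h : WeakLimit un vn u v) {W : ℝ × ℝ → ℝ} (hW : Continuous W)
    {s t : ℝ} (hst : s ≤ t) {B : ℝ} {b : ℕ → ℝ} (hb : Tendsto b atTop (𝓝 B))
    (hle : ∀ n, ∫ x in s..t, energyDensity W (un n) (vn n) x ≤ b n) :
    ∫ x in s..t, energyDensity W u v x ≤ B := by
  have hu := h.hasL2Deriv
  have hsq : IntervalIntegrable (fun x ↦ 1 / 2 * enorm2 (v x) ^ 2) volume s t :=
    (hu.integrable_enorm2_sq.const_mul (1 / 2)).intervalIntegrable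
  have hfst {w x : ℝ → ℝ × ℝ} (hx : HasL2Deriv x w) :
      IntervalIntegrable (fun r ↦ (w r).1 * (v r).1) volume s t :=
    (hx.fst.memLp.integrable_mul hu.fst.memLp).intervalIntegrable
  have hsnd {w x : ℝ → ℝ × ℝ} (hx : HasL2Deriv x w) :
      IntervalIntegrable (fun r ↦ (w r).2 * (v r).2) volume s t :=
    (hx.snd.memLp.integrable_mul hu.snd.memLp).intervalIntegrable
  have hpot {w x : ℝ → ℝ × ℝ} (hx : HasL2Deriv x w) :
      IntervalIntegrable (fun r ↦ W (x r)) volume s t :=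
    (hW.comp hx.continuous).intervalIntegrable s t
  have hsplit {w x : ℝ → ℝ × ℝ} (hx : HasL2Deriv x w) :
      ∫ r in s..t, ((w r).1 * (v r).1 + (w r).2 * (v r).2 + W (x r) - 1 / 2 * enorm2 (v r) ^ 2) =
        (∫ r in s..t, (w r).1 * (v r).1) + (∫ r in s..t, (w r).2 * (v r).2) +
          (∫ r in s..t, W (x r)) - ∫ r in s..t, 1 / 2 * enorm2 (v r) ^ 2 := by
    rw [intervalIntegral.integral_sub (((hfst hx).add (hsnd hx)).add (hpot hx)) hsq,
      intervalIntegral.integral_add ((hfst hx).add (hsnd hx)) (hpot hx),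
      intervalIntegral.integral_add (hfst hx) (hsnd hx)]
  have hlim := (((h.weak_fst.intervalIntegral_mul hst
    (hu.fst.memLp.indicator measurableSet_Ioc)).add (h.weak_snd.intervalIntegral_mul hst
    (hu.snd.memLp.indicator measurableSet_Ioc))).add (h.tendsto_intervalIntegral
    (Φ := fun z ↦ W z.1) (by fun_prop) s t)).sub_const (∫ r in s..t, 1 / 2 * enorm2 (v r) ^ 2)
  have heq : ∫ x in s..t, energyDensity W u v x = ∫ r in s..t,
      ((v r).1 * (v r).1 + (v r).2 * (v r).2 + W (u r) - 1 / 2 * enorm2 (v r) ^ 2) :=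
    intervalIntegral.integral_congr fun r _ ↦ by
      simp only [energyDensity, enorm2_sq]
      ring
  rw [heq, hsplit hu]
  refine le_of_tendsto_of_tendsto' hlim hb fun n ↦ ?_
  have hn := h.hasL2Deriv_seq n
  rw [← hsplit hn]
  refine (intervalIntegral.integral_mono_on hst
    ((((hfst hn).add (hsnd hn)).add (hpot hn)).sub hsq)
    (hn.intervalIntegrable_energyDensity hW s t) fun x _ ↦ ?_).trans (hle n)
  simp only [energyDensity, enorm2_sq]
  nlinarith [sq_nonneg ((vn n x).1 - (v x).1), sq_nonneg ((vn n x).2 - (v x).2)]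

end WeakLimit

end WeakLimits

section Tails

variable {W : ℝ × ℝ → ℝ} {p pm pp : ℝ × ℝ} {u v : ℝ → ℝ × ℝ} {R κ c s t T : ℝ}

lemma exists_forall_abs_integral_lt {f : ℝ → ℝ} (hf : IntegrableOn f (Ioi T))
    (hfi : ∀ s t, IntervalIntegrable f volume s t) {ε : ℝ} (hε : 0 < ε) :
    ∃ B, ∀ s ≥ B, ∀ t ≥ B, |∫ r in s..t, f r| < ε := by
  obtain ⟨B, hB⟩ := Metric.tendsto_atTop.1 (intervalIntegral_tendsto_integral_Ioi T hf tendsto_id)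
    (ε / 2) (half_pos hε)
  refine ⟨B, fun s hs t ht ↦ ?_⟩
  have hdist := dist_triangle_right (∫ r in T..t, f r) (∫ r in T..s, f r) (∫ r in Ioi T, f r)
  rw [Real.dist_eq, intervalIntegral.integral_interval_sub_left (hfi T t) (hfi T s)] at hdist
  simp only [id] at hB
  linarith [hB s hs, hB t ht]

namespace HasL2Deriv

/- Once the energy for the potential `|x - p|²` is small on all late intervals, `u` can neither stay
at distance `ε/2` from `p` for a unit of time nor travel from distance `ε` to distance `ε/2`. -/
lemma tendsto_atTop_of_integrableOn (h : HasL2Deriv u v)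
    (hi : IntegrableOn (fun t ↦ enorm2 (u t - p) ^ 2) (Ioi T)) : Tendsto u atTop (𝓝 p) := by
  let V : ℝ × ℝ → ℝ := fun x ↦ enorm2 (x - p) ^ 2
  have hVc : Continuous V := (continuous_enorm2.comp (by fun_prop)).pow 2
  have hV : ∀ x, 0 ≤ V x := fun x ↦ sq_nonneg _
  have hle (x : ℝ × ℝ) {a : ℝ} (ha : 0 ≤ a) (hx : a ≤ ‖x - p‖) : a ^ 2 ≤ V x :=
    (pow_le_pow_left₀ ha hx 2).trans (norm_sq_le_enorm2_sq _)
  rw [tendsto_iff_norm_sub_tendsto_zero, Metric.tendsto_atTop]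
  intro ε hε
  obtain ⟨B, hB⟩ := exists_forall_abs_integral_lt (f := energyDensity V u v)
    ((h.integrable_enorm2_sq.const_mul (1 / 2)).integrableOn.add hi)
    (h.intervalIntegrable_energyDensity hVc) (ε := ε ^ 2 / 4) (by positivity)
  refine ⟨B, fun t ht ↦ ?_⟩
  rw [dist_zero_right, norm_norm]
  by_contra! hfar
  obtain ⟨s, hts, hs⟩ : ∃ s ≥ t, ‖u s - p‖ ≤ ε / 2 := by
    by_contra! hstay
    have : ε ^ 2 / 4 ≤ ∫ y in t..(t + 1), energyDensity V u v y :=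
      calc ε ^ 2 / 4 = ∫ _ in t..(t + 1), (ε / 2) ^ 2 := by simp [div_pow]; norm_num
        _ ≤ ∫ y in t..(t + 1), energyDensity V u v y :=
            intervalIntegral.integral_mono_on (by linarith) intervalIntegrable_const
              (h.intervalIntegrable_energyDensity hVc _ _) fun y hy ↦
                (hle (u y) (by positivity) (hstay y hy.1).le).trans
                  (le_add_of_nonneg_left (by positivity))
    linarith [(abs_lt.1 (hB t ht (t + 1) (by linarith))).2]
  have hcross := h.mul_sub_le_integral_of_entry hVc hV (c := ε / 2) (by positivity)
    (fun x hx _ ↦ (by nlinarith : (ε / 2) ^ 2 / 2 ≤ (ε / 2) ^ 2).trans (hle x (by positivity) hx))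
    hts hfar hs
  linarith [(abs_lt.1 (hB t ht s (ht.trans hts))).2]

lemma tendsto_atBot_of_integrableOn (h : HasL2Deriv u v)
    (hi : IntegrableOn (fun t ↦ enorm2 (u t - p) ^ 2) (Iio T)) : Tendsto u atBot (𝓝 p) := by
  have hi' : IntegrableOn (fun t ↦ enorm2 (u (-t) - p) ^ 2) (Ioi (-T)) := by
    have := (Measure.measurePreserving_neg (volume : Measure ℝ)).integrableOn_comp_preimage
      (MeasurableEquiv.neg ℝ).measurableEmbedding (f := fun t ↦ enorm2 (u t - p) ^ 2) (s := Iio T)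
    simpa [Function.comp_def] using this.2 hi
  simpa [Function.comp_def] using
    (h.comp_neg.tendsto_atTop_of_integrableOn hi').comp tendsto_neg_atBot_atTop

end HasL2Deriv

namespace QuadraticWell

lemma mul_abs_le_energyDensity (hp : QuadraticWell W p R κ) (hc : c ^ 2 = 2 * κ)
    (hu : ‖u t - p‖ ≤ R) : c * |((u t).1 - p.1) * (v t).2| ≤ energyDensity W u v t := by
  have h := hp.le_apply (u t) hu
  simp only [energyDensity, enorm2_sq, Prod.fst_sub, Prod.snd_sub] at h ⊢
  rw [abs_mul]
  nlinarith [sq_nonneg (c * |(u t).1 - p.1| - |(v t).2|), sq_nonneg (v t).1,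
    mul_nonneg hp.rate_pos.le (sq_nonneg ((u t).2 - p.2)), sq_abs ((u t).1 - p.1),
    sq_abs (v t).2]

end QuadraticWell

lemma HasL2Deriv.integral_area_eq (h : HasL2Deriv u v) (p : ℝ × ℝ) (s t : ℝ) :
    ∫ r in s..t, (u r).1 * (v r).2 =
      (∫ r in s..t, ((u r).1 - p.1) * (v r).2) + p.1 * ((u t).2 - (u s).2) := by
  have hi : IntervalIntegrable (fun r ↦ ((u r).1 - p.1) * (v r).2) volume s t :=
    h.snd.intervalIntegrable_mul (h.fst.continuous.sub continuous_const) s t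
  rw [h.snd.sub_eq_integral, ← intervalIntegral.integral_const_mul,
    ← intervalIntegral.integral_add hi ((h.snd.intervalIntegrable s t).const_mul _)]
  simp only [sub_mul, sub_add_cancel]

namespace QuadraticWell

lemma mul_abs_area_sub_le (hp : QuadraticWell W p R κ) (hc : c ^ 2 = 2 * κ) (hc0 : 0 ≤ c)
    (hWc : Continuous W) (h : HasL2Deriv u v) (hst : s ≤ t)
    (hu : ∀ r ∈ Icc s t, ‖u r - p‖ ≤ R) :
    c * |(∫ r in s..t, (u r).1 * (v r).2) - p.1 * ((u t).2 - (u s).2)| ≤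
      ∫ r in s..t, energyDensity W u v r := by
  rw [h.integral_area_eq p, add_sub_cancel_right]
  have hi := h.snd.intervalIntegrable_mul (h.fst.continuous.sub (continuous_const (y := p.1))) s t
  calc c * |∫ r in s..t, ((u r).1 - p.1) * (v r).2|
      ≤ c * ∫ r in s..t, |((u r).1 - p.1) * (v r).2| := by
        gcongr
        exact intervalIntegral.abs_integral_le_integral_abs hst
    _ = ∫ r in s..t, c * |((u r).1 - p.1) * (v r).2| := by
        rw [intervalIntegral.integral_const_mul]
    _ ≤ ∫ r in s..t, energyDensity W u v r :=
        intervalIntegral.integral_mono_on hst (hi.abs.const_mul _)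
          (h.intervalIntegrable_energyDensity hWc s t)
          fun r hr ↦ hp.mul_abs_le_energyDensity hc (hu r hr)

lemma exists_tendsto_area (hp : QuadraticWell W p R κ) (h : HasL2Deriv u v)
    (hi : Integrable (energyDensity W u v)) (hu : ∀ t ≥ T, ‖u t - p‖ ≤ R)
    (hlim : Tendsto u atTop (𝓝 p)) :
    ∃ L, Tendsto (fun t ↦ ∫ r in (0 : ℝ)..t, (u r).1 * (v r).2) atTop (𝓝 L) := by
  have hκ := hp.rate_pos
  have hc : √(2 * κ) ^ 2 = 2 * κ := Real.sq_sqrt (by positivity)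
  have hI : IntegrableOn (fun r ↦ ((u r).1 - p.1) * (v r).2) (Ioi T) := by
    refine (hi.const_mul (√(2 * κ))⁻¹).integrableOn.mono' (((h.fst.continuous.sub
      continuous_const).aestronglyMeasurable.mul h.snd.memLp.aestronglyMeasurable).restrict) ?_
    filter_upwards [ae_restrict_mem measurableSet_Ioi] with r hr
    rw [Real.norm_eq_abs, inv_mul_eq_div, le_div_iff₀' (by positivity)]
    exact hp.mul_abs_le_energyDensity hc (hu r (le_of_lt hr))
  have hu2 : Tendsto (fun t ↦ (u t).2) atTop (𝓝 p.2) := (continuous_snd.tendsto p).comp hlim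
  refine ⟨_, (((intervalIntegral_tendsto_integral_Ioi T hI tendsto_id).add
    ((hu2.sub_const (u T).2).const_mul p.1)).const_add
      (∫ r in (0 : ℝ)..T, (u r).1 * (v r).2)).congr fun t ↦ ?_⟩
  rw [← intervalIntegral.integral_add_adjacent_intervals (h.intervalIntegrable_area 0 T)
    (h.intervalIntegrable_area T t), h.integral_area_eq p T t]
  rfl

end QuadraticWell

lemma IsConnection.exists_confined (h : IsConnection W pm pp u v) (hR : 0 < R) :
    ∃ T, Confined u pm pp R T := by
  obtain ⟨a, ha⟩ := eventually_atBot.1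
    (h.tendsto_atBot.eventually (Metric.closedBall_mem_nhds pm hR))
  obtain ⟨b, hb⟩ := eventually_atTop.1
    (h.tendsto_atTop.eventually (Metric.closedBall_mem_nhds pp hR))
  refine ⟨max 0 (max (-a) b), le_max_left _ _, fun t ht ↦ mem_closedBall_iff_norm.1 (ha t ?_),
    fun t ht ↦ mem_closedBall_iff_norm.1 (hb t ?_)⟩
  · linarith [(le_max_left (-a) b).trans (le_max_right 0 _)]
  · linarith [(le_max_right (-a) b).trans (le_max_right 0 _)]

lemma IsConnection.exists_hasArea (h : IsConnection W pm pp u v) (hm : QuadraticWell W pm R κ)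
    (hp : QuadraticWell W pp R κ) : ∃ A, HasArea u v A := by
  obtain ⟨T, hT⟩ := h.exists_confined hm.radius_pos
  obtain ⟨L, hL⟩ := hp.exists_tendsto_area h.toHasL2Deriv h.integrable_energyDensity hT.right
    h.tendsto_atTop
  have hneg : Integrable (energyDensity W (fun r ↦ u (-r)) (fun r ↦ -v (-r))) :=
    h.integrable_energyDensity.comp_neg.congr
      (Eventually.of_forall fun t ↦ (energyDensity_comp_neg t).symm)
  obtain ⟨L', hL'⟩ := hm.exists_tendsto_area h.comp_neg hneg (T := T)
    (fun t ht ↦ hT.left (-t) (by linarith)) (h.tendsto_atBot.comp tendsto_neg_atTop_atBot)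
  refine ⟨L - L', ((hL.comp tendsto_snd).sub
    ((hL'.comp tendsto_neg_atBot_atTop).comp tendsto_fst)).congr fun st ↦ ?_⟩
  have hrefl : ∫ r in (0 : ℝ)..(-st.1), (u (-r)).1 * (-v (-r)).2 =
      -∫ r in st.1..0, (u r).1 * (v r).2 := by
    simpa using intervalIntegral.integral_comp_neg (a := 0) (b := -st.1)
      fun r ↦ -((u r).1 * (v r).2)
  simp only [Function.comp_apply]
  rw [hrefl, sub_neg_eq_add, add_comm]
  exact intervalIntegral.integral_add_adjacent_intervals (h.intervalIntegrable_area st.1 0)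
    (h.intervalIntegrable_area 0 st.2)

/-- The area of the arc `u|[-S, S]`, corrected so that the remaining error is of the order of the
energy outside `[-S, S]`: on the tails `u¹` is replaced by its limit `pm¹` or `pp¹`. -/
def truncatedArea (pm pp : ℝ × ℝ) (u v : ℝ → ℝ × ℝ) (S : ℝ) : ℝ :=
  (∫ t in (-S)..S, (u t).1 * (v t).2) + pp.1 * (pp.2 - (u S).2) + pm.1 * ((u (-S)).2 - pm.2)

lemma IsConnection.mul_abs_sub_truncatedArea_le (h : IsConnection W pm pp u v)
    (hWc : Continuous W) (hW : ∀ x, 0 ≤ W x) (hm : QuadraticWell W pm R κ)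
    (hp : QuadraticWell W pp R κ) (hc : c ^ 2 = 2 * κ) (hc0 : 0 ≤ c) {S A : ℝ}
    (hu : Confined u pm pp R T) (hS : T ≤ S) (hA : HasArea u v A) :
    c * |A - truncatedArea pm pp u v S| ≤
      energy W u v - ∫ t in (-S)..S, energyDensity W u v t := by
  have hS0 := hu.nonneg.trans hS
  have hum : Tendsto (fun st : ℝ × ℝ ↦ (u st.1).2) (atBot ×ˢ atTop) (𝓝 pm.2) :=
    ((continuous_snd.tendsto pm).comp h.tendsto_atBot).comp tendsto_fst
  have hup : Tendsto (fun st : ℝ × ℝ ↦ (u st.2).2) (atBot ×ˢ atTop) (𝓝 pp.2) :=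
    ((continuous_snd.tendsto pp).comp h.tendsto_atTop).comp tendsto_snd
  have hlim : Tendsto (fun st : ℝ × ℝ ↦ c * |(∫ r in st.1..st.2, (u r).1 * (v r).2) -
      ((∫ r in (-S)..S, (u r).1 * (v r).2) + pp.1 * ((u st.2).2 - (u S).2) +
        pm.1 * ((u (-S)).2 - (u st.1).2))|) (atBot ×ˢ atTop)
      (𝓝 (c * |A - truncatedArea pm pp u v S|)) :=
    (Tendsto.sub hA ((tendsto_const_nhds.add ((hup.sub_const _).const_mul _)).add
      ((tendsto_const_nhds.sub hum).const_mul _))).abs.const_mul c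
  refine le_of_tendsto hlim ?_
  filter_upwards [(eventually_le_atBot (-S)).prod_mk (eventually_ge_atTop S)] with ⟨s, t⟩ ⟨hs, ht⟩
  dsimp only at hs ht ⊢
  have hmS := hm.mul_abs_area_sub_le hc hc0 hWc h.toHasL2Deriv hs
    fun r hr ↦ hu.left r (by linarith [hr.2])
  have hpS := hp.mul_abs_area_sub_le hc hc0 hWc h.toHasL2Deriv ht
    fun r hr ↦ hu.right r (by linarith [hr.1])
  have hE := h.integral_energyDensity_le_energy hW (by linarith : s ≤ t)
  have hdens := h.intervalIntegrable_energyDensity hWc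
  have harea := h.intervalIntegrable_area
  rw [← intervalIntegral.integral_add_adjacent_intervals (hdens s (-S)) (hdens (-S) t),
    ← intervalIntegral.integral_add_adjacent_intervals (hdens (-S) S) (hdens S t)] at hE
  rw [← intervalIntegral.integral_add_adjacent_intervals (harea s (-S)) (harea (-S) t),
    ← intervalIntegral.integral_add_adjacent_intervals (harea (-S) S) (harea S t)]
  have htri := mul_le_mul_of_nonneg_left (abs_add_le
    ((∫ r in s..(-S), (u r).1 * (v r).2) - pm.1 * ((u (-S)).2 - (u s).2))
    ((∫ r in S..t, (u r).1 * (v r).2) - pp.1 * ((u t).2 - (u S).2))) hc0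
  refine le_trans (le_of_eq ?_) (htri.trans (by linarith))
  congr 2
  ring

lemma IsConnection.tendsto_truncatedArea (h : IsConnection W pm pp u v) {A : ℝ}
    (hA : HasArea u v A) : Tendsto (truncatedArea pm pp u v) atTop (𝓝 A) := by
  have hI : Tendsto (fun S : ℝ ↦ ∫ t in (-S)..S, (u t).1 * (v t).2) atTop (𝓝 A) :=
    Tendsto.comp hA (tendsto_neg_atTop_atBot.prodMk tendsto_id)
  have hup : Tendsto (fun S ↦ (u S).2) atTop (𝓝 pp.2) :=
    (continuous_snd.tendsto pp).comp h.tendsto_atTop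
  have hum : Tendsto (fun S ↦ (u (-S)).2) atTop (𝓝 pm.2) :=
    (continuous_snd.tendsto pm).comp (h.tendsto_atBot.comp tendsto_neg_atTop_atBot)
  have hlim := (hI.add ((hup.const_sub pp.2).const_mul pp.1)).add
    ((hum.sub_const pm.2).const_mul pm.1)
  simp only [sub_self, mul_zero, add_zero] at hlim
  exact hlim

end Tails

section LimitsOfConnections

variable {W : ℝ × ℝ → ℝ} {pm pp : ℝ × ℝ} {un vn : ℕ → ℝ → ℝ × ℝ} {u v : ℝ → ℝ × ℝ}
  {R κ T B : ℝ} {b : ℕ → ℝ}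

lemma integrable_energyDensity_of_forall_integral_le (h : HasL2Deriv u v) (hWc : Continuous W)
    (hW : ∀ x, 0 ≤ W x) (hB : ∀ S ≥ 0, ∫ t in (-S)..S, energyDensity W u v t ≤ B) :
    Integrable (energyDensity W u v) := by
  refine integrable_of_intervalIntegral_norm_bounded B (l := atTop) (a := fun S : ℝ ↦ -S) (b := id)
    (fun S ↦ (h.intervalIntegrable_energyDensity hWc (-S) S).1) tendsto_neg_atTop_atBot
    tendsto_id ?_
  filter_upwards [eventually_ge_atTop 0] with S hS
  simpa only [Real.norm_of_nonneg (energyDensity_nonneg hW u v _), id] using hB S hS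

lemma isConnection_of_confined (h : HasL2Deriv u v) (hWc : Continuous W) (hW : ∀ x, 0 ≤ W x)
    (hm : QuadraticWell W pm R κ) (hp : QuadraticWell W pp R κ) (hu : Confined u pm pp R T)
    (hi : Integrable (energyDensity W u v)) : IsConnection W pm pp u v := by
  have hcont := h.continuous
  have hpot : Integrable fun t ↦ W (u t) := by
    refine hi.mono' (hWc.comp hcont).aestronglyMeasurable (Eventually.of_forall fun t ↦ ?_)
    rw [Real.norm_of_nonneg (hW _)]
    exact le_add_of_nonneg_left (by positivity)
  have hloc {q : ℝ × ℝ} (hq : QuadraticWell W q R κ) {s : Set ℝ} (hs : MeasurableSet s)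
      (hus : ∀ t ∈ s, ‖u t - q‖ ≤ R) : IntegrableOn (fun t ↦ enorm2 (u t - q) ^ 2) s := by
    refine (hpot.const_mul κ⁻¹).integrableOn.mono'
      ((continuous_enorm2.comp (hcont.sub continuous_const)).pow 2).aestronglyMeasurable ?_
    filter_upwards [ae_restrict_mem hs] with t ht
    rw [Real.norm_of_nonneg (sq_nonneg _), inv_mul_eq_div, le_div_iff₀' hq.rate_pos]
    exact hq.le_apply _ (hus t ht)
  exact ⟨h, hpot,
    h.tendsto_atBot_of_integrableOn (hloc hm measurableSet_Iio fun t ht ↦ hu.left t (le_of_lt ht)),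
    h.tendsto_atTop_of_integrableOn (hloc hp measurableSet_Ioi fun t ht ↦ hu.right t (le_of_lt ht))⟩

namespace WeakLimit

lemma confined (h : WeakLimit un vn u v) (hu : ∀ n, Confined (un n) pm pp R T) :
    Confined u pm pp R T where
  nonneg := (hu 0).nonneg
  left t ht := le_of_tendsto' ((h.tendsto t).sub_const pm).norm fun n ↦ (hu n).left t ht
  right t ht := le_of_tendsto' ((h.tendsto t).sub_const pp).norm fun n ↦ (hu n).right t ht

lemma isConnection (h : WeakLimit un vn u v) (hWc : Continuous W) (hW : ∀ x, 0 ≤ W x)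
    (hm : QuadraticWell W pm R κ) (hp : QuadraticWell W pp R κ)
    (hun : ∀ n, IsConnection W pm pp (un n) (vn n)) (hu : ∀ n, Confined (un n) pm pp R T)
    (hE : ∀ n, energy W (un n) (vn n) ≤ b n) (hb : Tendsto b atTop (𝓝 B)) :
    IsConnection W pm pp u v :=
  isConnection_of_confined h.hasL2Deriv hWc hW hm hp (h.confined hu) <|
    integrable_energyDensity_of_forall_integral_le h.hasL2Deriv hWc hW fun _ hS ↦
      h.integral_energyDensity_le hWc (neg_le_self hS) hb fun n ↦
        ((hun n).integral_energyDensity_le_energy hW (neg_le_self hS)).trans (hE n)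

lemma energy_le (h : WeakLimit un vn u v) (hWc : Continuous W) (hW : ∀ x, 0 ≤ W x)
    (hun : ∀ n, IsConnection W pm pp (un n) (vn n)) (hu : IsConnection W pm pp u v)
    (hE : ∀ n, energy W (un n) (vn n) ≤ b n) (hb : Tendsto b atTop (𝓝 B)) :
    energy W u v ≤ B := by
  refine le_of_tendsto hu.tendsto_integral_energyDensity ?_
  filter_upwards [eventually_ge_atTop 0] with S hS
  exact h.integral_energyDensity_le hWc (neg_le_self hS) hb fun n ↦
    ((hun n).integral_energyDensity_le_energy hW (neg_le_self hS)).trans (hE n)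

/-- Area can be lost in the limit only by losing a proportional amount of energy. -/
theorem mul_abs_sub_area_le (h : WeakLimit un vn u v) (hWc : Continuous W) (hW : ∀ x, 0 ≤ W x)
    (hm : QuadraticWell W pm R κ) (hp : QuadraticWell W pp R κ) {c : ℝ} (hc : c ^ 2 = 2 * κ)
    (hc0 : 0 ≤ c) (hun : ∀ n, IsConnection W pm pp (un n) (vn n))
    (hu : ∀ n, Confined (un n) pm pp R T) (hE : ∀ n, energy W (un n) (vn n) ≤ b n)
    (hb : Tendsto b atTop (𝓝 B)) {An : ℕ → ℝ} {A a : ℝ}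
    (hAn : ∀ n, HasArea (un n) (vn n) (An n)) (hA : Tendsto An atTop (𝓝 A))
    (ha : HasArea u v a) : c * |A - a| ≤ B - energy W u v := by
  have hconn := h.isConnection hWc hW hm hp hun hu hE hb
  have hS {S : ℝ} (hTS : T ≤ S) : c * |A - truncatedArea pm pp u v S| ≤
      B - ∫ t in (-S)..S, energyDensity W u v t := by
    have hSS := neg_le_self ((hu 0).nonneg.trans hTS)
    have htrunc : Tendsto (fun n ↦ truncatedArea pm pp (un n) (vn n) S) atTop
        (𝓝 (truncatedArea pm pp u v S)) :=
      ((h.tendsto_area hSS).add (((h.tendsto S).snd_nhds.const_sub pp.2).const_mul pp.1)).add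
        (((h.tendsto (-S)).snd_nhds.sub_const pm.2).const_mul pm.1)
    have := h.integral_energyDensity_le hWc hSS (hb.sub ((hA.sub htrunc).abs.const_mul c))
      fun n ↦ by linarith [hE n,
        (hun n).mul_abs_sub_truncatedArea_le hWc hW hm hp hc hc0 (hu n) hTS (hAn n)]
    linarith
  refine le_of_tendsto_of_tendsto
    (((hconn.tendsto_truncatedArea ha).const_sub A).abs.const_mul c)
    (hconn.tendsto_integral_energyDensity.const_sub B) ?_
  filter_upwards [eventually_ge_atTop T] with S hTS using hS hTS

end WeakLimit

end LimitsOfConnections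

section Variations

variable {W : ℝ × ℝ → ℝ} {pm pp : ℝ × ℝ} {u v φ ψ : ℝ → ℝ × ℝ} {un vn : ℕ → ℝ → ℝ × ℝ} {N : ℝ}

lemma intervalIntegral_eq_integral_of_forall_le_abs {f : ℝ → ℝ} (hf : ∀ t, N ≤ |t| → f t = 0)
    {s t : ℝ} (hs : s ≤ -N) (ht : N ≤ t) : ∫ x in s..t, f x = ∫ x, f x := by
  refine intervalIntegral.integral_eq_integral_of_support_subset fun x hx ↦ ?_
  have := abs_lt.1 (not_le.1 fun hN ↦ hx (hf x hN))
  exact ⟨by linarith, by linarith⟩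

lemma HasL2Deriv.areaLine_eq (h : HasL2Deriv u v) : areaLine u = ∫ t, (u t).1 * (v t).2 := by
  refine integral_congr_ae ?_
  filter_upwards [h.snd.ae_hasDerivAt] with t ht
  rw [ht.deriv]

/-- A direction of variation: a compactly supported `C¹` field along a curve. -/
structure TestField (φ : ℝ → ℝ × ℝ) : Prop where
  contDiff : ContDiff ℝ 1 φ
  hasCompactSupport : HasCompactSupport φ

/-- The first variation `∫ ⟨v, φ'⟩ + DW(u)φ` of the energy at `u` (with `u' = v`). -/
def energyVariation (W : ℝ × ℝ → ℝ) (u v φ : ℝ → ℝ × ℝ) : ℝ :=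
  ∫ t, ((v t).1 * (deriv φ t).1 + (v t).2 * (deriv φ t).2 + fderiv ℝ W (u t) (φ t))

/-- The first variation `∫ φ¹ v² + u¹ (φ²)'` of the area at `u` (with `u' = v`). -/
def areaVariation (u v φ : ℝ → ℝ × ℝ) : ℝ :=
  ∫ t, ((v t).2 * (φ t).1 + (u t).1 * (deriv φ t).2)

namespace TestField

lemma continuous (h : TestField φ) : Continuous φ := h.contDiff.continuous

lemma continuous_deriv (h : TestField φ) : Continuous (deriv φ) :=
  h.contDiff.continuous_deriv le_rfl

lemma hasL2Deriv (h : TestField φ) : HasL2Deriv φ (deriv φ) :=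
  hasL2Deriv_deriv h.contDiff h.hasCompactSupport

lemma exists_radius (h : TestField φ) :
    ∃ N, 0 ≤ N ∧ ∀ t, N ≤ |t| → φ t = 0 ∧ deriv φ t = 0 := by
  obtain ⟨N, hN⟩ := h.hasCompactSupport.isBounded.subset_closedBall 0
  refine ⟨max N 0 + 1, by positivity, fun t ht ↦ ?_⟩
  have htφ : t ∉ tsupport φ := fun hmem ↦ by
    have := mem_closedBall_zero_iff.1 (hN hmem)
    rw [Real.norm_eq_abs] at this
    linarith [le_max_left N 0]
  exact ⟨image_eq_zero_of_notMem_tsupport htφ,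
    Function.notMem_support.1 fun hmem ↦ htφ (support_deriv_subset hmem)⟩

lemma memLp_fst (h : TestField φ) : MemLp (fun t ↦ (φ t).1) 2 volume :=
  (ContinuousLinearMap.fst ℝ ℝ ℝ).comp_memLp'
    (h.continuous.memLp_of_hasCompactSupport h.hasCompactSupport)

lemma hasCompactSupport_of_forall_eq_zero (h : TestField φ) {f : ℝ → ℝ}
    (hf : ∀ t, φ t = 0 → deriv φ t = 0 → f t = 0) : HasCompactSupport f := by
  refine h.hasCompactSupport.mono' fun t ht ↦ by_contra fun htφ ↦ ht ?_
  exact hf t (image_eq_zero_of_notMem_tsupport htφ)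
    (Function.notMem_support.1 fun hmem ↦ htφ (support_deriv_subset hmem))

lemma continuous_fderiv_apply (h : TestField φ) (hW : ContDiff ℝ 1 W) :
    Continuous fun z : (ℝ × ℝ) × ℝ ↦ fderiv ℝ W z.1 (φ z.2) := by
  have := hW.continuous_fderiv one_ne_zero
  have := h.continuous
  fun_prop

lemma integrable_fderiv_apply (h : TestField φ) (hW : ContDiff ℝ 1 W) (hu : Continuous u) :
    Integrable fun t ↦ fderiv ℝ W (u t) (φ t) :=
  ((h.continuous_fderiv_apply hW).comp (hu.prodMk continuous_id)).integrable_of_hasCompactSupport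
    (h.hasCompactSupport_of_forall_eq_zero fun t ht _ ↦ by simp [ht])

lemma integrable_velocity_inner (h : TestField φ) (hu : HasL2Deriv u v) :
    Integrable fun t ↦ (v t).1 * (deriv φ t).1 + (v t).2 * (deriv φ t).2 :=
  (hu.fst.memLp.integrable_mul h.hasL2Deriv.fst.memLp).add
    (hu.snd.memLp.integrable_mul h.hasL2Deriv.snd.memLp)

lemma integrable_energyVariation (h : TestField φ) (hW : ContDiff ℝ 1 W) (hu : HasL2Deriv u v) :
    Integrable fun t ↦
      (v t).1 * (deriv φ t).1 + (v t).2 * (deriv φ t).2 + fderiv ℝ W (u t) (φ t) :=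
  (h.integrable_velocity_inner hu).add (h.integrable_fderiv_apply hW hu.continuous)

lemma integrable_mul_deriv_snd (h : TestField φ) {f : ℝ → ℝ} (hf : Continuous f) :
    Integrable fun t ↦ f t * (deriv φ t).2 :=
  (hf.mul h.continuous_deriv.snd).integrable_of_hasCompactSupport
    (h.hasCompactSupport_of_forall_eq_zero fun t _ ht ↦ by simp [ht])

lemma integrable_areaVariation (h : TestField φ) (hu : HasL2Deriv u v) :
    Integrable fun t ↦ (v t).2 * (φ t).1 + (u t).1 * (deriv φ t).2 :=
  (hu.snd.memLp.integrable_mul h.memLp_fst).add (h.integrable_mul_deriv_snd hu.fst.continuous)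

lemma add (hφ : TestField φ) (hψ : TestField ψ) : TestField fun t ↦ φ t + ψ t :=
  ⟨hφ.contDiff.add hψ.contDiff, hφ.hasCompactSupport.add hψ.hasCompactSupport⟩

lemma const_smul (h : TestField φ) (c : ℝ) : TestField fun t ↦ c • φ t :=
  ⟨h.contDiff.const_smul c, h.hasCompactSupport.comp_left (g := (c • ·)) (smul_zero c)⟩

lemma hasDerivAt (h : TestField φ) (t : ℝ) : HasDerivAt φ (deriv φ t) t :=
  (h.contDiff.differentiable one_ne_zero t).hasDerivAt

lemma areaVariation_add (hφ : TestField φ) (hψ : TestField ψ) (hu : HasL2Deriv u v) :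
    areaVariation u v (fun t ↦ φ t + ψ t) = areaVariation u v φ + areaVariation u v ψ := by
  refine Eq.trans ?_
    (integral_add (hφ.integrable_areaVariation hu) (hψ.integrable_areaVariation hu))
  refine integral_congr_ae (Eventually.of_forall fun t ↦ ?_)
  simp only [((hφ.hasDerivAt t).fun_add (hψ.hasDerivAt t)).deriv, Prod.fst_add, Prod.snd_add]
  ring

lemma areaVariation_const_smul (h : TestField φ) (u v : ℝ → ℝ × ℝ) (c : ℝ) :
    areaVariation u v (fun t ↦ c • φ t) = c * areaVariation u v φ := by
  rw [areaVariation, areaVariation, ← integral_const_mul]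
  refine integral_congr_ae (Eventually.of_forall fun t ↦ ?_)
  simp only [((h.hasDerivAt t).fun_const_smul c).deriv, Prod.smul_fst, Prod.smul_snd, smul_eq_mul]
  ring

lemma energyVariation_add (hφ : TestField φ) (hψ : TestField ψ) (hW : ContDiff ℝ 1 W)
    (hu : HasL2Deriv u v) : energyVariation W u v (fun t ↦ φ t + ψ t) =
      energyVariation W u v φ + energyVariation W u v ψ := by
  refine Eq.trans ?_
    (integral_add (hφ.integrable_energyVariation hW hu) (hψ.integrable_energyVariation hW hu))
  refine integral_congr_ae (Eventually.of_forall fun t ↦ ?_)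
  simp only [((hφ.hasDerivAt t).fun_add (hψ.hasDerivAt t)).deriv, Prod.fst_add, Prod.snd_add,
    map_add]
  ring

lemma energyVariation_const_smul (h : TestField φ) (W : ℝ × ℝ → ℝ) (u v : ℝ → ℝ × ℝ) (c : ℝ) :
    energyVariation W u v (fun t ↦ c • φ t) = c * energyVariation W u v φ := by
  rw [energyVariation, energyVariation, ← integral_const_mul]
  refine integral_congr_ae (Eventually.of_forall fun t ↦ ?_)
  simp only [((h.hasDerivAt t).fun_const_smul c).deriv, Prod.smul_fst, Prod.smul_snd, smul_eq_mul,
    map_smul]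
  ring

lemma hasArea_add_smul (h : TestField φ) (hu : HasL2Deriv u v) {a : ℝ} (ha : HasArea u v a)
    (s : ℝ) : HasArea (fun t ↦ u t + s • φ t) (fun t ↦ v t + s • deriv φ t)
      (a + (s * areaVariation u v φ + s ^ 2 * areaLine φ)) := by
  obtain ⟨N, -, hN⟩ := h.exists_radius
  refine (ha.add_const _).congr' ?_
  filter_upwards [(eventually_le_atBot (-N)).prod_mk (eventually_ge_atTop N)] with ⟨x, y⟩ ⟨hx, hy⟩
  have hvar : areaVariation u v φ = ∫ t in x..y, ((v t).2 * (φ t).1 + (u t).1 * (deriv φ t).2) :=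
    (intervalIntegral_eq_integral_of_forall_le_abs
      (fun t ht ↦ by simp [(hN t ht).1, (hN t ht).2]) hx hy).symm
  have hquad : areaLine φ = ∫ t in x..y, (φ t).1 * (deriv φ t).2 :=
    h.hasL2Deriv.areaLine_eq.trans (intervalIntegral_eq_integral_of_forall_le_abs
      (fun t ht ↦ by simp [(hN t ht).1]) hx hy).symm
  have hi₁ := (h.integrable_areaVariation hu).intervalIntegrable (a := x) (b := y)
  have hi₂ := (h.integrable_mul_deriv_snd h.continuous.fst).intervalIntegrable (a := x) (b := y)
  rw [hvar, hquad, ← intervalIntegral.integral_const_mul, ← intervalIntegral.integral_const_mul,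
    ← intervalIntegral.integral_add (hi₁.const_mul _) (hi₂.const_mul _),
    ← intervalIntegral.integral_add (hu.intervalIntegrable_area _ _)
      ((hi₁.const_mul _).add (hi₂.const_mul _))]
  refine intervalIntegral.integral_congr fun t _ ↦ ?_
  simp only [Prod.fst_add, Prod.snd_add, Prod.smul_fst, Prod.smul_snd, smul_eq_mul]
  ring

lemma isConnection_add_smul (h : TestField φ) (hWc : Continuous W) (hu : IsConnection W pm pp u v)
    (s : ℝ) : IsConnection W pm pp (fun t ↦ u t + s • φ t) (fun t ↦ v t + s • deriv φ t) := by
  obtain ⟨N, -, hN⟩ := h.exists_radius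
  have hcu := hu.continuous
  have hcφ := h.continuous
  refine ⟨hu.toHasL2Deriv.add (h.hasL2Deriv.const_smul s), ?_, hu.tendsto_atBot.congr' ?_,
    hu.tendsto_atTop.congr' ?_⟩
  · have hdiff : Integrable fun t ↦ W (u t + s • φ t) - W (u t) :=
      Continuous.integrable_of_hasCompactSupport (by fun_prop)
        (h.hasCompactSupport_of_forall_eq_zero fun t ht _ ↦ by simp [ht])
    exact (hdiff.add hu.integrable_potential).congr
      (Eventually.of_forall fun t ↦ sub_add_cancel _ _)
  · filter_upwards [eventually_le_atBot (-N)] with t ht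
    simp [(hN t (le_abs.2 (.inr (by linarith)))).1]
  · filter_upwards [eventually_ge_atTop N] with t ht
    simp [(hN t (le_abs.2 (.inl ht))).1]

lemma exists_energyDensity_add_smul_le (h : TestField φ) (hW : ContDiff ℝ 2 W) (K : ℝ) :
    ∃ C ≥ 0, ∃ s₀ > 0, ∀ u v : ℝ → ℝ × ℝ, ∀ t, (φ t ≠ 0 → ‖u t‖ ≤ K) → ∀ s, |s| ≤ s₀ →
      energyDensity W (fun t ↦ u t + s • φ t) (fun t ↦ v t + s • deriv φ t) t ≤
        energyDensity W u v t + s * ((v t).1 * (deriv φ t).1 + (v t).2 * (deriv φ t).2 +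
          fderiv ℝ W (u t) (φ t)) +
        s ^ 2 * (1 / 2 * enorm2 (deriv φ t) ^ 2 + C * ‖φ t‖ ^ 2) := by
  obtain ⟨C, hC, htaylor⟩ := exists_forall_le_taylor hW K
  obtain ⟨B, hB⟩ := h.continuous.bounded_above_of_compact_support h.hasCompactSupport
  have hB0 : 0 ≤ B := (norm_nonneg _).trans (hB 0)
  refine ⟨C, hC, 1 / (B + 1), by positivity, fun u v t hK s hs ↦ ?_⟩
  have hpot : W (u t + s • φ t) ≤
      W (u t) + s * fderiv ℝ W (u t) (φ t) + s ^ 2 * (C * ‖φ t‖ ^ 2) := by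
    by_cases ht : φ t = 0
    · simp [ht]
    · have hsmall : ‖s • φ t‖ ≤ 1 := by
        rw [le_div_iff₀ (by positivity)] at hs
        rw [norm_smul, Real.norm_eq_abs]
        nlinarith [abs_nonneg s, hB t]
      have := htaylor (u t) (s • φ t) (hK ht) hsmall
      rw [map_smul, norm_smul, mul_pow, Real.norm_eq_abs, sq_abs, smul_eq_mul] at this
      linarith
  simp only [energyDensity, enorm2_sq, Prod.fst_add, Prod.snd_add, Prod.smul_fst, Prod.smul_snd,
    smul_eq_mul]
  linarith

lemma exists_energy_add_smul_le (h : TestField φ) (hW : ContDiff ℝ 2 W) (K : ℝ) :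
    ∃ C ≥ 0, ∃ s₀ > 0, ∀ u v, IsConnection W pm pp u v → (∀ t, φ t ≠ 0 → ‖u t‖ ≤ K) →
      ∀ s, |s| ≤ s₀ → energy W (fun t ↦ u t + s • φ t) (fun t ↦ v t + s • deriv φ t) ≤
        energy W u v + s * energyVariation W u v φ + C * s ^ 2 := by
  obtain ⟨C, hC, s₀, hs₀, hle⟩ := h.exists_energyDensity_add_smul_le hW K
  have hW1 := hW.of_le one_le_two
  have hi₂ : Integrable fun t ↦ 1 / 2 * enorm2 (deriv φ t) ^ 2 + C * ‖φ t‖ ^ 2 :=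
    (h.hasL2Deriv.integrable_enorm2_sq.const_mul _).add <|
      Continuous.integrable_of_hasCompactSupport ((h.continuous.norm.pow 2).const_mul C)
        (h.hasCompactSupport_of_forall_eq_zero fun t ht _ ↦ by simp [ht])
  refine ⟨∫ t, (1 / 2 * enorm2 (deriv φ t) ^ 2 + C * ‖φ t‖ ^ 2),
    integral_nonneg fun t ↦ by positivity, s₀, hs₀, fun u v hu hK s hs ↦ ?_⟩
  have hi₀ := hu.integrable_energyDensity
  have hi₁ := h.integrable_energyVariation hW1 hu.toHasL2Deriv
  calc energy W (fun t ↦ u t + s • φ t) (fun t ↦ v t + s • deriv φ t)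
      ≤ ∫ t, (energyDensity W u v t + s * ((v t).1 * (deriv φ t).1 + (v t).2 * (deriv φ t).2 +
          fderiv ℝ W (u t) (φ t)) +
          s ^ 2 * (1 / 2 * enorm2 (deriv φ t) ^ 2 + C * ‖φ t‖ ^ 2)) :=
        integral_mono (h.isConnection_add_smul hW.continuous hu s).integrable_energyDensity
          ((hi₀.add (hi₁.const_mul s)).add (hi₂.const_mul _)) fun t ↦ hle u v t (hK t) s hs
    _ = energy W u v + s * energyVariation W u v φ +
          (∫ t, (1 / 2 * enorm2 (deriv φ t) ^ 2 + C * ‖φ t‖ ^ 2)) * s ^ 2 := by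
        rw [mul_comm _ (s ^ 2), energyVariation, ← integral_const_mul, ← integral_const_mul]
        exact (integral_add (hi₀.add (hi₁.const_mul s)) (hi₂.const_mul _)).trans
          (congrArg₂ _ (integral_add hi₀ (hi₁.const_mul s)) rfl)

end TestField

namespace WeakLimit

lemma tendsto_energyVariation (h : WeakLimit un vn u v) (hφ : TestField φ) (hW : ContDiff ℝ 1 W) :
    Tendsto (fun n ↦ energyVariation W (un n) (vn n) φ) atTop
      (𝓝 (energyVariation W u v φ)) := by
  obtain ⟨N, -, hN⟩ := hφ.exists_radius
  have hsplit {x w : ℝ → ℝ × ℝ} (hx : HasL2Deriv x w) : energyVariation W x w φ =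
      (∫ t, (w t).1 * (deriv φ t).1) + (∫ t, (w t).2 * (deriv φ t).2) +
        ∫ t in (-N)..N, fderiv ℝ W (x t) (φ t) := by
    rw [intervalIntegral_eq_integral_of_forall_le_abs (N := N)
      (fun t ht ↦ by simp [(hN t ht).1]) le_rfl le_rfl]
    exact (integral_add (hφ.integrable_velocity_inner hx)
      (hφ.integrable_fderiv_apply hW hx.continuous)).trans (congrArg (· + _)
        (integral_add (hx.fst.memLp.integrable_mul hφ.hasL2Deriv.fst.memLp)
          (hx.snd.memLp.integrable_mul hφ.hasL2Deriv.snd.memLp)))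
  simp only [hsplit h.hasL2Deriv, hsplit (h.hasL2Deriv_seq _)]
  exact ((h.weak_fst _ hφ.hasL2Deriv.fst.memLp).add (h.weak_snd _ hφ.hasL2Deriv.snd.memLp)).add
    (h.tendsto_intervalIntegral (hφ.continuous_fderiv_apply hW) (-N) N)

lemma tendsto_areaVariation (h : WeakLimit un vn u v) (hφ : TestField φ) :
    Tendsto (fun n ↦ areaVariation (un n) (vn n) φ) atTop (𝓝 (areaVariation u v φ)) := by
  obtain ⟨N, -, hN⟩ := hφ.exists_radius
  have hsplit {x w : ℝ → ℝ × ℝ} (hx : HasL2Deriv x w) : areaVariation x w φ =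
      (∫ t, (w t).2 * (φ t).1) + ∫ t in (-N)..N, (x t).1 * (deriv φ t).2 := by
    rw [intervalIntegral_eq_integral_of_forall_le_abs (N := N)
      (fun t ht ↦ by simp [(hN t ht).2]) le_rfl le_rfl]
    exact integral_add (hx.snd.memLp.integrable_mul hφ.memLp_fst)
      (hφ.integrable_mul_deriv_snd hx.fst.continuous)
  simp only [hsplit h.hasL2Deriv, hsplit (h.hasL2Deriv_seq _)]
  have hΦ : Continuous fun z : (ℝ × ℝ) × ℝ ↦ z.1.1 * (deriv φ z.2).2 := by
    have := hφ.continuous_deriv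
    fun_prop
  exact (h.weak_snd _ hφ.memLp_fst).add (h.tendsto_intervalIntegral hΦ (-N) N)

end WeakLimit

end Variations

section DuBoisReymond

variable {f G : ℝ → ℝ}

lemma exists_contDiff_deriv_eq {ψ : ℝ → ℝ} (hψ : Continuous ψ) (hc : HasCompactSupport ψ)
    (h0 : ∫ t, ψ t = 0) :
    ∃ Ψ : ℝ → ℝ, ContDiff ℝ 1 Ψ ∧ HasCompactSupport Ψ ∧ deriv Ψ = ψ := by
  obtain ⟨N, hN⟩ := hc.isBounded.subset_closedBall 0
  have hz (t : ℝ) (ht : N + 1 ≤ |t|) : ψ t = 0 := image_eq_zero_of_notMem_tsupport fun hmem ↦ by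
    have := mem_closedBall_zero_iff.1 (hN hmem)
    rw [Real.norm_eq_abs] at this
    linarith
  have hd (t : ℝ) : HasDerivAt (fun t ↦ ∫ x in (-(N + 1))..t, ψ x) (ψ t) t :=
    hψ.integral_hasStrictDerivAt _ t |>.hasDerivAt
  have hd' : deriv (fun t ↦ ∫ x in (-(N + 1))..t, ψ x) = ψ := funext fun t ↦ (hd t).deriv
  refine ⟨_, ?_, ?_, hd'⟩
  · rw [contDiff_one_iff_deriv, hd']
    exact ⟨fun t ↦ (hd t).differentiableAt, hψ⟩
  · refine HasCompactSupport.intro (isCompact_Icc (a := -(N + 1)) (b := N + 1)) fun t ht ↦ ?_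
    rcases le_or_gt t (-(N + 1)) with hle | hlt
    · rw [intervalIntegral.integral_symm, intervalIntegral.integral_of_le hle,
        setIntegral_eq_zero_of_forall_eq_zero, neg_zero]
      exact fun x hx ↦ hz x (le_abs.2 (.inr (by linarith [hx.2])))
    · have hNt : N + 1 < t := not_le.1 fun htN ↦ ht ⟨hlt.le, htN⟩
      rw [intervalIntegral_eq_integral_of_forall_le_abs hz le_rfl hNt.le, h0]

lemma integrable_mul_of_hasCompactSupport (hf : LocallyIntegrable f volume) {ψ : ℝ → ℝ}
    (hψ : Continuous ψ) (hc : HasCompactSupport ψ) : Integrable fun t ↦ f t * ψ t := by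
  simpa only [smul_eq_mul, mul_comm] using hf.integrable_smul_left_of_hasCompactSupport hψ hc

lemma ae_eq_const_of_integral_mul_deriv_eq_zero (hf : LocallyIntegrable f volume)
    (h : ∀ ψ : ℝ → ℝ, ContDiff ℝ 1 ψ → HasCompactSupport ψ → ∫ t, f t * deriv ψ t = 0) :
    ∃ c, ∀ᵐ t, f t = c := by
  let χ : ContDiffBump (0 : ℝ) := ⟨1, 2, one_pos, one_lt_two⟩
  let ρ : ℝ → ℝ := χ.normed volume
  have hρ : Continuous ρ := χ.continuous_normed
  have hρc : HasCompactSupport ρ := χ.hasCompactSupport_normed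
  have hρi : Integrable ρ := hρ.integrable_of_hasCompactSupport hρc
  have hfρ := integrable_mul_of_hasCompactSupport hf hρ hρc
  refine ⟨∫ t, f t * ρ t, ?_⟩
  have hae := ae_eq_zero_of_integral_contDiff_smul_eq_zero
    (hf.sub (locallyIntegrable_const (∫ t, f t * ρ t))) fun ψ hψ hψc ↦ ?_
  · filter_upwards [hae] with t ht using sub_eq_zero.1 ht
  have hψi : Integrable ψ := hψ.continuous.integrable_of_hasCompactSupport hψc
  have hfψ := integrable_mul_of_hasCompactSupport hf hψ.continuous hψc
  obtain ⟨Ψ, hΨ, hΨc, hΨd⟩ := exists_contDiff_deriv_eq (ψ := fun t ↦ ψ t - (∫ t, ψ t) * ρ t)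
    (hψ.continuous.sub (continuous_const.mul hρ)) (hψc.sub hρc.mul_left) (by
      rw [integral_sub hψi (hρi.const_mul _), integral_const_mul, χ.integral_normed, mul_one,
        sub_self])
  calc ∫ t, ψ t • (f t - ∫ t, f t * ρ t)
      = (∫ t, f t * ψ t) - (∫ t, f t * ρ t) * ∫ t, ψ t := by
        rw [← integral_const_mul, ← integral_sub hfψ (hψi.const_mul _)]
        congr with t
        rw [smul_eq_mul]
        ring
    _ = ∫ t, f t * deriv Ψ t := by
        rw [hΨd, mul_comm, ← integral_const_mul, ← integral_sub hfψ (hfρ.const_mul _)]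
        congr with t
        ring
    _ = 0 := h Ψ hΨ hΨc

theorem ae_eq_add_integral_of_integral_mul_deriv_add_eq_zero (hf : LocallyIntegrable f volume)
    (hG : Continuous G) (h : ∀ ψ : ℝ → ℝ, ContDiff ℝ 1 ψ → HasCompactSupport ψ →
      ∫ t, (f t * deriv ψ t + G t * ψ t) = 0) :
    ∃ c, ∀ᵐ t, f t = c + ∫ x in (0 : ℝ)..t, G x := by
  let P : ℝ → ℝ := fun t ↦ ∫ x in (0 : ℝ)..t, G x
  have hPd (t : ℝ) : HasDerivAt P (G t) t := (hG.integral_hasStrictDerivAt 0 t).hasDerivAt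
  have hP : Continuous P := continuous_iff_continuousAt.2 fun t ↦ (hPd t).continuousAt
  suffices hz : ∀ ψ, ContDiff ℝ 1 ψ → HasCompactSupport ψ →
      ∫ t, (f t - P t) * deriv ψ t = 0 by
    obtain ⟨c, hc⟩ := ae_eq_const_of_integral_mul_deriv_eq_zero (hf.sub hP.locallyIntegrable) hz
    exact ⟨c, hc.mono fun t ht ↦ sub_eq_iff_eq_add.1 ht⟩
  intro ψ hψ hψc
  have hψd := hψ.continuous_deriv le_rfl
  have hfψ := integrable_mul_of_hasCompactSupport hf hψd hψc.deriv
  have hPψ : Integrable fun t ↦ P t * deriv ψ t :=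
    (hP.mul hψd).integrable_of_hasCompactSupport hψc.deriv.mul_left
  have hGψ : Integrable fun t ↦ G t * ψ t :=
    (hG.mul hψ.continuous).integrable_of_hasCompactSupport hψc.mul_left
  have hparts : ∫ t, (G t * ψ t + P t * deriv ψ t) = 0 :=
    integral_eq_zero_of_hasDerivAt_of_integrable
      (fun t ↦ (hPd t).mul (hψ.differentiable one_ne_zero t).hasDerivAt) (hGψ.add hPψ)
      ((hP.mul hψ.continuous).integrable_of_hasCompactSupport hψc.mul_left)
  calc ∫ t, (f t - P t) * deriv ψ t
      = ∫ t, ((f t * deriv ψ t + G t * ψ t) - (G t * ψ t + P t * deriv ψ t)) := by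
        congr with t
        ring
    _ = (∫ t, (f t * deriv ψ t + G t * ψ t)) - ∫ t, (G t * ψ t + P t * deriv ψ t) :=
        integral_sub (hfψ.add hGψ) (hGψ.add hPψ)
    _ = 0 := by rw [h ψ hψ hψc, hparts, sub_zero]

end DuBoisReymond

section AreaVariation

variable {W : ℝ × ℝ → ℝ} {pm pp : ℝ × ℝ} {u v : ℝ → ℝ × ℝ} {ψ : ℝ → ℝ}

lemma testField_fst (hψ : ContDiff ℝ 1 ψ) (hc : HasCompactSupport ψ) :
    TestField fun t ↦ (ψ t, 0) :=
  ⟨hψ.prodMk contDiff_const, hc.comp_left (g := fun x ↦ ((x, 0) : ℝ × ℝ)) rfl⟩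

lemma testField_snd (hψ : ContDiff ℝ 1 ψ) (hc : HasCompactSupport ψ) :
    TestField fun t ↦ (0, ψ t) :=
  ⟨contDiff_const.prodMk hψ, hc.comp_left (g := fun x ↦ ((0, x) : ℝ × ℝ)) rfl⟩

lemma deriv_prodMk_zero (hψ : ContDiff ℝ 1 ψ) (t : ℝ) :
    deriv (fun t ↦ ((ψ t, 0) : ℝ × ℝ)) t = (deriv ψ t, 0) :=
  ((hψ.differentiable one_ne_zero t).hasDerivAt.prodMk (hasDerivAt_const t 0)).deriv

lemma deriv_zero_prodMk (hψ : ContDiff ℝ 1 ψ) (t : ℝ) :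
    deriv (fun t ↦ ((0, ψ t) : ℝ × ℝ)) t = (0, deriv ψ t) :=
  ((hasDerivAt_const t 0).prodMk (hψ.differentiable one_ne_zero t).hasDerivAt).deriv

lemma HasL2Deriv.exists_eq_const_of_areaVariation_eq_zero (h : HasL2Deriv u v)
    (hz : ∀ φ, TestField φ → areaVariation u v φ = 0) : ∃ q, u = fun _ ↦ q := by
  have hv : ∀ᵐ t, (v t).2 = 0 := by
    refine ae_eq_zero_of_integral_contDiff_smul_eq_zero
      (h.snd.memLp.locallyIntegrable (by norm_num)) fun ψ hψ hψc ↦ ?_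
    have hψ1 : ContDiff ℝ 1 ψ := hψ.of_le (by norm_cast)
    simpa [areaVariation, deriv_prodMk_zero hψ1, mul_comm] using hz _ (testField_fst hψ1 hψc)
  obtain ⟨c, hc⟩ := ae_eq_const_of_integral_mul_deriv_eq_zero h.fst.continuous.locallyIntegrable
    fun ψ hψ hψc ↦ by
      simpa [areaVariation, deriv_zero_prodMk hψ] using hz _ (testField_snd hψ hψc)
  have hfst : (fun t ↦ (u t).1) = fun _ ↦ c :=
    (h.fst.continuous.ae_eq_iff_eq volume continuous_const).1 hc
  have hsnd (t : ℝ) : (u t).2 = (u 0).2 := by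
    rw [← sub_eq_zero, h.snd.sub_eq_integral]
    exact intervalIntegral.integral_zero_ae (hv.mono fun t ht _ ↦ ht)
  exact ⟨(c, (u 0).2), funext fun t ↦ Prod.ext (congrFun hfst t) (hsnd t)⟩

lemma IsConnection.exists_areaVariation_eq_one (h : IsConnection W pm pp u v) (hne : pm ≠ pp) :
    ∃ φ, TestField φ ∧ areaVariation u v φ = 1 := by
  by_contra! hcon
  obtain ⟨q, rfl⟩ := h.exists_eq_const_of_areaVariation_eq_zero fun φ hφ ↦ by
    by_contra hφ0
    refine hcon _ (hφ.const_smul (areaVariation u v φ)⁻¹) ?_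
    rw [hφ.areaVariation_const_smul, inv_mul_cancel₀ hφ0]
  exact hne ((tendsto_nhds_unique h.tendsto_atBot tendsto_const_nhds).trans
    (tendsto_nhds_unique h.tendsto_atTop tendsto_const_nhds).symm)

end AreaVariation

section Minimizers

variable {W : ℝ × ℝ → ℝ} {pm pp : ℝ × ℝ} {u v φ : ℝ → ℝ × ℝ} {e C R κ c E δ₀ A A₀ : ℝ}

lemma exists_abs_le_mul_add_sq_mul_eq {d q δ : ℝ} (hd : 1 / 2 ≤ d) (hq : 16 * |δ| * |q| ≤ 1) :
    ∃ s, |s| ≤ 4 * |δ| ∧ s * d + s ^ 2 * q = δ := by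
  have hδ := abs_nonneg δ
  have hsq : 16 * |δ| ^ 2 * |q| ≤ |δ| := by nlinarith
  have hleft : -(4 * |δ|) * d + (-(4 * |δ|)) ^ 2 * q ≤ δ := by
    nlinarith [neg_abs_le δ, mul_le_mul_of_nonneg_left (le_abs_self q) (sq_nonneg |δ|)]
  have hright : δ ≤ 4 * |δ| * d + (4 * |δ|) ^ 2 * q := by
    nlinarith [le_abs_self δ, mul_le_mul_of_nonneg_left (neg_abs_le q) (sq_nonneg |δ|)]
  obtain ⟨s, hs, hsδ⟩ := intermediate_value_Icc (neg_le_self (by positivity))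
    (f := fun s : ℝ ↦ s * d + s ^ 2 * q) (by fun_prop) ⟨hleft, hright⟩
  exact ⟨s, abs_le.2 hs, hsδ⟩

lemma neg_le_of_forall_mul_add_nonneg {s₀ x k C : ℝ} (hs₀ : 0 < s₀)
    (h : ∀ s, 0 < s → s ≤ s₀ → 0 ≤ s * x + k * s + C * s ^ 2) : -k ≤ x := by
  have hlim : Tendsto (fun s : ℝ ↦ x + k + C * s) (𝓝[>] 0) (𝓝 (x + k)) :=
    (Continuous.tendsto' (by fun_prop) 0 _ (by simp)).mono_left nhdsWithin_le_nhds
  have hnonneg : 0 ≤ x + k := by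
    refine ge_of_tendsto hlim ?_
    filter_upwards [Ioc_mem_nhdsGT hs₀] with s hs
    refine nonneg_of_mul_nonneg_right (a := s) ?_ hs.1
    linarith [h s hs.1 hs.2]
  linarith

lemma abs_le_of_forall_mul_add_nonneg {s₀ x k C : ℝ} (hs₀ : 0 < s₀)
    (h : ∀ s, |s| ≤ s₀ → 0 ≤ s * x + k * |s| + C * s ^ 2) : |x| ≤ k := by
  refine abs_le.2 ⟨neg_le_of_forall_mul_add_nonneg (C := C) hs₀ fun s hs hss ↦ ?_,
    neg_le_neg_iff.1 (neg_le_of_forall_mul_add_nonneg (C := C) hs₀ fun s hs hss ↦ ?_)⟩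
  · simpa [abs_of_pos hs] using h s (by rwa [abs_of_pos hs])
  · simpa [abs_of_pos hs] using h (-s) (by rwa [abs_neg, abs_of_pos hs])

lemma one_div_succ_le_one (n : ℕ) : 1 / ((n : ℝ) + 1) ≤ 1 :=
  div_le_one_of_le₀ (by linarith [n.cast_nonneg (α := ℝ)]) (by positivity)

lemma IsConnection.integral_enorm2_sq_le (h : IsConnection W pm pp u v) (hW : ∀ p, 0 ≤ W p) :
    ∫ t, enorm2 (v t) ^ 2 ≤ 2 * energy W u v := by
  rw [energy, ← integral_const_mul]
  refine integral_mono h.integrable_enorm2_sq (h.integrable_energyDensity.const_mul 2) fun t ↦ ?_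
  simp only [energyDensity]
  linarith [hW (u t)]

theorem exists_confined_weakLimit (hT : TwoWell W pm pp) (hL : EnergyLowerBound W pm pp e C)
    (hm : QuadraticWell W pm R κ) (hp : QuadraticWell W pp R κ) :
    ∃ η > 0, ∃ T, ∀ un vn : ℕ → ℝ → ℝ × ℝ, (∀ n, IsConnection W pm pp (un n) (vn n)) →
      (∀ n, energy W (un n) (vn n) ≤ e + η) →
      ∃ τ : ℕ → ℝ, ∃ φ : ℕ → ℕ, StrictMono φ ∧
        (∀ n, Confined (fun t ↦ un (φ n) (t + τ n)) pm pp R T) ∧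
        ∃ u v, WeakLimit (fun n t ↦ un (φ n) (t + τ n)) (fun n t ↦ vn (φ n) (t + τ n)) u v := by
  obtain ⟨η, hη, T, hconf⟩ := exists_confined hT hL hm hp
  refine ⟨η, hη, T, fun un vn hun hE ↦ ?_⟩
  choose τ hτ using fun n ↦ hconf _ _ (hun n) (hE n)
  have htrans n := (hun n).comp_add_right (τ n)
  have henergy (n : ℕ) : ∫ t, enorm2 (vn n (t + τ n)) ^ 2 ≤ 2 * (e + η) := by
    refine ((htrans n).integral_enorm2_sq_le hT.nonneg).trans ?_
    rw [energy_comp_add_right]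
    exact mul_le_mul_of_nonneg_left (hE n) zero_le_two
  have hbound (n : ℕ) : ‖un n (T + τ n)‖ ≤ R + ‖pp‖ :=
    (norm_le_norm_sub_add _ pp).trans (by gcongr; exact (hτ n).right T le_rfl)
  obtain ⟨φ, hφ, u, v, hlim⟩ := exists_subseq_weakLimit (t₀ := T)
    (un := fun n t ↦ un n (t + τ n)) (fun n ↦ (htrans n).toHasL2Deriv) henergy hbound
  exact ⟨τ ∘ φ, φ, hφ, fun n ↦ hτ (φ n), u, v, hlim⟩

/-- The area of `(u, v)` can be changed by any amount `δ` with `|δ| ≤ δ₀`, staying among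
connections, at an energy cost of at most `c * |δ|`. -/
def AreaAdjustable (W : ℝ × ℝ → ℝ) (pm pp : ℝ × ℝ) (u v : ℝ → ℝ × ℝ) (c δ₀ : ℝ) : Prop :=
  ∀ a, HasArea u v a → ∀ δ, |δ| ≤ δ₀ → ∃ u' v', IsConnection W pm pp u' v' ∧
    HasArea u' v' (a + δ) ∧ energy W u' v' ≤ energy W u v + c * |δ|

lemma AreaAdjustable.of_comp_add_right {τ : ℝ}
    (h : AreaAdjustable W pm pp (fun t ↦ u (t + τ)) (fun t ↦ v (t + τ)) c δ₀) :
    AreaAdjustable W pm pp u v c δ₀ := fun a ha δ hδ ↦ by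
  simpa only [energy_comp_add_right] using h a (ha.comp_add_right τ) δ hδ

/- Moving along `s • φ` changes the area by `s * d + s ^ 2 * q` with `d ≥ 1 / 2`, so `|s| ≤ 4 * |δ|`
suffices, while the energy changes to first order by at most `|s| * (c / 8)`. -/
lemma TestField.exists_areaAdjustable (hφ : TestField φ) (hW : ContDiff ℝ 2 W) (hc : 0 < c)
    (K : ℝ) :
    ∃ δ₀ > 0, ∀ u v, IsConnection W pm pp u v → (∀ t, φ t ≠ 0 → ‖u t‖ ≤ K) →
      1 / 2 ≤ areaVariation u v φ → |energyVariation W u v φ| ≤ c / 8 →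
      AreaAdjustable W pm pp u v c δ₀ := by
  obtain ⟨C, hC, s₀, hs₀, hle⟩ := hφ.exists_energy_add_smul_le (pm := pm) (pp := pp) hW K
  obtain ⟨δ₁, hδ₁, hs₁, hq₁⟩ := exists_pos_le_mul_le (16 * |areaLine φ|)
    (show 0 < s₀ / 4 by positivity) one_pos
  obtain ⟨δ₀, hδ₀, hδ₁₀, hC₀⟩ := exists_pos_le_mul_le (32 * C) hδ₁ hc
  refine ⟨δ₀, hδ₀, fun u v hu hK hd hdE a ha δ hδ ↦ ?_⟩
  have hq : 16 * |δ| * |areaLine φ| ≤ 1 := by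
    calc 16 * |δ| * |areaLine φ| = 16 * |areaLine φ| * |δ| := by ring
      _ ≤ 16 * |areaLine φ| * δ₁ := by gcongr; exact hδ.trans hδ₁₀
      _ ≤ 1 := hq₁
  obtain ⟨s, hs, hsδ⟩ := exists_abs_le_mul_add_sq_mul_eq hd hq
  refine ⟨_, _, hφ.isConnection_add_smul hW.continuous hu s,
    hsδ ▸ hφ.hasArea_add_smul hu.toHasL2Deriv ha s,
    (hle u v hu hK s (by linarith)).trans ?_⟩
  have hfirst : s * energyVariation W u v φ ≤ c / 2 * |δ| :=
    calc s * energyVariation W u v φ ≤ |s| * |energyVariation W u v φ| :=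
          (le_abs_self _).trans (abs_mul _ _).le
      _ ≤ 4 * |δ| * (c / 8) := by gcongr
      _ = c / 2 * |δ| := by ring
  have hsecond : C * s ^ 2 ≤ c / 2 * |δ| :=
    calc C * s ^ 2 ≤ C * (4 * |δ|) ^ 2 := by
          rw [← sq_abs s]
          gcongr
      _ = 32 * C * |δ| / 2 * |δ| := by ring
      _ ≤ c / 2 * |δ| := by
          gcongr
          exact (mul_le_mul_of_nonneg_left hδ (by positivity)).trans hC₀
  linarith

lemma TestField.exists_forall_norm_le (hφ : TestField φ) (hu : Continuous u) :
    ∃ K, ∀ t, φ t ≠ 0 → ‖u t‖ ≤ K := by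
  obtain ⟨K, hK⟩ := IsCompact.exists_bound_of_continuousOn hφ.hasCompactSupport hu.continuousOn
  exact ⟨K, fun t ht ↦ hK t (subset_tsupport φ ht)⟩

lemma IsConnection.energyVariation_eq_zero (h : IsConnection W pm pp u v)
    (hT : TwoWell W pm pp) (hL : EnergyLowerBound W pm pp e C) (he : energy W u v ≤ e)
    (hφ : TestField φ) : energyVariation W u v φ = 0 := by
  obtain ⟨K, hK⟩ := hφ.exists_forall_norm_le h.continuous
  obtain ⟨C', -, s₀, hs₀, hle⟩ :=
    hφ.exists_energy_add_smul_le (pm := pm) (pp := pp) hT.contDiff_two K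
  refine abs_nonpos_iff.1 (abs_le_of_forall_mul_add_nonneg (C := C') hs₀ fun s hs ↦ ?_)
  have hlower := (hφ.isConnection_add_smul hT.contDiff_two.continuous h s).le_energy hT.nonneg hL
  linarith [hle u v h hK s hs]

lemma WeakLimit.eventually_areaAdjustable {un vn : ℕ → ℝ → ℝ × ℝ} (h : WeakLimit un vn u v)
    (hW : ContDiff ℝ 2 W) (hφ : TestField φ) (hun : ∀ n, IsConnection W pm pp (un n) (vn n))
    (hA : areaVariation u v φ = 1) (hE : energyVariation W u v φ = 0) (hc : 0 < c) :
    ∃ δ₀ > 0, ∀ᶠ n in atTop, AreaAdjustable W pm pp (un n) (vn n) c δ₀ := by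
  obtain ⟨N, -, hN⟩ := hφ.exists_radius
  obtain ⟨K, hK, -⟩ := h.exists_forall_norm_le N
  obtain ⟨δ₀, hδ₀, hadj⟩ := hφ.exists_areaAdjustable (pm := pm) (pp := pp) hW hc K
  have htendsA := h.tendsto_areaVariation hφ
  have htendsE := (h.tendsto_energyVariation hφ (hW.of_le one_le_two)).abs
  rw [hA] at htendsA
  rw [hE, abs_zero] at htendsE
  refine ⟨δ₀, hδ₀, ?_⟩
  filter_upwards [htendsA.eventually_const_le (by norm_num : (1 / 2 : ℝ) < 1),
    htendsE.eventually_le_const (by positivity : 0 < c / 8)] with n hAn hEn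
  exact hadj _ _ (hun n) (fun t ht ↦ hK n t (not_lt.1 fun hlt ↦ ht (hN t hlt.le).1)) hAn hEn

/- Otherwise a sequence of counterexamples with energies tending to `e` converges, after
translations, to an energy minimizer. There the energy is stationary but the area is not. -/
theorem exists_areaAdjustable (hT : TwoWell W pm pp) (hL : EnergyLowerBound W pm pp e C)
    (hm : QuadraticWell W pm R κ) (hp : QuadraticWell W pp R κ) (hc : 0 < c) :
    ∃ η > 0, ∃ δ₀ > 0, ∀ u v, IsConnection W pm pp u v → energy W u v ≤ e + η →
      AreaAdjustable W pm pp u v c δ₀ := by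
  have hWc := hT.smooth.continuous
  obtain ⟨η, hη, T, hcompact⟩ := exists_confined_weakLimit hT hL hm hp
  by_contra! hcon
  have hpos (n : ℕ) : (0 : ℝ) < 1 / (n + 1) := by positivity
  choose un vn hun hE hbad using fun n : ℕ ↦
    hcon (η * (1 / (n + 1))) (mul_pos hη (hpos n)) (1 / (n + 1)) (hpos n)
  obtain ⟨τ, φ, hφ, hconf, u, v, hlim⟩ := hcompact un vn hun fun n ↦ (hE n).trans <| by
    gcongr
    exact mul_le_of_le_one_right hη.le (one_div_succ_le_one n)
  have hzero : Tendsto (fun n ↦ 1 / ((φ n : ℝ) + 1)) atTop (𝓝 0) :=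
    tendsto_one_div_add_atTop_nhds_zero_nat.comp hφ.tendsto_atTop
  have hb : Tendsto (fun n ↦ e + η * (1 / ((φ n : ℝ) + 1))) atTop (𝓝 e) := by
    simpa using (hzero.const_mul η).const_add e
  have htrans n := (hun (φ n)).comp_add_right (τ n)
  have hEφ (n : ℕ) : energy W (fun t ↦ un (φ n) (t + τ n)) (fun t ↦ vn (φ n) (t + τ n)) ≤
      e + η * (1 / ((φ n : ℝ) + 1)) := (energy_comp_add_right _).trans_le (hE (φ n))
  have hu := hlim.isConnection hWc hT.nonneg hm hp htrans hconf hEφ hb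
  have hue := hlim.energy_le hWc hT.nonneg htrans hu hEφ hb
  obtain ⟨ψ, hψ, hψA⟩ := hu.exists_areaVariation_eq_one hT.wells_ne
  obtain ⟨δ₀, hδ₀, hadj⟩ := hlim.eventually_areaAdjustable hT.contDiff_two hψ htrans hψA
    (hu.energyVariation_eq_zero hT hL hue hψ) hc
  obtain ⟨n, hn, hδn⟩ := (hadj.and (hzero.eventually_le_const hδ₀)).exists
  exact hbad (φ n) fun a ha δ hδ ↦ hn.of_comp_add_right a ha δ (hδ.trans hδn)

/-- Connections of energy arbitrarily close to `e` and area arbitrarily close to `A₀` exist. -/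
def NearOptimalAt (W : ℝ × ℝ → ℝ) (pm pp : ℝ × ℝ) (e A₀ : ℝ) : Prop :=
  ∀ ε > 0, ∃ u v a, IsConnection W pm pp u v ∧ HasArea u v a ∧ energy W u v ≤ e + ε ∧
    |a - A₀| ≤ ε

lemma NearOptimalAt.exists_energy_le {η ε : ℝ} (h : NearOptimalAt W pm pp e A₀)
    (hadj : ∀ u v, IsConnection W pm pp u v → energy W u v ≤ e + η →
      AreaAdjustable W pm pp u v c δ₀)
    (hη : 0 < η) (hc : 0 ≤ c) (hA : |A - A₀| < δ₀) (hε : 0 < ε) :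
    ∃ u v, IsConnection W pm pp u v ∧ HasArea u v A ∧ energy W u v ≤ e + c * |A - A₀| + ε := by
  obtain ⟨r, hr, hrle, hrε⟩ := exists_pos_le_mul_le (1 + c) (lt_min hη (sub_pos.2 hA)) hε
  obtain ⟨u, v, a, hu, ha, hE, haA⟩ := h r hr
  have hAa : |A - a| ≤ |A - A₀| + r := by
    rw [abs_sub_comm a] at haA
    exact (abs_sub_le A A₀ a).trans (by gcongr)
  have hη' := hrle.trans (min_le_left _ _)
  have hδ' := hrle.trans (min_le_right _ _)
  obtain ⟨u', v', hu', ha', hE'⟩ := hadj u v hu (by linarith) a ha (A - a) (by linarith)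
  rw [add_sub_cancel] at ha'
  refine ⟨u', v', hu', ha', ?_⟩
  have : c * |A - a| ≤ c * (|A - A₀| + r) := by gcongr
  linarith

/-- The infimum of the energy over the connections of area `A` (`0` if there are none). -/
def minEnergy (W : ℝ × ℝ → ℝ) (pm pp : ℝ × ℝ) (A : ℝ) : ℝ :=
  sInf {x | ∃ u v, IsConnection W pm pp u v ∧ HasArea u v A ∧ energy W u v = x}

lemma energy_nonneg (hW : ∀ p, 0 ≤ W p) (u v : ℝ → ℝ × ℝ) : 0 ≤ energy W u v :=
  integral_nonneg fun t ↦ energyDensity_nonneg hW u v t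

lemma IsConnection.minEnergy_le (h : IsConnection W pm pp u v) (hW : ∀ p, 0 ≤ W p)
    (hA : HasArea u v A) : minEnergy W pm pp A ≤ energy W u v :=
  csInf_le ⟨0, by rintro _ ⟨u, v, -, -, rfl⟩; exact energy_nonneg hW u v⟩ ⟨u, v, h, hA, rfl⟩

lemma IsConnection.exists_energy_lt (h : IsConnection W pm pp u v) (hA : HasArea u v A) {ε : ℝ}
    (hε : 0 < ε) : ∃ u' v', IsConnection W pm pp u' v' ∧ HasArea u' v' A ∧
      energy W u' v' < minEnergy W pm pp A + ε := by
  have hne : {x | ∃ u v, IsConnection W pm pp u v ∧ HasArea u v A ∧ energy W u v = x}.Nonempty :=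
    ⟨_, u, v, h, hA, rfl⟩
  obtain ⟨_, ⟨u', v', hu', hA', rfl⟩, hlt⟩ :=
    exists_lt_of_csInf_lt hne (lt_add_of_pos_right (minEnergy W pm pp A) hε)
  exact ⟨u', v', hu', hA', hlt⟩

/-- `(u, v)` minimizes the energy among the connections of area `A`. -/
structure IsAreaMinimizer (W : ℝ × ℝ → ℝ) (pm pp : ℝ × ℝ) (A : ℝ) (u v : ℝ → ℝ × ℝ) : Prop
    extends IsConnection W pm pp u v where
  hasArea : HasArea u v A
  energy_le : ∀ u' v', IsConnection W pm pp u' v' → HasArea u' v' A →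
    energy W u v ≤ energy W u' v'

/- An area defect `|A - a|` of the limit would save energy at rate `c`, but it can be made up for at
rate `c / 2`. -/
lemma WeakLimit.isAreaMinimizer {un vn : ℕ → ℝ → ℝ × ℝ} {T : ℝ} {b : ℕ → ℝ}
    (h : WeakLimit un vn u v)
    (hT : TwoWell W pm pp) (hL : EnergyLowerBound W pm pp e C) (hm : QuadraticWell W pm R κ)
    (hp : QuadraticWell W pp R κ) (hc : c ^ 2 = 2 * κ) (hc0 : 0 < c)
    (hun : ∀ n, IsConnection W pm pp (un n) (vn n)) (hu : ∀ n, Confined (un n) pm pp R T)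
    (hA : ∀ n, HasArea (un n) (vn n) A) (hE : ∀ n, energy W (un n) (vn n) ≤ b n)
    (hb : Tendsto b atTop (𝓝 (minEnergy W pm pp A)))
    (hadj : ∀ u v, IsConnection W pm pp u v → energy W u v ≤ E →
      AreaAdjustable W pm pp u v (c / 2) δ₀)
    (hminE : minEnergy W pm pp A ≤ E) (hδ₀ : minEnergy W pm pp A ≤ e + c * δ₀) :
    IsAreaMinimizer W pm pp A u v := by
  have hWc := hT.smooth.continuous
  have hconn := h.isConnection hWc hT.nonneg hm hp hun hu hE hb
  have hle := h.energy_le hWc hT.nonneg hun hconn hE hb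
  obtain ⟨a, ha⟩ := hconn.exists_hasArea hm hp
  have hdefect := h.mul_abs_sub_area_le hWc hT.nonneg hm hp hc hc0.le hun hu hE hb hA
    tendsto_const_nhds ha
  have hAa : |A - a| ≤ δ₀ := by
    refine le_of_mul_le_mul_left ?_ hc0
    linarith [hconn.le_energy hT.nonneg hL]
  obtain ⟨u', v', hu', ha', hE'⟩ := hadj u v hconn (hle.trans hminE) a ha (A - a) hAa
  rw [add_sub_cancel] at ha'
  have hzero : |A - a| ≤ 0 := by
    refine nonpos_of_mul_nonpos_right (a := c) ?_ hc0
    linarith [hu'.minEnergy_le hT.nonneg ha']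
  obtain rfl : A = a := sub_eq_zero.1 (abs_nonpos_iff.1 hzero)
  exact ⟨hconn, ha, fun u' v' hu' ha' ↦ hle.trans (hu'.minEnergy_le hT.nonneg ha')⟩

lemma IsAreaMinimizer.abs_energyVariation_le (h : IsAreaMinimizer W pm pp A u v)
    (hW : ContDiff ℝ 2 W) (hadj : ∀ u v, IsConnection W pm pp u v → energy W u v ≤ E →
      AreaAdjustable W pm pp u v c δ₀)
    (hE : energy W u v < E) (hδ₀ : 0 < δ₀) (hc : 0 ≤ c) (hφ : TestField φ) :
    |energyVariation W u v φ| ≤ c * |areaVariation u v φ| := by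
  have hu := h.toIsConnection
  obtain ⟨K, hK⟩ := hφ.exists_forall_norm_le hu.continuous
  obtain ⟨C, -, s₀, hs₀, hle⟩ := hφ.exists_energy_add_smul_le (pm := pm) (pp := pp) hW K
  have hEs : ∀ᶠ s : ℝ in 𝓝 0, energy W u v + s * energyVariation W u v φ + C * s ^ 2 < E :=
    (Continuous.tendsto' (by fun_prop) 0 _ (by simp)).eventually_lt_const hE
  have hAs : ∀ᶠ s : ℝ in 𝓝 0, |-(s * areaVariation u v φ + s ^ 2 * areaLine φ)| < δ₀ :=
    (Continuous.tendsto' (by fun_prop) 0 0 (by simp)).eventually_lt_const hδ₀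
  obtain ⟨s₁, hs₁, hsmall⟩ := Metric.eventually_nhds_iff_ball.1 (hEs.and hAs)
  refine abs_le_of_forall_mul_add_nonneg (C := C + c * |areaLine φ|)
    (lt_min hs₀ (half_pos hs₁)) fun s hs ↦ ?_
  obtain ⟨hE', hA'⟩ := hsmall s <| mem_ball_zero_iff.2 <|
    (hs.trans (min_le_right _ _)).trans_lt (half_lt_self hs₁)
  have hvar := hle u v hu hK s (hs.trans (min_le_left _ _))
  obtain ⟨u', v', hu', ha', hcost⟩ := hadj _ _ (hφ.isConnection_add_smul hW.continuous hu s)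
    (hvar.trans hE'.le) _ (hφ.hasArea_add_smul hu.toHasL2Deriv h.hasArea s) _ hA'.le
  rw [add_neg_cancel_right] at ha'
  have hδ : |-(s * areaVariation u v φ + s ^ 2 * areaLine φ)| ≤
      |s| * |areaVariation u v φ| + s ^ 2 * |areaLine φ| := by
    rw [abs_neg, ← abs_mul, ← abs_of_nonneg (sq_nonneg s), ← abs_mul, abs_of_nonneg (sq_nonneg s)]
    exact abs_add_le _ _
  linarith [h.energy_le u' v' hu' ha', mul_le_mul_of_nonneg_left hδ hc]

theorem exists_isAreaMinimizer (hT : TwoWell W pm pp) (hL : EnergyLowerBound W pm pp e C)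
    (hm : QuadraticWell W pm R κ) (hp : QuadraticWell W pp R κ) (hc : c ^ 2 = 2 * κ)
    (hc0 : 0 < c) (hN : NearOptimalAt W pm pp e A₀) :
    ∃ ε > 0, ∀ A, |A - A₀| < ε → ∃ u v, IsAreaMinimizer W pm pp A u v ∧
      energy W u v ≤ e + c / 2 * |A - A₀| ∧
      ∀ φ, TestField φ → |energyVariation W u v φ| ≤ c / 2 * |areaVariation u v φ| := by
  obtain ⟨η₁, hη₁, T, hcompact⟩ := exists_confined_weakLimit hT hL hm hp
  obtain ⟨η₂, hη₂, δ₀, hδ₀, hadj⟩ := exists_areaAdjustable hT hL hm hp (half_pos hc0)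
  refine ⟨min δ₀ (min η₁ η₂ / c), lt_min hδ₀ (by positivity), fun A hA ↦ ?_⟩
  have hAδ : |A - A₀| < δ₀ := hA.trans_le (min_le_left _ _)
  have hAη : |A - A₀| * c < min η₁ η₂ := (lt_div_iff₀ hc0).1 (hA.trans_le (min_le_right _ _))
  have hnear {ε : ℝ} (hε : 0 < ε) := hN.exists_energy_le hadj hη₂ (half_pos hc0).le hAδ hε
  have hminE : minEnergy W pm pp A ≤ e + c / 2 * |A - A₀| :=
    le_of_forall_pos_le_add fun ε hε ↦ by
      obtain ⟨u, v, hu, ha, hE⟩ := hnear hε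
      exact (hu.minEnergy_le hT.nonneg ha).trans hE
  obtain ⟨u₀, v₀, hu₀, ha₀, -⟩ := hnear one_pos
  have hpos (n : ℕ) : (0 : ℝ) < min η₁ η₂ / 2 * (1 / (n + 1)) := by positivity
  choose un vn hun han hE using fun n : ℕ ↦ hu₀.exists_energy_lt ha₀ (hpos n)
  obtain ⟨τ, φ, hφ, hconf, u, v, hlim⟩ := hcompact un vn hun fun n ↦ (hE n).le.trans <| by
    have : min η₁ η₂ / 2 * (1 / (n + 1)) ≤ min η₁ η₂ / 2 :=
      mul_le_of_le_one_right (by positivity) (one_div_succ_le_one n)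
    linarith [min_le_left η₁ η₂]
  have hb : Tendsto (fun n ↦ minEnergy W pm pp A + min η₁ η₂ / 2 * (1 / ((φ n : ℝ) + 1))) atTop
      (𝓝 (minEnergy W pm pp A)) := by
    simpa using ((tendsto_one_div_add_atTop_nhds_zero_nat.comp hφ.tendsto_atTop).const_mul
      (min η₁ η₂ / 2)).const_add (minEnergy W pm pp A)
  have hu : IsAreaMinimizer W pm pp A u v := hlim.isAreaMinimizer hT hL hm hp hc hc0
    (fun n ↦ (hun (φ n)).comp_add_right (τ n)) hconf (fun n ↦ (han (φ n)).comp_add_right (τ n))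
    (fun n ↦ (energy_comp_add_right _).trans_le (hE (φ n)).le) hb hadj
    (by linarith [min_le_right η₁ η₂]) (by nlinarith)
  have hE₀ : energy W u v ≤ e + c / 2 * |A - A₀| := le_of_forall_pos_le_add fun ε hε ↦ by
    obtain ⟨u₁, v₁, hu₁, ha₁, hE₁⟩ := hnear hε
    exact (hu.energy_le u₁ v₁ hu₁ ha₁).trans hE₁
  refine ⟨u, v, hu, hE₀, fun ψ hψ ↦ hu.abs_energyVariation_le hT.contDiff_two hadj ?_ hδ₀
    (half_pos hc0).le hψ⟩
  nlinarith [min_le_right η₁ η₂]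

end Minimizers

section EulerLagrange

variable {W : ℝ × ℝ → ℝ} {pm pp z : ℝ × ℝ} {u v w : ℝ → ℝ × ℝ} {k t ν : ℝ}

lemma hasDerivAt_fst (h : HasDerivAt u z t) : HasDerivAt (fun t ↦ (u t).1) z.1 t := by
  simpa using h.hasFDerivAt.fst.hasDerivAt

lemma hasDerivAt_snd (h : HasDerivAt u z t) : HasDerivAt (fun t ↦ (u t).2) z.2 t := by
  simpa using h.hasFDerivAt.snd.hasDerivAt

lemma IsConnection.exists_multiplier (h : IsConnection W pm pp u v) (hW : ContDiff ℝ 1 W)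
    (hne : pm ≠ pp)
    (hk : ∀ φ, TestField φ → |energyVariation W u v φ| ≤ k * |areaVariation u v φ|) :
    ∃ ν, |ν| ≤ k ∧
      ∀ φ, TestField φ → energyVariation W u v φ = ν * areaVariation u v φ := by
  obtain ⟨ψ, hψ, hψ1⟩ := h.exists_areaVariation_eq_one hne
  refine ⟨energyVariation W u v ψ, by simpa [hψ1] using hk ψ hψ, fun φ hφ ↦ ?_⟩
  have hφψ := hk _ (hφ.add (hψ.const_smul (-areaVariation u v φ)))
  rw [hφ.areaVariation_add (hψ.const_smul _) h.toHasL2Deriv, hψ.areaVariation_const_smul, hψ1,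
    hφ.energyVariation_add (hψ.const_smul _) hW h.toHasL2Deriv, hψ.energyVariation_const_smul,
    mul_one, add_neg_cancel, abs_zero, mul_zero] at hφψ
  linarith [abs_nonpos_iff.1 hφψ]

lemma fderiv_apply_eq_gradW (p z : ℝ × ℝ) :
    fderiv ℝ W p z = (gradW W p).1 * z.1 + (gradW W p).2 * z.2 := by
  have hz : z = z.1 • ((1, 0) : ℝ × ℝ) + z.2 • ((0, 1) : ℝ × ℝ) := by ext <;> simp
  conv_lhs => rw [hz, map_add, map_smul, map_smul]
  simp [gradW, mul_comm]

lemma contDiff_gradW {m n : WithTop ℕ∞} (hW : ContDiff ℝ n W) (hmn : m + 1 ≤ n) :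
    ContDiff ℝ m (gradW W) := by
  have := hW.fderiv_right hmn
  exact (this.clm_apply contDiff_const).prodMk (this.clm_apply contDiff_const)

/-- `u`, with velocity `w`, solves the travelling-wave system `u'' = ∇W(u) - ν J u'`, written as
a first-order system. -/
structure IsTravelingWave (W : ℝ × ℝ → ℝ) (ν : ℝ) (u w : ℝ → ℝ × ℝ) : Prop where
  hasDerivAt : ∀ t, HasDerivAt u (w t) t
  hasDerivAt_velocity : ∀ t, HasDerivAt w (gradW W (u t) - ν • Jv (w t)) t

lemma TestField.integral_energy_sub_area_eq_zero {φ : ℝ → ℝ × ℝ} (hφ : TestField φ)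
    (hW : ContDiff ℝ 1 W) (h : HasL2Deriv u v)
    (hν : energyVariation W u v φ = ν * areaVariation u v φ) :
    ∫ t, (((v t).1 * (deriv φ t).1 + (v t).2 * (deriv φ t).2 +
      ((gradW W (u t)).1 * (φ t).1 + (gradW W (u t)).2 * (φ t).2)) -
      ν * ((v t).2 * (φ t).1 + (u t).1 * (deriv φ t).2)) = 0 := by
  simp only [← fderiv_apply_eq_gradW]
  refine (integral_sub (hφ.integrable_energyVariation hW h)
    ((hφ.integrable_areaVariation h).const_mul ν)).trans ?_
  rw [integral_const_mul]
  exact sub_eq_zero.2 hν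

lemma HasL2Deriv.exists_velocity_snd_eq (h : HasL2Deriv u v) (hW : ContDiff ℝ 1 W)
    (hν : ∀ φ, TestField φ → energyVariation W u v φ = ν * areaVariation u v φ) :
    ∃ c, ∀ᵐ t, (v t).2 - ν * (u t).1 = c + ∫ x in (0 : ℝ)..t, (gradW W (u x)).2 := by
  have hg := (contDiff_gradW (m := 0) hW (by simp)).continuous
  refine ae_eq_add_integral_of_integral_mul_deriv_add_eq_zero
    ((h.snd.memLp.locallyIntegrable (by norm_num)).sub
      (h.fst.continuous.const_mul ν).locallyIntegrable)
    (hg.comp h.continuous).snd fun ψ hψ hψc ↦ ?_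
  have hφ := testField_snd hψ hψc
  rw [← hφ.integral_energy_sub_area_eq_zero hW h (hν _ hφ)]
  congr with t
  simp only [deriv_zero_prodMk hψ]
  ring

lemma HasL2Deriv.exists_velocity_fst_eq (h : HasL2Deriv u v) (hW : ContDiff ℝ 1 W)
    (hν : ∀ φ, TestField φ → energyVariation W u v φ = ν * areaVariation u v φ) {w₂ : ℝ → ℝ}
    (hw : Continuous w₂) (hvw : ∀ᵐ t, (v t).2 = w₂ t) :
    ∃ c, ∀ᵐ t, (v t).1 = c + ∫ x in (0 : ℝ)..t, ((gradW W (u x)).1 - ν * w₂ x) := by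
  have hg := (contDiff_gradW (m := 0) hW (by simp)).continuous
  refine ae_eq_add_integral_of_integral_mul_deriv_add_eq_zero
    (h.fst.memLp.locallyIntegrable (by norm_num))
    ((hg.comp h.continuous).fst.sub (hw.const_mul ν)) fun ψ hψ hψc ↦ ?_
  have hφ := testField_fst hψ hψc
  rw [← hφ.integral_energy_sub_area_eq_zero hW h (hν _ hφ)]
  refine integral_congr_ae ?_
  filter_upwards [hvw] with t ht
  simp only [deriv_prodMk_zero hψ, ht]
  ring

lemma HasL2Deriv.hasDerivAt_of_ae_eq (h : HasL2Deriv u v) (hw : Continuous w)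
    (hvw : ∀ᵐ t, v t = w t) (t : ℝ) : HasDerivAt u (w t) t := by
  have hu : u = fun t ↦ u 0 + ∫ x in (0 : ℝ)..t, w x := h.eq_add_integral.trans <|
    funext fun t ↦ congrArg (u 0 + ·) <|
      intervalIntegral.integral_congr_ae (hvw.mono fun t ht _ ↦ ht)
  rw [hu]
  exact (hw.integral_hasStrictDerivAt 0 t).hasDerivAt.const_add _

theorem HasL2Deriv.exists_isTravelingWave (h : HasL2Deriv u v) (hW : ContDiff ℝ 1 W)
    (hν : ∀ φ, TestField φ → energyVariation W u v φ = ν * areaVariation u v φ) :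
    ∃ w, (∀ᵐ t, v t = w t) ∧ IsTravelingWave W ν u w := by
  have hg := (contDiff_gradW (m := 0) hW (by simp)).continuous.comp h.continuous
  have hprim {G : ℝ → ℝ} (hG : Continuous G) (c t : ℝ) :
      HasDerivAt (fun t ↦ c + ∫ x in (0 : ℝ)..t, G x) (G t) t :=
    (hG.integral_hasStrictDerivAt 0 t).hasDerivAt.const_add c
  obtain ⟨c₂, hc₂⟩ := h.exists_velocity_snd_eq hW hν
  set w₂ : ℝ → ℝ := fun t ↦ (c₂ + ∫ x in (0 : ℝ)..t, (gradW W (u x)).2) + ν * (u t).1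
  have hw₂ : Continuous w₂ :=
    (continuous_iff_continuousAt.2 fun t ↦ (hprim hg.snd c₂ t).continuousAt).add
      (h.fst.continuous.const_mul ν)
  have hvw₂ : ∀ᵐ t, (v t).2 = w₂ t := hc₂.mono fun t ht ↦ sub_eq_iff_eq_add.1 ht
  obtain ⟨c₁, hvw₁⟩ := h.exists_velocity_fst_eq hW hν hw₂ hvw₂
  have hG₁ : Continuous fun t ↦ (gradW W (u t)).1 - ν * w₂ t := hg.fst.sub (hw₂.const_mul ν)
  set w₁ : ℝ → ℝ := fun t ↦ c₁ + ∫ x in (0 : ℝ)..t, ((gradW W (u x)).1 - ν * w₂ x)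
  have hw₁ : Continuous w₁ :=
    continuous_iff_continuousAt.2 fun t ↦ (hprim hG₁ c₁ t).continuousAt
  have hvw : ∀ᵐ t, v t = (w₁ t, w₂ t) := by
    filter_upwards [hvw₁, hvw₂] with t h₁ h₂ using Prod.ext h₁ h₂
  have hu := h.hasDerivAt_of_ae_eq (hw₁.prodMk hw₂) hvw
  refine ⟨fun t ↦ (w₁ t, w₂ t), hvw, hu, fun t ↦ ?_⟩
  refine ((hprim hG₁ c₁ t).prodMk
    ((hprim hg.snd c₂ t).add ((hasDerivAt_fst (hu t)).const_mul ν))).congr_deriv ?_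
  ext <;> simp [Jv]

namespace IsTravelingWave

lemma deriv_eq (h : IsTravelingWave W ν u w) : deriv u = w :=
  funext fun t ↦ (h.hasDerivAt t).deriv

lemma deriv_velocity_eq (h : IsTravelingWave W ν u w) :
    deriv w = fun t ↦ gradW W (u t) - ν • Jv (w t) :=
  funext fun t ↦ (h.hasDerivAt_velocity t).deriv

lemma contDiff_nat (h : IsTravelingWave W ν u w) (hW : ContDiff ℝ (⊤ : ℕ∞) W) (n : ℕ) :
    ContDiff ℝ n u ∧ ContDiff ℝ n w := by
  have hu : Differentiable ℝ u := fun t ↦ (h.hasDerivAt t).differentiableAt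
  have hw : Differentiable ℝ w := fun t ↦ (h.hasDerivAt_velocity t).differentiableAt
  induction n with
  | zero => exact ⟨contDiff_zero.2 hu.continuous, contDiff_zero.2 hw.continuous⟩
  | succ n ih =>
    have hg : ContDiff ℝ n (gradW W) := contDiff_gradW hW (by exact_mod_cast le_top)
    push_cast
    rw [contDiff_succ_iff_deriv, contDiff_succ_iff_deriv, h.deriv_eq, h.deriv_velocity_eq]
    exact ⟨⟨hu, by simp, ih.2⟩, hw, by simp,
      (hg.comp ih.1).sub ((ih.2.snd.prodMk ih.2.fst.neg).const_smul ν)⟩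

lemma contDiff (h : IsTravelingWave W ν u w) (hW : ContDiff ℝ (⊤ : ℕ∞) W) :
    ContDiff ℝ (⊤ : ℕ∞) u :=
  contDiff_infty.2 fun n ↦ (h.contDiff_nat hW n).1

end IsTravelingWave

end EulerLagrange

section ExponentialDecay

open Asymptotics

variable {f f₁ f₂ : ℝ → ℝ} {T μ : ℝ}

lemma hasDerivAt_exp_mul (k t : ℝ) :
    HasDerivAt (fun t ↦ Real.exp (k * t)) (Real.exp (k * t) * k) t := by
  simpa using ((hasDerivAt_id t).const_mul k).exp

lemma deriv_add_mul_nonpos_of_sq_mul_le_deriv_deriv (hf : ∀ t, HasDerivAt f (f₁ t) t)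
    (hf₁ : ∀ t, HasDerivAt f₁ (f₂ t) t) (hμ : 0 < μ) (hle : ∀ t ≥ T, μ ^ 2 * f t ≤ f₂ t)
    (h0 : Tendsto f atTop (𝓝 0)) (h1 : Tendsto f₁ atTop (𝓝 0)) :
    ∀ t ≥ T, f₁ t + μ * f t ≤ 0 := by
  have hd (t : ℝ) : HasDerivAt (fun t ↦ Real.exp (-μ * t) * (f₁ t + μ * f t))
      (Real.exp (-μ * t) * (f₂ t - μ ^ 2 * f t)) t := by
    refine ((hasDerivAt_exp_mul (-μ) t).mul
      ((hf₁ t).add ((hf t).const_mul μ))).congr_deriv ?_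
    simp only [Pi.add_apply]
    ring
  have hmono : MonotoneOn (fun t ↦ Real.exp (-μ * t) * (f₁ t + μ * f t)) (Ici T) := by
    refine monotoneOn_of_deriv_nonneg (convex_Ici T)
      (fun t _ ↦ (hd t).continuousAt.continuousWithinAt)
      (fun t _ ↦ (hd t).differentiableAt.differentiableWithinAt) fun t ht ↦ ?_
    rw [(hd t).deriv]
    exact mul_nonneg (Real.exp_pos _).le (sub_nonneg.2 (hle t (interior_subset ht)))
  have hlim : Tendsto (fun t ↦ Real.exp (-μ * t) * (f₁ t + μ * f t)) atTop (𝓝 0) := by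
    have hexp : Tendsto (fun t ↦ Real.exp (-μ * t)) atTop (𝓝 0) :=
      Real.tendsto_exp_atBot.comp (tendsto_id.const_mul_atTop_of_neg (neg_neg_of_pos hμ))
    simpa using hexp.mul (h1.add (h0.const_mul μ))
  intro t ht
  have hnonpos : Real.exp (-μ * t) * (f₁ t + μ * f t) ≤ 0 := by
    refine ge_of_tendsto hlim ?_
    filter_upwards [eventually_ge_atTop t] with s hs
    exact hmono ht (ht.le.trans hs) hs
  exact nonpos_of_mul_nonpos_right hnonpos (Real.exp_pos _)

theorem isBigO_exp_neg_of_sq_mul_le_deriv_deriv (hf : ∀ t, HasDerivAt f (f₁ t) t)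
    (hf₁ : ∀ t, HasDerivAt f₁ (f₂ t) t) (hμ : 0 < μ) (hf0 : ∀ t, 0 ≤ f t)
    (hle : ∀ᶠ t in atTop, μ ^ 2 * f t ≤ f₂ t) (h0 : Tendsto f atTop (𝓝 0))
    (h1 : Tendsto f₁ atTop (𝓝 0)) : f =O[atTop] fun t ↦ Real.exp (-μ * t) := by
  obtain ⟨T, hT⟩ := eventually_atTop.1 hle
  have hneg := deriv_add_mul_nonpos_of_sq_mul_le_deriv_deriv hf hf₁ hμ hT h0 h1
  have hd (t : ℝ) : HasDerivAt (fun t ↦ Real.exp (μ * t) * f t)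
      (Real.exp (μ * t) * (f₁ t + μ * f t)) t := by
    refine ((hasDerivAt_exp_mul μ t).mul (hf t)).congr_deriv ?_
    ring
  have hanti : AntitoneOn (fun t ↦ Real.exp (μ * t) * f t) (Ici T) := by
    refine antitoneOn_of_deriv_nonpos (convex_Ici T)
      (fun t _ ↦ (hd t).continuousAt.continuousWithinAt)
      (fun t _ ↦ (hd t).differentiableAt.differentiableWithinAt) fun t ht ↦ ?_
    rw [(hd t).deriv]
    exact mul_nonpos_of_nonneg_of_nonpos (Real.exp_pos _).le (hneg t (interior_subset ht))
  refine IsBigO.of_bound (Real.exp (μ * T) * f T) ?_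
  filter_upwards [eventually_ge_atTop T] with t ht
  have hexp : Real.exp (μ * t) * Real.exp (-μ * t) = 1 := by rw [← Real.exp_add]; simp
  calc ‖f t‖ = Real.exp (μ * t) * f t * Real.exp (-μ * t) := by
        rw [Real.norm_of_nonneg (hf0 t)]
        linear_combination -f t * hexp
    _ ≤ Real.exp (μ * T) * f T * ‖Real.exp (-μ * t)‖ := by
        rw [Real.norm_of_nonneg (Real.exp_pos _).le]
        exact mul_le_mul_of_nonneg_right (hanti self_mem_Ici ht ht) (Real.exp_pos _).le

lemma isBigO_norm_sub_sq_of_nonneg_of_eq_zero {W : ℝ × ℝ → ℝ} {p : ℝ × ℝ} (hW : ContDiff ℝ 2 W)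
    (hW0 : ∀ x, 0 ≤ W x) (hp : W p = 0) : W =O[𝓝 p] fun x ↦ ‖x - p‖ ^ 2 := by
  have hcrit : fderiv ℝ W p = 0 :=
    IsLocalMin.fderiv_eq_zero (Eventually.of_forall fun x ↦ hp.trans_le (hW0 x))
  obtain ⟨C, -, hC⟩ := exists_forall_le_taylor hW ‖p‖
  refine IsBigO.of_bound C ?_
  filter_upwards [Metric.closedBall_mem_nhds p one_pos] with x hx
  rw [mem_closedBall_iff_norm] at hx
  simpa [hp, hcrit, abs_of_nonneg (hW0 x)] using hC p (x - p) le_rfl hx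

lemma integrable_of_isBigO_exp_neg_of_comp_neg (hf : Continuous f) {a b : ℝ} (ha : 0 < a)
    (hb : 0 < b) (hfa : f =O[atTop] fun t ↦ Real.exp (-a * t))
    (hfb : (fun t ↦ f (-t)) =O[atTop] fun t ↦ Real.exp (-b * t)) : Integrable f := by
  have hpos : IntegrableOn f (Ioi 0) := integrable_of_isBigO_exp_neg ha hf.continuousOn hfa
  have hneg : IntegrableOn f (Iio 0) := by
    have : IntegrableOn (fun t ↦ f (-t)) (Ioi (-0)) :=
      integrable_of_isBigO_exp_neg hb (by fun_prop) hfb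
    simpa using this.comp_neg_Iio
  rw [← integrableOn_univ, ← Iio_union_Ici (a := (0 : ℝ)), integrableOn_union,
    integrableOn_Ici_iff_integrableOn_Ioi]
  exact ⟨hneg, hpos⟩

end ExponentialDecay

namespace IsTravelingWave

open Asymptotics

variable {W : ℝ × ℝ → ℝ} {p pm pp : ℝ × ℝ} {u v w g : ℝ → ℝ × ℝ} {R κ ν : ℝ}

lemma continuous (h : IsTravelingWave W ν u w) : Continuous u :=
  continuous_iff_continuousAt.2 fun t ↦ (h.hasDerivAt t).continuousAt

lemma continuous_velocity (h : IsTravelingWave W ν u w) : Continuous w :=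
  continuous_iff_continuousAt.2 fun t ↦ (h.hasDerivAt_velocity t).continuousAt

lemma comp_neg (h : IsTravelingWave W ν u w) :
    IsTravelingWave W (-ν) (fun t ↦ u (-t)) fun t ↦ -w (-t) where
  hasDerivAt t :=
    ((h.hasDerivAt (-t)).scomp t (hasDerivAt_neg t)).congr_deriv (neg_one_smul ℝ _)
  hasDerivAt_velocity t := by
    refine ((h.hasDerivAt_velocity (-t)).scomp t (hasDerivAt_neg t)).fun_neg.congr_deriv ?_
    ext <;> simp [Jv]

theorem enorm2_velocity_sq_eq (h : IsTravelingWave W ν u w) (hW : Differentiable ℝ W)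
    (hu : IsConnection W pm pp u v) (hvw : ∀ᵐ t, v t = w t) (t : ℝ) :
    enorm2 (w t) ^ 2 = 2 * W (u t) := by
  have hd (t : ℝ) : HasDerivAt (fun t ↦ (w t).1 ^ 2 + (w t).2 ^ 2 - 2 * W (u t)) 0 t := by
    refine ((((hasDerivAt_fst (h.hasDerivAt_velocity t)).pow 2).add
      ((hasDerivAt_snd (h.hasDerivAt_velocity t)).pow 2)).sub
      (((hW (u t)).hasFDerivAt.comp_hasDerivAt t (h.hasDerivAt t)).const_mul 2)).congr_deriv ?_
    rw [fderiv_apply_eq_gradW]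
    simp [Jv]
    ring
  have hconst (s : ℝ) : enorm2 (w s) ^ 2 - 2 * W (u s) = enorm2 (w t) ^ 2 - 2 * W (u t) := by
    simp only [enorm2_sq]
    exact is_const_of_deriv_eq_zero (fun s ↦ (hd s).differentiableAt) (fun s ↦ (hd s).deriv) s t
  have hint : Integrable fun s ↦ enorm2 (w s) ^ 2 - 2 * W (u s) :=
    (hu.integrable_enorm2_sq.congr (hvw.mono fun s hs ↦ by simp only [hs])).sub
      (hu.integrable_potential.const_mul 2)
  simp_rw [hconst, integrable_const_iff, isFiniteMeasure_iff, Real.volume_univ, lt_irrefl,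
    or_false] at hint
  exact sub_eq_zero.1 hint

lemma hasDerivAt_enorm2_sub_sq (h : IsTravelingWave W ν u w) (p : ℝ × ℝ) (t : ℝ) :
    HasDerivAt (fun t ↦ enorm2 (u t - p) ^ 2)
      (2 * (((u t).1 - p.1) * (w t).1 + ((u t).2 - p.2) * (w t).2)) t := by
  simp only [enorm2_sq]
  refine ((((hasDerivAt_fst (h.hasDerivAt t)).sub_const p.1).pow 2).add
    (((hasDerivAt_snd (h.hasDerivAt t)).sub_const p.2).pow 2)).congr_deriv ?_
  push_cast
  ring

lemma hasDerivAt_inner_sub_velocity (h : IsTravelingWave W ν u w) (p : ℝ × ℝ) (t : ℝ) :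
    HasDerivAt (fun t ↦ 2 * (((u t).1 - p.1) * (w t).1 + ((u t).2 - p.2) * (w t).2))
      (2 * (enorm2 (w t) ^ 2 + fderiv ℝ W (u t) (u t - p) -
        ν * (((u t).1 - p.1) * (w t).2 - ((u t).2 - p.2) * (w t).1))) t := by
  have hw := h.hasDerivAt_velocity t
  refine (((((hasDerivAt_fst (h.hasDerivAt t)).sub_const p.1).mul (hasDerivAt_fst hw)).add
    (((hasDerivAt_snd (h.hasDerivAt t)).sub_const p.2).mul (hasDerivAt_snd hw))).const_mul
      2).congr_deriv ?_
  rw [fderiv_apply_eq_gradW, enorm2_sq]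
  simp only [Jv, Prod.fst_sub, Prod.snd_sub, Prod.smul_fst, Prod.smul_snd, smul_eq_mul]
  ring

lemma eventually_rate_mul_le (hp : QuadraticWell W p R κ) (hν : ν ^ 2 ≤ 2 * κ)
    (hl : Tendsto u atTop (𝓝 p)) : ∀ᶠ t in atTop, κ * enorm2 (u t - p) ^ 2 ≤
      2 * (enorm2 (w t) ^ 2 + fderiv ℝ W (u t) (u t - p) -
        ν * (((u t).1 - p.1) * (w t).2 - ((u t).2 - p.2) * (w t).1)) := by
  filter_upwards [hl.eventually (Metric.closedBall_mem_nhds p hp.radius_pos)] with t ht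
  have hle := hp.le_fderiv (u t) (mem_closedBall_iff_norm.1 ht)
  have hκ : ν ^ 2 * enorm2 (u t - p) ^ 2 ≤ 2 * κ * enorm2 (u t - p) ^ 2 := by gcongr
  simp only [enorm2_sq, Prod.fst_sub, Prod.snd_sub] at hle hκ ⊢
  nlinarith [sq_nonneg (2 * (w t).1 + ν * ((u t).2 - p.2)),
    sq_nonneg (2 * (w t).2 - ν * ((u t).1 - p.1))]

theorem exists_isBigO_exp_neg (h : IsTravelingWave W ν u w) (hW : ContDiff ℝ 2 W)
    (hW0 : ∀ x, 0 ≤ W x) (hWp : W p = 0) (hp : QuadraticWell W p R κ) (hν : ν ^ 2 ≤ 2 * κ)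
    (he : ∀ t, enorm2 (w t) ^ 2 = 2 * W (u t)) (hl : Tendsto u atTop (𝓝 p)) :
    ∃ μ > 0, (fun t ↦ u t - p) =O[atTop] (fun t ↦ Real.exp (-μ * t)) ∧
      w =O[atTop] fun t ↦ Real.exp (-μ * t) := by
  have hf0 : Tendsto (fun t ↦ enorm2 (u t - p) ^ 2) atTop (𝓝 0) :=
    ((continuous_enorm2.comp (continuous_sub_right p)).pow 2).tendsto' p 0 (by simp) |>.comp hl
  have hWu : Tendsto (fun t ↦ W (u t)) atTop (𝓝 0) := hW.continuous.tendsto' p 0 hWp |>.comp hl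
  have hf1 : Tendsto (fun t ↦ 2 * (((u t).1 - p.1) * (w t).1 + ((u t).2 - p.2) * (w t).2)) atTop
      (𝓝 0) := by
    refine squeeze_zero_norm (fun t ↦ ?_) (by simpa using hf0.add (hWu.const_mul 2))
    rw [Real.norm_eq_abs, ← he t, enorm2_sq, enorm2_sq, abs_le, Prod.fst_sub, Prod.snd_sub]
    constructor <;> nlinarith [sq_nonneg ((u t).1 - p.1 + (w t).1),
      sq_nonneg ((u t).2 - p.2 + (w t).2), sq_nonneg ((u t).1 - p.1 - (w t).1),
      sq_nonneg ((u t).2 - p.2 - (w t).2)]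
  have hsq : (fun t ↦ enorm2 (u t - p) ^ 2) =O[atTop] fun t ↦ Real.exp (-√κ * t) := by
    refine isBigO_exp_neg_of_sq_mul_le_deriv_deriv (h.hasDerivAt_enorm2_sub_sq p)
      (h.hasDerivAt_inner_sub_velocity p) (Real.sqrt_pos.2 hp.rate_pos) (fun t ↦ sq_nonneg _)
      ?_ hf0 hf1
    rw [Real.sq_sqrt hp.rate_pos.le]
    exact eventually_rate_mul_le hp hν hl
  have hexp (t : ℝ) : Real.exp (-√κ * t) = Real.exp (-(√κ / 2) * t) ^ 2 := by
    rw [← Real.exp_nat_mul]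
    push_cast
    ring_nf
  simp only [hexp] at hsq
  have hnorm (z : ℝ → ℝ × ℝ) : z =O[atTop] fun t ↦ enorm2 (z t) :=
    IsBigO.of_norm_le fun t ↦ norm_le_enorm2 (z t)
  have hu := (hnorm fun t ↦ u t - p).trans (hsq.of_pow two_ne_zero)
  have hw : (fun t ↦ enorm2 (w t) ^ 2) =O[atTop] fun t ↦ Real.exp (-(√κ / 2) * t) ^ 2 := by
    simp only [he]
    exact (((isBigO_norm_sub_sq_of_nonneg_of_eq_zero hW hW0 hWp).comp_tendsto hl).const_mul_left
      2).trans (hu.norm_left.pow 2)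
  exact ⟨√κ / 2, half_pos (Real.sqrt_pos.2 hp.rate_pos), hu,
    (hnorm w).trans (hw.of_pow two_ne_zero)⟩

lemma exists_isBigO_area_isBigO_norm_sub_sq (h : IsTravelingWave W ν u w) (hW : ContDiff ℝ 2 W)
    (hW0 : ∀ x, 0 ≤ W x) (hWp : W p = 0) (hp : QuadraticWell W p R κ) (hν : ν ^ 2 ≤ 2 * κ)
    (he : ∀ t, enorm2 (w t) ^ 2 = 2 * W (u t)) (hl : Tendsto u atTop (𝓝 p))
    (hg : ∀ᶠ t in atTop, g t = p) :
    ∃ μ > 0, (fun t ↦ (u t).1 * (w t).2) =O[atTop] (fun t ↦ Real.exp (-μ * t)) ∧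
      (fun t ↦ ‖u t - g t‖ ^ 2) =O[atTop] fun t ↦ Real.exp (-μ * t) := by
  obtain ⟨μ, hμ, hu, hw⟩ := h.exists_isBigO_exp_neg hW hW0 hWp hp hν he hl
  refine ⟨μ, hμ, ?_, ?_⟩
  · simpa using (isBigO_fst_prod'.trans (hl.isBigO_one ℝ)).mul (isBigO_snd_prod'.trans hw)
  · have hug : (fun t ↦ u t - g t) =O[atTop] fun t ↦ Real.exp (-μ * t) :=
      hu.congr' (hg.mono fun t ht ↦ by simp only [ht]) .rfl
    have hone : (fun t ↦ ‖u t - g t‖) =O[atTop] fun _ ↦ (1 : ℝ) :=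
      ((hl.sub (tendsto_const_nhds.congr' (hg.mono fun t ht ↦ ht.symm))).norm).isBigO_one ℝ
    simpa [sq] using hug.norm_left.mul hone

theorem integrable_area_and_memLp_sub (h : IsTravelingWave W ν u w) (hT : TwoWell W pm pp)
    (hm : QuadraticWell W pm R κ) (hp : QuadraticWell W pp R κ) (hν : ν ^ 2 ≤ 2 * κ)
    (he : ∀ t, enorm2 (w t) ^ 2 = 2 * W (u t)) (hum : Tendsto u atBot (𝓝 pm))
    (hup : Tendsto u atTop (𝓝 pp)) (hg : Continuous g) (hgm : ∀ᶠ t in atBot, g t = pm)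
    (hgp : ∀ᶠ t in atTop, g t = pp) :
    Integrable (fun t ↦ (u t).1 * (w t).2) ∧ MemLp (fun t ↦ u t - g t) 2 volume := by
  have huc := h.continuous
  have hwc := h.continuous_velocity
  obtain ⟨a, ha, harea, hsq⟩ := h.exists_isBigO_area_isBigO_norm_sub_sq hT.contDiff_two hT.nonneg
    ((hT.zeroSet pp).2 (.inr rfl)) hp hν he hup hgp
  obtain ⟨b, hb, harea', hsq'⟩ := h.comp_neg.exists_isBigO_area_isBigO_norm_sub_sq hT.contDiff_two
    hT.nonneg ((hT.zeroSet pm).2 (.inl rfl)) hm (by rwa [neg_sq])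
    (fun t ↦ by simpa [enorm2_sq] using he (-t))
    (hum.comp tendsto_neg_atTop_atBot) (tendsto_neg_atTop_atBot.eventually hgm)
  refine ⟨integrable_of_isBigO_exp_neg_of_comp_neg (by fun_prop) ha hb harea ?_,
    (memLp_two_iff_integrable_sq_norm (by fun_prop)).2
      (integrable_of_isBigO_exp_neg_of_comp_neg (by fun_prop) ha hb hsq hsq')⟩
  simpa using harea'.neg_left

end IsTravelingWave

section Minimality

variable {W : ℝ × ℝ → ℝ} {pm pp : ℝ × ℝ} {u v U V w g : ℝ → ℝ × ℝ} {e C R κ c k ν A A₀ : ℝ}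

lemma IsConnection.Hfun_eq (h : IsConnection W pm pp u v) (hW : ∀ x, 0 ≤ W x) :
    Hfun W u = ENNReal.ofReal (energy W u v) := by
  rw [energy, ofReal_integral_eq_lintegral_ofReal h.integrable_energyDensity
    (Eventually.of_forall (energyDensity_nonneg hW u v))]
  refine lintegral_congr_ae ?_
  filter_upwards [h.ae_hasDerivAt] with t ht
  rw [ht.deriv, energyDensity]

lemma integrableOn_enorm2_sub_sq {p : ℝ × ℝ} {s : Set ℝ} (hu : Continuous u)
    (hug : MemLp (fun t ↦ u t - g t) 2 volume) (hs : MeasurableSet s) (hg : ∀ t ∈ s, g t = p) :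
    IntegrableOn (fun t ↦ enorm2 (u t - p) ^ 2) s := by
  have hsq := (memLp_two_iff_integrable_sq_norm hug.1).1 hug
  refine Integrable.mono' ((hsq.integrableOn (s := s)).const_mul 2)
    ((continuous_enorm2.comp (hu.sub continuous_const)).pow 2).aestronglyMeasurable ?_
  filter_upwards [ae_restrict_mem hs] with t ht
  rw [Real.norm_of_nonneg (sq_nonneg _), hg t ht]
  exact enorm2_sq_le _

lemma HasL2Deriv.isConnection_of_memLp_sub (h : HasL2Deriv u v) (hWc : Continuous W)
    (hW : ∀ x, 0 ≤ W x) (hug : MemLp (fun t ↦ u t - g t) 2 volume)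
    (hgm : ∀ᶠ t in atBot, g t = pm) (hgp : ∀ᶠ t in atTop, g t = pp) (hH : Hfun W u ≠ ⊤) :
    IsConnection W pm pp u v where
  toHasL2Deriv := h
  integrable_potential := by
    refine ⟨(hWc.comp h.continuous).aestronglyMeasurable, ?_⟩
    rw [hasFiniteIntegral_iff_ofReal (Eventually.of_forall fun t ↦ hW (u t))]
    exact (lintegral_mono fun t ↦ ENNReal.ofReal_le_ofReal
      (le_add_of_nonneg_left (by positivity))).trans_lt hH.lt_top
  tendsto_atBot := by
    obtain ⟨T, hT⟩ := eventually_atBot.1 hgm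
    exact h.tendsto_atBot_of_integrableOn (T := T) <| integrableOn_enorm2_sub_sq h.continuous hug
      measurableSet_Iio fun t ht ↦ hT t (le_of_lt ht)
  tendsto_atTop := by
    obtain ⟨T, hT⟩ := eventually_atTop.1 hgp
    exact h.tendsto_atTop_of_integrableOn (T := T) <| integrableOn_enorm2_sub_sq h.continuous hug
      measurableSet_Ioi fun t ht ↦ hT t (le_of_lt ht)

/- A competitor whose area density is not integrable has `areaLine u = 0` as a junk value, so that
`A = 0` needs the lower bound on the energy of an arbitrary connection instead of minimality. -/
theorem IsAreaMinimizer.Hfun_le (h : IsAreaMinimizer W pm pp A U V) (hT : TwoWell W pm pp)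
    (hL : EnergyLowerBound W pm pp e C) (he : A = 0 → energy W U V ≤ e)
    (hgm : ∀ᶠ t in atBot, g t = pm) (hgp : ∀ᶠ t in atTop, g t = pp) (hu : InGA g A u) :
    Hfun W U ≤ Hfun W u := by
  obtain ⟨⟨v, hv, hug, hftc⟩, hA⟩ := hu
  obtain hH | hH := eq_or_ne (Hfun W u) ⊤
  · exact hH ▸ le_top
  have hu : IsConnection W pm pp u v := HasL2Deriv.isConnection_of_memLp_sub ⟨hv, hftc⟩
    hT.smooth.continuous hT.nonneg hug hgm hgp hH
  rw [h.Hfun_eq hT.nonneg, hu.Hfun_eq hT.nonneg]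
  refine ENNReal.ofReal_le_ofReal ?_
  rw [hu.areaLine_eq] at hA
  by_cases hi : Integrable fun t ↦ (u t).1 * (v t).2
  · exact h.energy_le u v hu (hA ▸ hasArea_of_integrable hi)
  · rw [integral_undef hi] at hA
    exact (he hA.symm).trans (hu.le_energy hT.nonneg hL)

theorem IsAreaMinimizer.inGA (h : IsAreaMinimizer W pm pp A U V) (hVw : ∀ᵐ t, V t = w t)
    (harea : Integrable fun t ↦ (U t).1 * (w t).2)
    (hUg : MemLp (fun t ↦ U t - g t) 2 volume) : InGA g A U := by
  refine ⟨⟨V, h.memLp, hUg, h.sub_eq_integral⟩, h.areaLine_eq.trans ?_⟩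
  have hi : Integrable fun t ↦ (U t).1 * (V t).2 :=
    harea.congr (hVw.mono fun t ht ↦ by simp only [ht])
  exact (hasArea_of_integrable hi).unique h.hasArea

theorem exists_isAreaMinimizer_isTravelingWave (hT : TwoWell W pm pp)
    (hL : EnergyLowerBound W pm pp e C) (hm : QuadraticWell W pm R κ)
    (hp : QuadraticWell W pp R κ) (hN : NearOptimalAt W pm pp e A₀) :
    ∃ ε > 0, ∀ A, |A - A₀| < ε → ∃ U V ν w, IsAreaMinimizer W pm pp A U V ∧
      (A = 0 → energy W U V ≤ e) ∧ (∀ᵐ t, V t = w t) ∧ IsTravelingWave W ν U w ∧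
      ν ^ 2 ≤ 2 * κ := by
  have hκ : 0 < 2 * κ := mul_pos two_pos hm.rate_pos
  obtain ⟨ε, hε, hmin⟩ := exists_isAreaMinimizer hT hL hm hp (Real.sq_sqrt hκ.le)
    (Real.sqrt_pos.2 hκ) hN
  obtain ⟨δ, hδ, hδA⟩ : ∃ δ > 0, ∀ A, |A - A₀| < δ → A = 0 → A₀ = 0 := by
    obtain rfl | hA₀ := eq_or_ne A₀ 0
    · exact ⟨1, one_pos, fun _ _ _ ↦ rfl⟩
    · exact ⟨|A₀|, abs_pos.2 hA₀, fun A hA hA0 ↦ by simp [hA0] at hA⟩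
  refine ⟨min ε δ, lt_min hε hδ, fun A hA ↦ ?_⟩
  obtain ⟨U, V, hU, hE, hk⟩ := hmin A (hA.trans_le (min_le_left _ _))
  have hW : ContDiff ℝ 1 W := hT.smooth.of_le (by exact_mod_cast le_top)
  obtain ⟨ν, hν, hEL⟩ := hU.exists_multiplier hW hT.wells_ne hk
  obtain ⟨w, hVw, hw⟩ := hU.exists_isTravelingWave hW hEL
  refine ⟨U, V, ν, w, hU, fun hA0 ↦ ?_, hVw, hw, ?_⟩
  · simpa [hA0, hδA A (hA.trans_le (min_le_right _ _)) hA0] using hE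
  · exact Real.sq_le hκ.le |>.2 (abs_le.1 (hν.trans (half_le_self (Real.sqrt_nonneg _))))

end Minimality

section Reparametrization

variable {W : ℝ × ℝ → ℝ} {pm pp : ℝ × ℝ} {γ w : ℝ → ℝ × ℝ} {ρ r : ℝ → ℝ} {a n s m ε : ℝ}

lemma exists_orderIso_hasDerivAt_inv (hρ : Continuous ρ) (hm : 0 < m) (hmρ : ∀ t, m ≤ ρ t) :
    ∃ τ : ℝ ≃o ℝ, ∀ y, HasDerivAt τ (ρ (τ y))⁻¹ y := by
  let Y : ℝ → ℝ := fun t ↦ ∫ x in (0 : ℝ)..t, ρ x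
  have hY (t : ℝ) : HasDerivAt Y (ρ t) t := (hρ.integral_hasStrictDerivAt 0 t).hasDerivAt
  have hmono : StrictMono Y := strictMono_of_deriv_pos fun t ↦ by
    rw [(hY t).deriv]
    exact hm.trans_le (hmρ t)
  have hmono' : Monotone fun t ↦ Y t - m * t :=
    monotone_of_hasDerivAt_nonneg (fun t ↦ (hY t).sub ((hasDerivAt_id t).const_mul m))
      fun t ↦ by simpa using hmρ t
  have hY0 : Y 0 - m * 0 = 0 := by simp [Y]
  have htop : Tendsto Y atTop atTop := by
    refine tendsto_atTop_mono' _ ?_ (tendsto_id.const_mul_atTop hm)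
    filter_upwards [eventually_ge_atTop 0] with t ht
    exact sub_nonneg.1 (hY0.symm.trans_le (hmono' ht))
  have hbot : Tendsto Y atBot atBot := by
    refine tendsto_atBot_mono' _ ?_ (tendsto_id.const_mul_atBot hm)
    filter_upwards [eventually_le_atBot 0] with t ht
    exact sub_nonpos.1 ((hmono' ht).trans_eq hY0)
  have hYc : Continuous Y := continuous_iff_continuousAt.2 fun t ↦ (hY t).continuousAt
  let e := hmono.orderIsoOfSurjective Y (hYc.surjective htop hbot)
  exact ⟨e.symm, fun y ↦ HasDerivAt.of_local_left_inverse e.symm.continuous.continuousAt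
    (hY _) (hm.trans_le (hmρ _)).ne' (Eventually.of_forall e.apply_symm_apply)⟩

lemma integral_mul_comp_orderIso {τ : ℝ ≃o ℝ} (hτ : ∀ y, HasDerivAt τ (r y) y) (k : ℝ → ℝ) :
    ∫ y, r y * k (τ y) = ∫ t, k t := by
  have h := integral_image_eq_integral_deriv_smul_of_monotoneOn MeasurableSet.univ
    (fun y _ ↦ (hτ y).hasDerivWithinAt) (τ.monotone.monotoneOn univ) k
  simpa [image_univ, τ.surjective.range_eq] using h.symm

theorem exists_reparametrization (hWc : Continuous W) (hγ : ∀ t, HasDerivAt γ (w t) t)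
    (hw : Continuous w) (hws : HasCompactSupport w) (hWs : HasCompactSupport fun t ↦ W (γ t))
    (hγm : Tendsto γ atBot (𝓝 pm)) (hγp : Tendsto γ atTop (𝓝 pp)) (hρ : Continuous ρ)
    (hm : 0 < m) (hmρ : ∀ t, m ≤ ρ t) :
    ∃ u v, IsConnection W pm pp u v ∧ HasArea u v (∫ t, (γ t).1 * (w t).2) ∧
      energy W u v = ∫ t, (1 / 2 * enorm2 (w t) ^ 2 / ρ t + W (γ t) * ρ t) := by
  obtain ⟨τ, hτ⟩ := exists_orderIso_hasDerivAt_inv hρ hm hmρ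
  have hρ0 (t : ℝ) : ρ t ≠ 0 := (hm.trans_le (hmρ t)).ne'
  have hτc : Continuous τ := τ.continuous
  have hγc : Continuous γ := continuous_iff_continuousAt.2 fun t ↦ (hγ t).continuousAt
  let v : ℝ → ℝ × ℝ := fun y ↦ (ρ (τ y))⁻¹ • w (τ y)
  have hu (y : ℝ) : HasDerivAt (fun y ↦ γ (τ y)) (v y) y := (hγ (τ y)).scomp y (hτ y)
  have hvc : Continuous v := ((hρ.comp hτc).inv₀ fun y ↦ hρ0 _).smul (hw.comp hτc)
  have hwτ : HasCompactSupport fun y ↦ w (τ y) := hws.comp_homeomorph τ.toHomeomorph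
  have hWτ : HasCompactSupport fun y ↦ W (γ (τ y)) := hWs.comp_homeomorph τ.toHomeomorph
  have hvs : HasCompactSupport v := hwτ.mono fun y ↦ right_ne_zero_of_smul
  have hconn : IsConnection W pm pp (fun y ↦ γ (τ y)) v :=
    { memLp := hvc.memLp_of_hasCompactSupport hvs
      sub_eq_integral := fun s t ↦ (intervalIntegral.integral_eq_sub_of_hasDerivAt
        (fun y _ ↦ hu y) (hvc.intervalIntegrable s t)).symm
      integrable_potential := (hWc.comp (hγc.comp hτc)).integrable_of_hasCompactSupport
        hWτ
      tendsto_atBot := hγm.comp τ.tendsto_atBot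
      tendsto_atTop := hγp.comp τ.tendsto_atTop }
  have harea : Integrable fun y ↦ (γ (τ y)).1 * (v y).2 :=
    Continuous.integrable_of_hasCompactSupport (by fun_prop)
      (HasCompactSupport.mul_left (hvs.comp_left (g := Prod.snd) rfl))
  refine ⟨fun y ↦ γ (τ y), v, hconn, ?_, ?_⟩
  · rw [← integral_mul_comp_orderIso hτ]
    convert hasArea_of_integrable harea using 3
    simp only [v, Prod.smul_snd, smul_eq_mul]
    ring
  · rw [← integral_mul_comp_orderIso hτ, energy]
    congr with y
    have := hρ0 (τ y)
    simp only [energyDensity, v, enorm2_sq, Prod.smul_snd, Prod.smul_fst, smul_eq_mul]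
    field_simp

lemma half_sq_div_add_half_sq_mul_le (hn : 0 ≤ n) (hs : 0 ≤ s) (ha : 0 < a) :
    1 / 2 * n ^ 2 / ((n + a) / (s + a)) + s ^ 2 / 2 * ((n + a) / (s + a)) ≤
      s * n + a / 2 * (n + s) := by
  have hkin : 1 / 2 * n ^ 2 / ((n + a) / (s + a)) = 1 / 2 * (s + a) * n * (n / (n + a)) := by
    field_simp
  have hpot : s ^ 2 / 2 * ((n + a) / (s + a)) = 1 / 2 * (n + a) * s * (s / (s + a)) := by
    field_simp
  have hn1 : n / (n + a) ≤ 1 := div_le_one_of_le₀ (by linarith) (by positivity)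
  have hs1 : s / (s + a) ≤ 1 := div_le_one_of_le₀ (by linarith) (by positivity)
  rw [hkin, hpot]
  linarith [mul_le_of_le_one_right (by positivity : 0 ≤ 1 / 2 * (s + a) * n) hn1,
    mul_le_of_le_one_right (by positivity : 0 ≤ 1 / 2 * (n + a) * s) hs1]

/- The exact equipartition speed `√(2W(γ))` vanishes at the wells, so it is approached by moving
along `γ` at speed `|w| (√(2W(γ)) + a) / (|w| + a)` with `a → 0`. -/
theorem exists_isConnection_energy_le (hWc : Continuous W) (hW : ∀ x, 0 ≤ W x)
    (hγ : ∀ t, HasDerivAt γ (w t) t) (hw : Continuous w) (hws : HasCompactSupport w)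
    (hWs : HasCompactSupport fun t ↦ W (γ t)) (hγm : Tendsto γ atBot (𝓝 pm))
    (hγp : Tendsto γ atTop (𝓝 pp)) (hε : 0 < ε) :
    ∃ u v, IsConnection W pm pp u v ∧ HasArea u v (∫ t, (γ t).1 * (w t).2) ∧
      energy W u v ≤ (∫ t, √(2 * W (γ t)) * enorm2 (w t)) + ε := by
  let S : ℝ → ℝ := fun t ↦ √(2 * W (γ t))
  let n : ℝ → ℝ := fun t ↦ enorm2 (w t)
  have hγc : Continuous γ := continuous_iff_continuousAt.2 fun t ↦ (hγ t).continuousAt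
  have hSc : Continuous S := by fun_prop
  have hnc : Continuous n := continuous_enorm2.comp hw
  have hSs : HasCompactSupport S := hWs.comp_left (g := fun x ↦ √(2 * x)) (by simp)
  have hns : HasCompactSupport n := hws.comp_left enorm2_zero
  have hS0 (t : ℝ) : 0 ≤ S t := Real.sqrt_nonneg _
  have hn0 (t : ℝ) : 0 ≤ n t := enorm2_nonneg _
  have hsum : Integrable fun t ↦ n t + S t :=
    (hnc.add hSc).integrable_of_hasCompactSupport (hns.add hSs)
  have hprod : Integrable fun t ↦ S t * n t :=
    (hSc.mul hnc).integrable_of_hasCompactSupport hns.mul_left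
  obtain ⟨a, ha, -, haε⟩ := exists_pos_le_mul_le ((∫ t, (n t + S t)) / 2) one_pos hε
  obtain ⟨B, hB⟩ := hSs.exists_bound_of_continuous hSc
  have hSB (t : ℝ) : S t ≤ B := (le_abs_self _).trans (hB t)
  have hB0 : 0 ≤ B := (hS0 0).trans (hSB 0)
  obtain ⟨u, v, hconn, harea, hE⟩ := exists_reparametrization hWc hγ hw hws hWs hγm hγp
    (ρ := fun t ↦ (n t + a) / (S t + a)) (m := a / (B + a))
    ((hnc.add continuous_const).div (hSc.add continuous_const) fun t ↦
      (add_pos_of_nonneg_of_pos (hS0 t) ha).ne') (by positivity) fun t ↦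
      div_le_div₀ (by linarith [hn0 t]) (by linarith [hn0 t]) (by linarith [hS0 t])
        (by linarith [hSB t])
  refine ⟨u, v, hconn, harea, ?_⟩
  calc energy W u v ≤ ∫ t, (S t * n t + a / 2 * (n t + S t)) := by
        rw [hE]
        refine integral_mono_of_nonneg (Eventually.of_forall fun t ↦ ?_)
          (hprod.add (hsum.const_mul _)) (Eventually.of_forall fun t ↦ ?_)
        · have := hW (γ t)
          have := hS0 t
          have := hn0 t
          simp only [Pi.zero_apply]
          positivity
        · have hWS : W (γ t) = S t ^ 2 / 2 := by
            rw [Real.sq_sqrt (by linarith [hW (γ t)])]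
            ring
          simp only [hWS]
          exact half_sq_div_add_half_sq_mul_le (hn0 t) (hS0 t) ha
    _ = (∫ t, S t * n t) + a / 2 * ∫ t, (n t + S t) :=
        (integral_add hprod (hsum.const_mul _)).trans (by rw [integral_const_mul])
    _ ≤ (∫ t, S t * n t) + ε := by linarith

end Reparametrization

section LipschitzCurve

variable {γ : ℝ → ℝ × ℝ} {a b : ℝ}

lemma absolutelyContinuousOnInterval_of_locallyLipschitz {X : Type*} [PseudoMetricSpace X]
    {f : ℝ → X} (hf : LocallyLipschitz f) (a b : ℝ) : AbsolutelyContinuousOnInterval f a b := by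
  obtain ⟨K, hK⟩ := hf.locallyLipschitzOn.exists_lipschitzOnWith_of_compact
    (isCompact_uIcc (a := a) (b := b))
  exact hK.absolutelyContinuousOnInterval

lemma ae_hasDerivAt_of_locallyLipschitz (hγ : LocallyLipschitz γ) (a b : ℝ) :
    ∀ᵐ t, t ∈ uIcc a b →
      HasDerivAt γ (deriv (fun s ↦ (γ s).1) t, deriv (fun s ↦ (γ s).2) t) t := by
  have h₁ := absolutelyContinuousOnInterval_of_locallyLipschitz
    (LipschitzWith.prod_fst.locallyLipschitz.comp hγ) a b
  have h₂ := absolutelyContinuousOnInterval_of_locallyLipschitz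
    (LipschitzWith.prod_snd.locallyLipschitz.comp hγ) a b
  filter_upwards [h₁.ae_differentiableAt, h₂.ae_differentiableAt] with t ht₁ ht₂ ht
  exact (ht₁ ht).hasDerivAt.prodMk (ht₂ ht).hasDerivAt

lemma ae_deriv_eq_of_locallyLipschitz (hγ : LocallyLipschitz γ) (a b : ℝ) :
    ∀ᵐ t, t ∈ uIoc a b →
      deriv γ t = (deriv (fun s ↦ (γ s).1) t, deriv (fun s ↦ (γ s).2) t) := by
  filter_upwards [ae_hasDerivAt_of_locallyLipschitz hγ a b] with t ht hm
  exact (ht (uIoc_subset_uIcc hm)).deriv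

lemma intervalIntegrable_deriv_of_locallyLipschitz (hγ : LocallyLipschitz γ) (a b : ℝ) :
    IntervalIntegrable (deriv γ) volume a b := by
  have h₁ := (absolutelyContinuousOnInterval_of_locallyLipschitz
    (LipschitzWith.prod_fst.locallyLipschitz.comp hγ) a b).intervalIntegrable_deriv
  have h₂ := (absolutelyContinuousOnInterval_of_locallyLipschitz
    (LipschitzWith.prod_snd.locallyLipschitz.comp hγ) a b).intervalIntegrable_deriv
  have h : IntervalIntegrable
      (fun t ↦ (deriv (fun s ↦ (γ s).1) t, deriv (fun s ↦ (γ s).2) t)) volume a b :=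
    ⟨h₁.1.prodMk h₂.1, h₁.2.prodMk h₂.2⟩
  refine h.congr_ae ?_
  rw [EventuallyEq, ae_restrict_iff' measurableSet_uIoc]
  filter_upwards [ae_deriv_eq_of_locallyLipschitz hγ a b] with t ht hm using (ht hm).symm

lemma integral_deriv_eq_sub_of_locallyLipschitz (hγ : LocallyLipschitz γ) (a b : ℝ) :
    ∫ t in a..b, deriv γ t = γ b - γ a := by
  have h₁ := absolutelyContinuousOnInterval_of_locallyLipschitz
    (LipschitzWith.prod_fst.locallyLipschitz.comp hγ) a b
  have h₂ := absolutelyContinuousOnInterval_of_locallyLipschitz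
    (LipschitzWith.prod_snd.locallyLipschitz.comp hγ) a b
  have hi := intervalIntegrable_deriv_of_locallyLipschitz hγ a b
  have hd := ae_deriv_eq_of_locallyLipschitz hγ a b
  refine Prod.ext ?_ ?_
  · calc (∫ t in a..b, deriv γ t).1 = ∫ t in a..b, (deriv γ t).1 :=
          ((ContinuousLinearMap.fst ℝ ℝ ℝ).intervalIntegral_comp_comm hi).symm
      _ = ∫ t in a..b, deriv (fun s ↦ (γ s).1) t :=
          intervalIntegral.integral_congr_ae (hd.mono fun t ht hm ↦ by rw [ht hm])
      _ = (γ b - γ a).1 := h₁.integral_deriv_eq_sub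
  · calc (∫ t in a..b, deriv γ t).2 = ∫ t in a..b, (deriv γ t).2 :=
          ((ContinuousLinearMap.snd ℝ ℝ ℝ).intervalIntegral_comp_comm hi).symm
      _ = ∫ t in a..b, deriv (fun s ↦ (γ s).2) t :=
          intervalIntegral.integral_congr_ae (hd.mono fun t ht hm ↦ by rw [ht hm])
      _ = (γ b - γ a).2 := h₂.integral_deriv_eq_sub

end LipschitzCurve

section CurveOfVelocity

variable {E : Type*} [NormedAddCommGroup E] [NormedSpace ℝ E] {p : E} {w f : ℝ → E}

/-- The curve with velocity `w` that starts from `p` at time `-∞`. -/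
def curveOfVelocity (p : E) (w : ℝ → E) (t : ℝ) : E := p + ∫ x in Iic t, w x

lemma curveOfVelocity_eq_add_intervalIntegral (hw : Integrable w) (p : E) (t : ℝ) :
    curveOfVelocity p w t = curveOfVelocity p w 0 + ∫ x in (0 : ℝ)..t, w x := by
  rw [← intervalIntegral.integral_Iic_sub_Iic hw.integrableOn hw.integrableOn]
  simp only [curveOfVelocity]
  abel

lemma continuous_curveOfVelocity (hw : Integrable w) (p : E) :
    Continuous (curveOfVelocity p w) := by
  rw [funext (curveOfVelocity_eq_add_intervalIntegral hw p)]
  exact continuous_const.add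
    (intervalIntegral.continuous_primitive (fun _ _ ↦ hw.intervalIntegrable) 0)

lemma hasDerivAt_curveOfVelocity [CompleteSpace E] (hw : Integrable w) (hwc : Continuous w)
    (p : E) (t : ℝ) : HasDerivAt (curveOfVelocity p w) (w t) t := by
  rw [funext (curveOfVelocity_eq_add_intervalIntegral hw p)]
  exact (hwc.integral_hasStrictDerivAt 0 t).hasDerivAt.const_add _

lemma norm_curveOfVelocity_sub_le (hw : Integrable w) (hf : Integrable f) (p : E) (t : ℝ) :
    ‖curveOfVelocity p w t - curveOfVelocity p f t‖ ≤ ∫ x, ‖w x - f x‖ := by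
  rw [curveOfVelocity, curveOfVelocity, add_sub_add_left_eq_sub,
    ← integral_sub hw.integrableOn hf.integrableOn]
  exact (norm_integral_le_integral_norm _).trans
    (setIntegral_le_integral (hw.sub hf).norm (Eventually.of_forall fun _ ↦ norm_nonneg _))

lemma curveOfVelocity_zero (p : E) (t : ℝ) : curveOfVelocity p 0 t = p := by
  simp [curveOfVelocity]

lemma eventually_atBot_curveOfVelocity_eq (hws : HasCompactSupport w) (p : E) :
    ∀ᶠ t in atBot, curveOfVelocity p w t = p := by
  obtain ⟨N, hN⟩ := hws.isCompact.bddBelow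
  filter_upwards [eventually_lt_atBot N] with t ht
  have hw0 : ∫ x in Iic t, w x = 0 := setIntegral_eq_zero_of_forall_eq_zero fun x hx ↦
    image_eq_zero_of_notMem_tsupport fun hxw ↦ (hx.trans_lt ht).not_ge (hN hxw)
  rw [curveOfVelocity, hw0, add_zero]

lemma eventually_atTop_curveOfVelocity_eq (hws : HasCompactSupport w) (p : E) :
    ∀ᶠ t in atTop, curveOfVelocity p w t = p + ∫ x, w x := by
  obtain ⟨N, hN⟩ := hws.isCompact.bddAbove
  filter_upwards [eventually_ge_atTop N] with t ht
  rw [curveOfVelocity, setIntegral_eq_integral_of_forall_compl_eq_zero fun x hx ↦ ?_]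
  exact image_eq_zero_of_notMem_tsupport fun hxw ↦ hx ((hN hxw).trans ht)

lemma hasCompactSupport_comp_curveOfVelocity {W : E → ℝ} (hws : HasCompactSupport w)
    (hp : W p = 0) (hq : W (p + ∫ x, w x) = 0) :
    HasCompactSupport fun t ↦ W (curveOfVelocity p w t) := by
  obtain ⟨a, ha⟩ := eventually_atBot.1 (eventually_atBot_curveOfVelocity_eq hws p)
  obtain ⟨b, hb⟩ := eventually_atTop.1 (eventually_atTop_curveOfVelocity_eq hws p)
  refine HasCompactSupport.intro (isCompact_Icc (a := a) (b := b)) fun t ht ↦ ?_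
  rcases not_and_or.1 ht with h | h
  · rw [ha t (not_le.1 h).le, hp]
  · rw [hb t (not_le.1 h).le, hq]

theorem exists_continuous_integral_eq_integral_norm_sub_le [CompleteSpace E] (hf : Integrable f)
    {δ : ℝ} (hδ : 0 < δ) :
    ∃ w : ℝ → E, Continuous w ∧ HasCompactSupport w ∧ (∫ x, w x = ∫ x, f x) ∧
      ∫ x, ‖w x - f x‖ ≤ δ := by
  obtain ⟨g, hgs, hfg, hgc, hg⟩ := hf.exists_hasCompactSupport_integral_sub_le (half_pos hδ)
  let χ : ℝ → ℝ := (default : ContDiffBump (0 : ℝ)).normed volume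
  let z : E := (∫ x, f x) - ∫ x, g x
  have hχs : HasCompactSupport χ := ContDiffBump.hasCompactSupport_normed _
  have hχc : Continuous χ := ContDiffBump.continuous_normed _
  have hχ : Integrable χ := ContDiffBump.integrable_normed _
  have hχ1 : ∫ x, χ x = 1 := ContDiffBump.integral_normed _
  have hχz : HasCompactSupport fun x ↦ χ x • z := hχs.mono fun x ↦ left_ne_zero_of_smul
  have hz : ‖z‖ ≤ δ / 2 := by
    rw [show z = ∫ x, (f x - g x) from (integral_sub hf hg).symm]
    exact (norm_integral_le_integral_norm _).trans hfg
  refine ⟨fun x ↦ g x + χ x • z, by fun_prop, hgs.add hχz, ?_, ?_⟩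
  · rw [integral_add hg (hχ.smul_const z), integral_smul_const, hχ1, one_smul, add_sub_cancel]
  calc ∫ x, ‖g x + χ x • z - f x‖ ≤ ∫ x, (‖f x - g x‖ + χ x * ‖z‖) := by
        refine integral_mono ((hg.add (hχ.smul_const z)).sub hf).norm
          ((hf.sub hg).norm.add (hχ.mul_const _)) fun x ↦ ?_
        calc ‖g x + χ x • z - f x‖ = ‖χ x • z - (f x - g x)‖ := by congr 1; abel
          _ ≤ ‖χ x • z‖ + ‖f x - g x‖ := norm_sub_le _ _
          _ = ‖f x - g x‖ + χ x * ‖z‖ := by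
            rw [norm_smul, Real.norm_of_nonneg (ContDiffBump.nonneg_normed _ x), add_comm]
    _ = (∫ x, ‖f x - g x‖) + ‖z‖ := (integral_add (hf.sub hg).norm (hχ.mul_const _)).trans
        (by rw [integral_mul_const, hχ1, one_mul]; rfl)
    _ ≤ δ := by linarith

end CurveOfVelocity

section Approximation

lemma tendsto_integral_mul_of_tendsto_integral_norm_sub {α ι : Type*} [MeasurableSpace α]
    {μ : Measure α} {l : Filter ι} [l.IsCountablyGenerated] {G : ι → α → ℝ} {G₀ : α → ℝ}
    {h : ι → α → ℝ} {h₀ : α → ℝ} {M : ℝ} (hG : ∀ k, AEStronglyMeasurable (G k) μ)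
    (hM : ∀ᶠ k in l, ∀ x, ‖G k x‖ ≤ M) (hlim : ∀ x, Tendsto (G · x) l (𝓝 (G₀ x)))
    (hh : ∀ k, Integrable (h k) μ) (hh₀ : Integrable h₀ μ)
    (hl : Tendsto (fun k ↦ ∫ x, ‖h k x - h₀ x‖ ∂μ) l (𝓝 0)) :
    Tendsto (fun k ↦ ∫ x, G k x * h k x ∂μ) l (𝓝 (∫ x, G₀ x * h₀ x ∂μ)) := by
  have hmain : Tendsto (fun k ↦ ∫ x, G k x * h₀ x ∂μ) l (𝓝 (∫ x, G₀ x * h₀ x ∂μ)) := by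
    refine tendsto_integral_filter_of_dominated_convergence (fun x ↦ M * ‖h₀ x‖)
      (Eventually.of_forall fun k ↦ (hG k).mul hh₀.1) ?_ (hh₀.norm.const_mul M)
      (Eventually.of_forall fun x ↦ (hlim x).mul_const _)
    filter_upwards [hM] with k hk
    refine Eventually.of_forall fun x ↦ ?_
    rw [norm_mul]
    exact mul_le_mul_of_nonneg_right (hk x) (norm_nonneg _)
  have herr : Tendsto (fun k ↦ (∫ x, G k x * h k x ∂μ) - ∫ x, G k x * h₀ x ∂μ) l (𝓝 0) := by
    refine squeeze_zero_norm' ?_ (by simpa using hl.const_mul M)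
    filter_upwards [hM] with k hk
    have hi {H : α → ℝ} (hH : Integrable H μ) : Integrable (fun x ↦ G k x * H x) μ :=
      hH.bdd_mul (hG k) (Eventually.of_forall hk)
    rw [← integral_sub (hi (hh k)) (hi hh₀), ← integral_const_mul]
    refine norm_integral_le_of_norm_le (((hh k).sub hh₀).norm.const_mul _)
      (Eventually.of_forall fun x ↦ ?_)
    rw [← mul_sub, norm_mul]
    exact mul_le_mul_of_nonneg_right (hk x) (norm_nonneg _)
  simpa using herr.add hmain

theorem tendsto_integral_comp_curveOfVelocity_mul {E ι : Type*} [NormedAddCommGroup E]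
    [NormedSpace ℝ E] [ProperSpace E] {l : Filter ι} [l.IsCountablyGenerated] {Φ n : E → ℝ}
    {K : NNReal} (hΦ : Continuous Φ) (hn : LipschitzWith K n) (hn0 : n 0 = 0) (p : E)
    {f : ℝ → E} {w : ι → ℝ → E} (hf : Integrable f) (hw : ∀ k, Integrable (w k))
    (hl : Tendsto (fun k ↦ ∫ x, ‖w k x - f x‖) l (𝓝 0)) :
    Tendsto (fun k ↦ ∫ t, Φ (curveOfVelocity p (w k) t) * n (w k t)) l
      (𝓝 (∫ t, Φ (curveOfVelocity p f t) * n (f t))) := by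
  have hint {g : ℝ → E} (hg : Integrable g) : Integrable fun t ↦ n (g t) :=
    memLp_one_iff_integrable.1 (hn.comp_memLp hn0 (memLp_one_iff_integrable.2 hg))
  obtain ⟨M, hM⟩ := (isCompact_closedBall p ((∫ x, ‖f x‖) + 1)).exists_bound_of_continuousOn
    hΦ.continuousOn
  refine tendsto_integral_mul_of_tendsto_integral_norm_sub (M := M)
    (fun k ↦ (hΦ.comp (continuous_curveOfVelocity (hw k) p)).aestronglyMeasurable) ?_
    (fun t ↦ (hΦ.tendsto _).comp ?_) (fun k ↦ hint (hw k)) (hint hf) ?_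
  · filter_upwards [hl.eventually (ge_mem_nhds one_pos)] with k hk t
    refine hM _ (mem_closedBall_iff_norm.2 ?_)
    have h₁ := norm_curveOfVelocity_sub_le (hw k) hf p t
    have h₂ := norm_curveOfVelocity_sub_le hf (integrable_zero ℝ E volume) p t
    simp only [curveOfVelocity_zero, Pi.zero_apply, sub_zero] at h₂
    linarith [norm_sub_le_norm_sub_add_norm_sub (curveOfVelocity p (w k) t)
      (curveOfVelocity p f t) p]
  · exact tendsto_iff_norm_sub_tendsto_zero.2 (squeeze_zero (fun _ ↦ norm_nonneg _)
      (fun k ↦ norm_curveOfVelocity_sub_le (hw k) hf p t) hl)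
  · refine squeeze_zero (fun k ↦ integral_nonneg fun _ ↦ norm_nonneg _) (fun k ↦ ?_)
      (by simpa using hl.const_mul (K : ℝ))
    rw [← integral_const_mul]
    exact integral_mono ((hint (hw k)).sub (hint hf)).norm
      (((hw k).sub hf).norm.const_mul _) fun x ↦ hn.norm_sub_le _ _

variable {W : ℝ × ℝ → ℝ} {pm pp : ℝ × ℝ} {γ : ℝ → ℝ × ℝ} {a b : ℝ}

lemma curveOfVelocity_indicator_deriv (hγ : LocallyLipschitz γ) {t : ℝ} (ht : t ∈ Icc a b) :
    curveOfVelocity (γ a) ((Ioc a b).indicator (deriv γ)) t = γ t := by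
  have hset : Iic t ∩ Ioc a b = Ioc a t := by
    rw [inter_comm, Ioc_inter_Iic, min_eq_right ht.2]
  rw [curveOfVelocity, setIntegral_indicator measurableSet_Ioc, hset,
    ← intervalIntegral.integral_of_le ht.1, integral_deriv_eq_sub_of_locallyLipschitz hγ a t,
    add_sub_cancel]

lemma integral_comp_curveOfVelocity_indicator_deriv_mul (hγ : LocallyLipschitz γ) (hab : a ≤ b)
    (Φ : ℝ × ℝ → ℝ) {n : ℝ × ℝ → ℝ} (hn0 : n 0 = 0) :
    ∫ t, Φ (curveOfVelocity (γ a) ((Ioc a b).indicator (deriv γ)) t) *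
      n ((Ioc a b).indicator (deriv γ) t) = ∫ t in a..b, Φ (γ t) * n (deriv γ t) := by
  rw [intervalIntegral.integral_of_le hab,
    ← setIntegral_eq_integral_of_forall_compl_eq_zero (s := Ioc a b) fun t ht ↦ by
      rw [indicator_of_notMem ht, hn0, mul_zero]]
  refine setIntegral_congr_fun measurableSet_Ioc fun t ht ↦ ?_
  simp only [curveOfVelocity_indicator_deriv hγ (Ioc_subset_Icc_self ht), indicator_of_mem ht]

lemma sArea_eq_integral_deriv_snd (hγ : LocallyLipschitz γ) (a b : ℝ) :
    sArea a b γ = ∫ t in a..b, (γ t).1 * (deriv γ t).2 := by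
  refine intervalIntegral.integral_congr_ae ?_
  filter_upwards [ae_deriv_eq_of_locallyLipschitz hγ a b] with t ht hm
  rw [ht hm]

lemma mul_degLen_eq_integral (W : ℝ × ℝ → ℝ) (a b : ℝ) (γ : ℝ → ℝ × ℝ) :
    √2 * degLen (fun p ↦ √(W p)) a b γ =
      ∫ t in a..b, √(2 * W (γ t)) * enorm2 (deriv γ t) := by
  rw [degLen, ← intervalIntegral.integral_const_mul]
  simp only [Real.sqrt_mul zero_le_two, mul_assoc]

theorem nearOptimalAt_of_isCurve (hT : TwoWell W pm pp) (hγ : IsCurve a b γ pm pp) :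
    NearOptimalAt W pm pp (√2 * degLen (fun p ↦ √(W p)) a b γ) (sArea a b γ) := by
  obtain ⟨hab, hlip, rfl, rfl⟩ := hγ
  have hWc := hT.contDiff_two.continuous
  let f := (Ioc a b).indicator (deriv γ)
  have hf : Integrable f := (integrable_indicator_iff measurableSet_Ioc).2
    (intervalIntegrable_deriv_of_locallyLipschitz hlip a b).1
  have hq : γ a + ∫ x, f x = γ b := by
    rw [integral_indicator measurableSet_Ioc, ← intervalIntegral.integral_of_le hab,
      integral_deriv_eq_sub_of_locallyLipschitz hlip, add_sub_cancel]
  choose w hwc hws hwI hwf using fun k : ℕ ↦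
    exists_continuous_integral_eq_integral_norm_sub_le hf (δ := 1 / ((k : ℝ) + 1)) (by positivity)
  have hw (k : ℕ) : Integrable (w k) := (hwc k).integrable_of_hasCompactSupport (hws k)
  have hl : Tendsto (fun k ↦ ∫ x, ‖w k x - f x‖) atTop (𝓝 0) :=
    squeeze_zero (fun k ↦ integral_nonneg fun _ ↦ norm_nonneg _) hwf
      tendsto_one_div_add_atTop_nhds_zero_nat
  have hlen := tendsto_integral_comp_curveOfVelocity_mul (Φ := fun p ↦ √(2 * W p))
    (by fun_prop) lipschitzWith_enorm2 enorm2_zero (γ a) hf hw hl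
  have harea := tendsto_integral_comp_curveOfVelocity_mul (Φ := Prod.fst) continuous_fst
    LipschitzWith.prod_snd Prod.snd_zero (γ a) hf hw hl
  rw [integral_comp_curveOfVelocity_indicator_deriv_mul hlip hab (fun p ↦ √(2 * W p))
    enorm2_zero, ← mul_degLen_eq_integral] at hlen
  rw [integral_comp_curveOfVelocity_indicator_deriv_mul hlip hab Prod.fst Prod.snd_zero,
    ← sArea_eq_integral_deriv_snd hlip] at harea
  intro ε hε
  obtain ⟨k, hk, hkA⟩ := ((hlen.eventually (ge_mem_nhds (lt_add_of_pos_right _ (half_pos hε)))).and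
    (harea.eventually (Metric.closedBall_mem_nhds _ hε))).exists
  have hp : γ a + ∫ x, w k x = γ b := by rw [hwI, hq]
  obtain ⟨u, v, hconn, huv, hE⟩ := exists_isConnection_energy_le hWc hT.nonneg
    (hasDerivAt_curveOfVelocity (hw k) (hwc k) (γ a)) (hwc k) (hws k)
    (hasCompactSupport_comp_curveOfVelocity (hws k) ((hT.zeroSet _).2 (.inl rfl))
      (hp ▸ (hT.zeroSet _).2 (.inr rfl)))
    (tendsto_const_nhds.congr' <| (eventually_atBot_curveOfVelocity_eq (hws k) _).mono
      fun _ ↦ Eq.symm)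
    (tendsto_const_nhds.congr' <| (eventually_atTop_curveOfVelocity_eq (hws k) _).mono
      fun _ ↦ Eq.symm) (half_pos hε)
  rw [hp] at hconn
  exact ⟨u, v, _, hconn, huv, by linarith, hkA⟩

end Approximation

end TravelingWave

open TravelingWave

/-- for `A` close enough to `𝒜(γ₀)` there is a minimizer `U` of `H` over `G_A`
which is a smooth traveling wave: `U'' = ∇W(U) − ν J U'` for some wave speed `ν`, with
`U(±∞) = p±` and the equipartition relation `|U'|² = 2W(U)`. -/
theorem traveling_wave_existence
    (W : ℝ × ℝ → ℝ) (pm pp : ℝ × ℝ) (hW : TwoWell W pm pp)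
    (F : ℝ × ℝ → ℝ) (hF : F = fun p => Real.sqrt (W p))
    (γ0 : ℝ → ℝ × ℝ) (hγ0 : IsCurve 0 1 γ0 pm pp)
    (hmin : ∀ a b γ, IsCurve a b γ pm pp → degLen F 0 1 γ0 ≤ degLen F a b γ)
    (g : ℝ → ℝ × ℝ) (hg : ContDiff ℝ (⊤ : ℕ∞) g)
    (hgp : ∀ᶠ y in atTop, g y = pp) (hgm : ∀ᶠ y in atBot, g y = pm) :
    ∃ ε1 > (0:ℝ), ∀ A : ℝ, |A - sArea 0 1 γ0| < ε1 →
      ∃ (U : ℝ → ℝ × ℝ) (ν : ℝ),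
        InGA g A U ∧
        (∀ u, InGA g A u → Hfun W U ≤ Hfun W u) ∧
        ContDiff ℝ (⊤ : ℕ∞) U ∧
        (∀ y : ℝ, deriv (deriv U) y = gradW W (U y) - ν • Jv (deriv U y)) ∧
        Tendsto U atBot (𝓝 pm) ∧ Tendsto U atTop (𝓝 pp) ∧
        (∀ y : ℝ, enorm2 (deriv U y) ^ 2 = 2 * W (U y)) := by
  subst hF
  obtain ⟨C, hL⟩ := exists_energyLowerBound hW.smooth.continuous hW.nonneg hmin
  obtain ⟨R, κ, hm, hp⟩ := hW.exists_quadraticWell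
  obtain ⟨ε, hε, hwave⟩ := exists_isAreaMinimizer_isTravelingWave hW hL hm hp
    (nearOptimalAt_of_isCurve hW hγ0)
  refine ⟨ε, hε, fun A hA ↦ ?_⟩
  obtain ⟨U, V, ν, w, hU, hUe, hVw, hw, hν⟩ := hwave A hA
  have hequi := hw.enorm2_velocity_sq_eq (hW.contDiff_two.differentiable two_ne_zero)
    hU.toIsConnection hVw
  obtain ⟨harea, hUg⟩ := hw.integrable_area_and_memLp_sub hW hm hp hν hequi hU.tendsto_atBot
    hU.tendsto_atTop hg.continuous hgm hgp
  refine ⟨U, ν, hU.inGA hVw harea hUg, fun u hu ↦ hU.Hfun_le hW hL hUe hgm hgp hu,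
    hw.contDiff hW.smooth, fun y ↦ ?_, hU.tendsto_atBot, hU.tendsto_atTop, fun y ↦ ?_⟩
  · rw [hw.deriv_eq, hw.deriv_velocity_eq]
  · rw [hw.deriv_eq, hequi]
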